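/- arXiv:2105.11027 — 2 statements merged into one kernel-verified Lean document; each statement's English description precedes it below -/
import Mathlib

section
/- Let ρ be an irreducible complex representation of GL_n(F_q) of U-rank k with k < ⌊n/2⌋. Then ρ has a nonzero H_{2k}-eigenvector; equivalently, the tensor rank of ρ is at most 2k. -/
/-!
STATEMENT 17: An irreducible representation ρ of GL_n(F_q) of U-rank k with
k < ⌊n/2⌋ has a nonzero H_{2k}-eigenvector; equivalently, its tensor rank is
at most 2k.
-/

open Matrix
open scoped MatrixGroups

namespace Stmt17

variable {F : Type} [Field F] [Fintype F] [DecidableEq F]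

/-- The `n × n` matrix with the `a × b` matrix `X` placed in the block occupying
rows `0,…,a-1` and columns `n-b,…,n-1`, and `0` elsewhere. -/
def blockEmbed (n a b : ℕ) (X : Matrix (Fin a) (Fin b) F) : Matrix (Fin n) (Fin n) F :=
  Matrix.of fun i j =>
    if hi : (i : ℕ) < a then
      if hj : n - b ≤ (j : ℕ) ∧ (j : ℕ) - (n - b) < b then
        X ⟨i, hi⟩ ⟨(j : ℕ) - (n - b), hj.2⟩
      else 0
    else 0

lemma blockEmbed_mul_blockEmbed {n a b : ℕ} (hab : a + b ≤ n)
    (X Y : Matrix (Fin a) (Fin b) F) :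
    blockEmbed n a b X * blockEmbed n a b Y = 0 := by
  ext i j
  rw [Matrix.mul_apply, Matrix.zero_apply]
  apply Finset.sum_eq_zero
  intro k _
  rcases Nat.lt_or_ge (k : ℕ) a with hk | hk
  · have h2 : ¬ (n - b ≤ (k : ℕ) ∧ (k : ℕ) - (n - b) < b) := by
      rintro ⟨h, -⟩; omega
    have hz : blockEmbed n a b X i k = 0 := by
      unfold blockEmbed
      by_cases hi : (i : ℕ) < a
      · rw [Matrix.of_apply, dif_pos hi, dif_neg h2]
      · rw [Matrix.of_apply, dif_neg hi]
    rw [hz, zero_mul]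
  · have hz : blockEmbed n a b Y k j = 0 := by
      unfold blockEmbed
      rw [Matrix.of_apply, dif_neg (Nat.not_lt.2 hk)]
    rw [hz, mul_zero]

/-- The element `I_n + blockEmbed X` of `GL_n(F)`; for `a + b ≤ n` these elements
form the abelian subgroup `U_{a,b}` (identified with `(M_{a,b}(F), +)`). -/
def uU (n a b : ℕ) (hab : a + b ≤ n) (X : Matrix (Fin a) (Fin b) F) : GL (Fin n) F where
  val := 1 + blockEmbed n a b X
  inv := 1 - blockEmbed n a b X
  val_inv := by
    have h := blockEmbed_mul_blockEmbed hab X X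
    have e : (1 + blockEmbed n a b X) * (1 - blockEmbed n a b X)
        = 1 - blockEmbed n a b X * blockEmbed n a b X := by noncomm_ring
    rw [e, h, sub_zero]
  inv_val := by
    have h := blockEmbed_mul_blockEmbed hab X X
    have e : (1 - blockEmbed n a b X) * (1 + blockEmbed n a b X)
        = 1 - blockEmbed n a b X * blockEmbed n a b X := by noncomm_ring
    rw [e, h, sub_zero]

variable {V : Type} [AddCommGroup V] [Module ℂ V]

/-- The character `γ_T` of `U_{a,b} ≅ M_{a,b}(F_q)`, `γ_T(X) = χ₀(trace (T*X))`,
appears in (the restriction to `U_{a,b}` of) the representation `π`, i.e. its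
eigenspace is nonzero. -/
def CharAppears (χ₀ : AddChar F ℂ) {n : ℕ} (π : Representation ℂ (GL (Fin n) F) V)
    {a b : ℕ} (hab : a + b ≤ n) (T : Matrix (Fin b) (Fin a) F) : Prop :=
  ∃ v : V, v ≠ 0 ∧ ∀ X : Matrix (Fin a) (Fin b) F,
    π (uU n a b hab X) v = χ₀ ((T * X).trace) • v

/-- `rank_{a,b}(π) = k` : the maximal rank of a character of `U_{a,b}`
appearing in `π|U_{a,b}` is `k`.  (The rank of `γ_T` is `rank T`.) -/
def HasRankAB (χ₀ : AddChar F ℂ) {n : ℕ} (π : Representation ℂ (GL (Fin n) F) V)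
    {a b : ℕ} (hab : a + b ≤ n) (k : ℕ) : Prop :=
  (∃ T, CharAppears χ₀ π hab T ∧ T.rank = k) ∧
  (∀ T, CharAppears χ₀ π hab T → T.rank ≤ k)


/-- The `U`-rank of a representation `π` of `GL_n(F_q)` equals `k`:
this is `rank_{⌊n/2⌋,⌈n/2⌉}(π) = k`. -/
def HasURank (χ₀ : AddChar F ℂ) {n : ℕ} (π : Representation ℂ (GL (Fin n) F) V) (k : ℕ) : Prop :=
  HasRankAB χ₀ π (show n / 2 + (n - n / 2) ≤ n by omega) k

/-- The subgroup `H_k ≤ GL_n(F)` of elements fixing the first `k` standard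
basis vectors of `F^n` (equivalently, fixing pointwise every vector supported
in the first `k` coordinates). -/
def Hsub (n k : ℕ) : Subgroup (GL (Fin n) F) where
  carrier := {g | ∀ v : Fin n → F, (∀ i : Fin n, k ≤ (i : ℕ) → v i = 0) →
      (↑g : Matrix (Fin n) (Fin n) F) *ᵥ v = v}
  one_mem' := by intro v hv; simp
  mul_mem' := by
    intro g h hg hh v hv
    rw [Units.val_mul, ← Matrix.mulVec_mulVec, hh v hv, hg v hv]
  inv_mem' := by
    intro g hg v hv
    calc (↑g⁻¹ : Matrix (Fin n) (Fin n) F) *ᵥ v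
        = (↑g⁻¹ : Matrix (Fin n) (Fin n) F) *ᵥ ((↑g : Matrix (Fin n) (Fin n) F) *ᵥ v) := by
          rw [hg v hv]
      _ = ((↑g⁻¹ * ↑g : Matrix (Fin n) (Fin n) F)) *ᵥ v := Matrix.mulVec_mulVec ..
      _ = v := by rw [← Units.val_mul, inv_mul_cancel, Units.val_one, Matrix.one_mulVec]

/-- The permutation representation of `GL_n(F)` on complex-valued functions on
`M_{n,k}(F)`, by left matrix multiplication: `(g · f)(T) = f (g⁻¹ * T)`. -/
def permRep (n k : ℕ) : Representation ℂ (GL (Fin n) F) (Matrix (Fin n) (Fin k) F → ℂ) where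
  toFun g :=
    { toFun := fun f T => f ((↑g⁻¹ : Matrix (Fin n) (Fin n) F) * T)
      map_add' := fun _ _ => rfl
      map_smul' := fun _ _ => rfl }
  map_one' := by
    refine LinearMap.ext fun f => funext fun T => ?_
    show f ((↑(1 : GL (Fin n) F)⁻¹ : Matrix (Fin n) (Fin n) F) * T) = f T
    congr 1
    simp
  map_mul' := by
    intro g h
    refine LinearMap.ext fun f => funext fun T => ?_
    show f _ = f _
    congr 1
    simp [_root_.mul_inv_rev, Units.val_mul, Matrix.mul_assoc]

/-- The determinant character `GL_n(F) → Fˣ`. -/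
def detHom (n : ℕ) : GL (Fin n) F →* Fˣ :=
  Units.map Matrix.detMonoidHom

/-- The twist `(α ∘ det) ⊗ ρ` of a representation `ρ` of `GL_n(F)` by the
linear character `α ∘ det`. -/
def twistRep {n : ℕ} {V : Type} [AddCommGroup V] [Module ℂ V]
    (α : Fˣ →* ℂˣ) (ρ : Representation ℂ (GL (Fin n) F) V) :
    Representation ℂ (GL (Fin n) F) V where
  toFun g := ((α (detHom n g) : ℂˣ) : ℂ) • ρ g
  map_one' := by simp
  map_mul' := by
    intro g h
    show ((α (detHom n (g * h)) : ℂˣ) : ℂ) • ρ (g * h)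
        = (((α (detHom n g) : ℂˣ) : ℂ) • ρ g) * (((α (detHom n h) : ℂˣ) : ℂ) • ρ h)
    rw [smul_mul_assoc, mul_smul_comm, smul_smul, ← Units.val_mul, ← _root_.map_mul,
      ← _root_.map_mul, _root_.map_mul ρ]

/-- `ρ` occurs in `σ` : there is a nonzero intertwining operator from `ρ` to
`σ`.  (For irreducible `ρ` this says exactly that `ρ` occurs as a
subrepresentation of `σ`.) -/
def Occurs {G : Type} [Group G] {V W : Type} [AddCommGroup V] [Module ℂ V]
    [AddCommGroup W] [Module ℂ W]
    (ρ : Representation ℂ G V) (σ : Representation ℂ G W) : Prop :=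
  ∃ φ : V →ₗ[ℂ] W, φ ≠ 0 ∧ ∀ g, φ.comp (ρ g) = (σ g).comp φ

/-- `ρ` has a nonzero vector fixed by the subgroup `H`. -/
def HasFixedVec {G : Type} [Group G] {V : Type} [AddCommGroup V] [Module ℂ V]
    (ρ : Representation ℂ G V) (H : Subgroup G) : Prop :=
  ∃ v : V, v ≠ 0 ∧ ∀ h ∈ H, ρ h v = v

/-- `ρ` has a nonzero eigenvector for the subgroup `H`: a nonzero `v` with
`ρ(h) v = c(h) • v` for all `h ∈ H`, for some character `c` of `H`. -/
def HasEigenVec {G : Type} [Group G] {V : Type} [AddCommGroup V] [Module ℂ V]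
    (ρ : Representation ℂ G V) (H : Subgroup G) : Prop :=
  ∃ c : H →* ℂ, ∃ v : V, v ≠ 0 ∧ ∀ h : H, ρ (h : G) v = c h • v

/-- Irreducibility of a representation: the space is nonzero, and the only
invariant subspaces are `⊥` and `⊤`. -/
def IsIrred {G : Type} [Group G] {V : Type} [AddCommGroup V] [Module ℂ V]
    (ρ : Representation ℂ G V) : Prop :=
  (∃ v : V, v ≠ 0) ∧
    ∀ p : Submodule ℂ V, (∀ g : G, ∀ v ∈ p, ρ g v ∈ p) → p = ⊥ ∨ p = ⊤

/-!
The character of rank `k` in `U_{a,b}` extends, on a nonzero eigenspace, to a character of the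
unipotent radical of the stabilizer of a `k`-dimensional subspace. Such characters are given by a
frame `(A, C)` of `2k` independent vectors, and `GL_n` permutes these frames transitively, so we may
take the frame to be the first `2k` standard basis vectors. Its eigenspace `W` is then stable under
`H_{2k}`, which consists of the matrices `[1 B; 0 D]`.

A transvection in the block `D` enlarges the frame by one more pair. If it acted nontrivially
on `W`, some character of rank `k + 1` would appear, contradicting maximality since
`k + 1 ≤ min a b`. The block has size at least two, so these transvections generate the matrices
with `B = 0`, `det D = 1`, and their commutators with the matrices `[1 B; 0 1]` yield the latter.
Hence `H_{2k}` acts on `W` through the determinant, so `W` contains an eigenvector. After a twist by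
a character of the determinant this eigenvector is fixed by `H_{2k}`, the stabilizer of a point of
`M_{n,2k}`, and Frobenius reciprocity maps the twist to the functions on `M_{n,2k}`.
-/

section Fourier

variable {E : Type*} [AddCommGroup E] [Module ℂ E]

theorem le_of_forall_eigenvector_mem {A : Type*} [AddCommGroup A] [Finite A]
    (σ : Representation ℂ (Multiplicative A) E) {W P : Submodule ℂ E}
    (hW : ∀ a, ∀ w ∈ W, σ (.ofAdd a) w ∈ W)
    (hP : ∀ ψ : AddChar A ℂ, ∀ w ∈ W, (∀ a, σ (.ofAdd a) w = ψ a • w) → w ∈ P) : W ≤ P := by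
  classical
  have := Fintype.ofFinite A
  intro v hv
  let proj (ψ : AddChar A ℂ) : E := ∑ a, ψ (-a) • σ (.ofAdd a) v
  have proj_eigen (ψ : AddChar A ℂ) (b : A) : σ (.ofAdd b) (proj ψ) = ψ b • proj ψ := by
    simp only [proj, map_sum, map_smul, Finset.smul_sum, smul_smul]
    refine Fintype.sum_equiv (Equiv.addLeft b) _ _ fun a => ?_
    rw [Equiv.coe_addLeft, ← Module.End.mul_apply, ← map_mul, ← ofAdd_add, ← AddChar.map_add_eq_mul]
    simp
  have proj_mem (ψ : AddChar A ℂ) : proj ψ ∈ P :=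
    hP ψ _ (W.sum_mem fun a _ => W.smul_mem _ (hW a v hv)) (proj_eigen ψ)
  have sum_proj : ∑ ψ : AddChar A ℂ, proj ψ = (Fintype.card A : ℂ) • v := by
    simp only [proj]
    rw [Finset.sum_comm]
    simp [← Finset.sum_smul, AddChar.sum_apply_eq_ite, ite_smul]
  have card_ne_zero : (Fintype.card A : ℂ) ≠ 0 := Nat.cast_ne_zero.2 Fintype.card_ne_zero
  rw [← P.smul_mem_iff card_ne_zero, ← sum_proj]
  exact P.sum_mem fun ψ _ => proj_mem ψ

theorem exists_eigenvector {G : Type*} [CommGroup G] [Finite G] (σ : Representation ℂ G E)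
    {W : Submodule ℂ E} (hne : W ≠ ⊥) (hW : ∀ g, ∀ w ∈ W, σ g w ∈ W) :
    ∃ α : G →* ℂˣ, ∃ w ∈ W, w ≠ 0 ∧ ∀ g, σ g w = (α g : ℂ) • w := by
  by_contra! hall
  have : Finite (Additive G) := ‹Finite G›
  refine hne (le_bot_iff.1 (le_of_forall_eigenvector_mem
    (σ.comp (MulEquiv.multiplicativeAdditive G).toMonoidHom) (fun g : Additive G => hW g.toMul)
    fun ψ w hw heig => ?_))
  let α : G →* ℂ := ψ.toMonoidHom.comp (MulEquiv.multiplicativeAdditive G).symm.toMonoidHom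
  by_contra hw₀
  obtain ⟨g, hg⟩ := hall α.toHomUnits w hw hw₀
  exact hg (heig (.ofMul g))

end Fourier

section TraceCharacter

variable {K p q : Type*} [Field K] [Fintype p] [Fintype q]
  {χ₀ : AddChar K ℂ}

theorem eq_of_forall_addChar_trace_mul_eq (hχ₀ : χ₀ ≠ 1) {T T' : Matrix q p K}
    (h : ∀ X : Matrix p q K, χ₀ (T * X).trace = χ₀ (T' * X).trace) : T = T' := by
  classical
  ext i j
  by_contra hne
  refine AddChar.IsPrimitive.of_ne_one hχ₀ (sub_ne_zero.2 hne) (DFunLike.ext _ _ fun t => ?_)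
  have hij := h (Matrix.single j i t)
  simp only [Matrix.trace_mul_single, op_smul_eq_mul] at hij
  rw [AddChar.mulShift_apply, sub_mul, AddChar.map_sub_eq_div, hij,
    div_self (χ₀.val_isUnit _).ne_zero, AddChar.one_apply]

theorem exists_addChar_trace_mul_eq [Finite K] (hχ₀ : χ₀ ≠ 1) (ψ : AddChar (Matrix p q K) ℂ) :
    ∃ T : Matrix q p K, ∀ X, ψ X = χ₀ (T * X).trace := by
  classical
  have := Fintype.ofFinite K
  let traceChar (T : Matrix q p K) : AddChar (Matrix p q K) ℂ :=
    χ₀.compAddMonoidHom ((traceAddMonoidHom q K).comp (addMonoidHomMulLeft T))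
  have traceChar_injective : Function.Injective traceChar := fun T T' h =>
    eq_of_forall_addChar_trace_mul_eq hχ₀ fun X => DFunLike.congr_fun h X
  have traceChar_bijective : Function.Bijective traceChar := by
    refine (Fintype.bijective_iff_injective_and_card _).2 ⟨traceChar_injective, ?_⟩
    rw [AddChar.card_eq]
    exact Fintype.card_congr (Equiv.piComm _)
  obtain ⟨T, rfl⟩ := traceChar_bijective.surjective ψ
  exact ⟨T, fun X => rfl⟩

end TraceCharacter

section BlockEigenspace

theorem mul_mul_mul_eq_zero {K N p q p' q' : Type*} [Semiring K] [Fintype N] [Fintype p] [Fintype q]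
    {A : Matrix N p K} {B : Matrix q N K} (hBA : B * A = 0) (P : Matrix p p' K)
    (Q : Matrix q' q K) : Q * B * (A * P) = 0 := by
  rw [Matrix.mul_assoc, ← Matrix.mul_assoc B, hBA, Matrix.zero_mul, Matrix.mul_zero]

variable {K N p q p' q' E : Type*} [Field K] [Fintype N] [DecidableEq N]
  [Fintype p] [Fintype q] [Fintype p'] [Fintype q'] [AddCommGroup E] [Module ℂ E]

/-- For `B * A = 0`, the matrices `1 + A * X * B` form an abelian group isomorphic to a quotient of
`(M_{p,q}(K), +)`. Every conjugate of a subgroup `U_{a,b}` is obtained in this way. -/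
def unip (A : Matrix N p K) (B : Matrix q N K) (hBA : B * A = 0) :
    Multiplicative (Matrix p q K) →* GL N K :=
  MonoidHom.toHomUnits
    { toFun X := 1 + A * X.toAdd * B
      map_one' := by simp
      map_mul' X Y := by
        have cross_zero : A * X.toAdd * B * (A * Y.toAdd * B) = 0 := by
          rw [show A * X.toAdd * B * (A * Y.toAdd * B) = A * X.toAdd * (B * A) * (Y.toAdd * B) by
            simp only [Matrix.mul_assoc], hBA]
          simp
        rw [toAdd_mul, Matrix.mul_add, Matrix.add_mul, Matrix.add_mul, Matrix.mul_add,
          Matrix.mul_add, cross_zero]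
        simp only [Matrix.one_mul, Matrix.mul_one]
        abel }

theorem unip_mul_self (A : Matrix N p K) (B : Matrix q N K) (hBA : B * A = 0)
    (X : Multiplicative (Matrix p q K)) : (unip A B hBA X : Matrix N N K) * A = A := by
  change (1 + A * X.toAdd * B) * A = A
  rw [Matrix.add_mul, Matrix.one_mul, Matrix.mul_assoc, hBA, Matrix.mul_zero, add_zero]

theorem self_mul_unip (A : Matrix N p K) (B : Matrix q N K) (hBA : B * A = 0)
    (X : Multiplicative (Matrix p q K)) : B * (unip A B hBA X : Matrix N N K) = B := by
  change B * (1 + A * X.toAdd * B) = B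
  rw [Matrix.mul_add, Matrix.mul_one, Matrix.mul_assoc A, ← Matrix.mul_assoc B, hBA,
    Matrix.zero_mul, add_zero]

/-- The eigenspace of `γ_T : X ↦ χ₀ (trace (T * X))` for the elements `1 + A * X * B` of `GL N K`.
The standard `U_{a,b}` is the case where `A` consists of the first `a` columns of the identity and
`B` of its last `b` rows. -/
def blockEigenspace (χ₀ : AddChar K ℂ) (ρ : Representation ℂ (GL N K) E)
    (A : Matrix N p K) (B : Matrix q N K) (T : Matrix q p K) : Submodule ℂ E where
  carrier := {v | ∀ (X : Matrix p q K) (g : GL N K), (g : Matrix N N K) = 1 + A * X * B →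
    ρ g v = χ₀ (T * X).trace • v}
  zero_mem' := by simp
  add_mem' hv hw X g hg := by rw [map_add, hv X g hg, hw X g hg, smul_add]
  smul_mem' c v hv X g hg := by rw [map_smul, hv X g hg, smul_comm]

variable {χ₀ : AddChar K ℂ} {ρ : Representation ℂ (GL N K) E}
  {A : Matrix N p K} {B : Matrix q N K} {T : Matrix q p K} {v : E}

theorem mem_blockEigenspace_iff_unip (hBA : B * A = 0) :
    v ∈ blockEigenspace χ₀ ρ A B T ↔
      ∀ X, ρ (unip A B hBA (.ofAdd X)) v = χ₀ (T * X).trace • v := by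
  refine ⟨fun hv X => hv X _ rfl, fun hv X g hg => ?_⟩
  rw [← hv X, show g = unip A B hBA (.ofAdd X) from Units.ext hg]

theorem blockEigenspace_le_mul (P : Matrix p p' K) (Q : Matrix q' q K) :
    blockEigenspace χ₀ ρ A B T ≤ blockEigenspace χ₀ ρ (A * P) (Q * B) (Q * T * P) := by
  intro v hv X g hg
  rw [hv (P * X * Q) g (by simp only [hg, Matrix.mul_assoc]), Matrix.mul_assoc Q,
    Matrix.mul_assoc Q, Matrix.trace_mul_comm Q]
  simp only [Matrix.mul_assoc]

theorem apply_mem_blockEigenspace (hv : v ∈ blockEigenspace χ₀ ρ A B T) {g : GL N K}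
    (hA : (g : Matrix N N K) * A = A) (hB : B * (g : Matrix N N K) = B) :
    ρ g v ∈ blockEigenspace χ₀ ρ A B T := by
  intro X u hu
  have hcomm : u * g = g * u := by
    apply Units.ext
    rw [Units.val_mul, Units.val_mul, hu, Matrix.add_mul, Matrix.mul_add, Matrix.mul_assoc _ B, hB,
      Matrix.mul_assoc A, ← Matrix.mul_assoc _ A, hA, Matrix.one_mul, Matrix.mul_one]
  rw [← Module.End.mul_apply, ← map_mul, hcomm, map_mul, Module.End.mul_apply, hv X u hu, map_smul]

theorem apply_unip_mem_blockEigenspace_mul (hBA : B * A = 0) {P : Matrix p p' K}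
    {Q : Matrix q' q K} {T : Matrix q' p' K} (X : Matrix p q K)
    (hv : v ∈ blockEigenspace χ₀ ρ (A * P) (Q * B) T) :
    ρ (unip A B hBA (.ofAdd X)) v ∈ blockEigenspace χ₀ ρ (A * P) (Q * B) T := by
  apply apply_mem_blockEigenspace hv
  · rw [← Matrix.mul_assoc, unip_mul_self]
  · rw [Matrix.mul_assoc, self_mul_unip]

theorem eq_of_mem_blockEigenspace (hχ₀ : χ₀ ≠ 1) (hBA : B * A = 0) {T' : Matrix q p K}
    (hv₀ : v ≠ 0) (hv : v ∈ blockEigenspace χ₀ ρ A B T) (hv' : v ∈ blockEigenspace χ₀ ρ A B T') :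
    T = T' := by
  refine eq_of_forall_addChar_trace_mul_eq hχ₀ fun X => smul_left_injective ℂ hv₀ ?_
  exact (hv X (unip A B hBA (.ofAdd X)) rfl).symm.trans (hv' X _ rfl)

variable [Finite K]

theorem le_of_forall_inf_blockEigenspace_le (hχ₀ : χ₀ ≠ 1) (hBA : B * A = 0)
    {W P : Submodule ℂ E} (hW : ∀ X, ∀ w ∈ W, ρ (unip A B hBA (.ofAdd X)) w ∈ W)
    (hP : ∀ T, W ⊓ blockEigenspace χ₀ ρ A B T ≤ P) : W ≤ P := by
  refine le_of_forall_eigenvector_mem (ρ.comp (unip A B hBA)) hW fun ψ w hw hψ => ?_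
  obtain ⟨T, hT⟩ := exists_addChar_trace_mul_eq hχ₀ ψ
  exact hP T ⟨hw, (mem_blockEigenspace_iff_unip hBA).2 fun X => (hψ X).trans (by rw [hT])⟩

theorem exists_blockEigenspace_ne_bot_of_mul (hχ₀ : χ₀ ≠ 1) (hBA : B * A = 0)
    {P : Matrix p p' K} {Q : Matrix q' q K} {S : Matrix q' p' K}
    (hne : blockEigenspace χ₀ ρ (A * P) (Q * B) S ≠ ⊥) :
    ∃ T, Q * T * P = S ∧ blockEigenspace χ₀ ρ A B T ≠ ⊥ := by
  by_contra! hall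
  refine hne (le_bot_iff.1 (le_of_forall_inf_blockEigenspace_le hχ₀ hBA
    (fun X w hw => apply_unip_mem_blockEigenspace_mul hBA X hw) fun T w ⟨hwS, hwT⟩ => ?_))
  by_contra hw₀
  have hT : Q * T * P = S :=
    eq_of_mem_blockEigenspace hχ₀ (mul_mul_mul_eq_zero hBA P Q) hw₀ (blockEigenspace_le_mul P Q hwT)
      hwS
  exact hw₀ ((Submodule.mem_bot ℂ).1 (hall T hT ▸ hwT))

end BlockEigenspace

section CoordinateMatrices

variable (K : Type*) {M N ι κ : Type*} [Semiring K] [DecidableEq N]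

/-- The matrix whose columns are the standard basis vectors indexed by `f`. -/
def stdCols (f : ι → N) : Matrix N ι K :=
  (1 : Matrix N N K).submatrix id f

/-- The matrix whose rows are the standard basis covectors indexed by `f`. -/
def stdRows (f : ι → N) : Matrix ι N K :=
  (1 : Matrix N N K).submatrix f id

variable {K}

theorem mul_stdCols [Fintype N] (X : Matrix M N K) (f : ι → N) :
    X * stdCols K f = X.submatrix id f :=
  Matrix.mul_submatrix_one (Equiv.refl N) f X

theorem stdRows_mul [Fintype N] (f : ι → N) (X : Matrix N M K) :
    stdRows K f * X = X.submatrix f id :=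
  Matrix.one_submatrix_mul f (Equiv.refl N) X

theorem stdCols_comp [Fintype ι] [DecidableEq ι] (f : ι → N) (g : κ → ι) :
    stdCols K (f ∘ g) = stdCols K f * stdCols K g := by
  rw [mul_stdCols]
  rfl

theorem stdRows_mul_stdCols_self [Fintype N] [DecidableEq ι] {f : ι → N}
    (hf : Function.Injective f) : stdRows K f * stdCols K f = 1 := by
  rw [stdRows_mul]
  exact Matrix.submatrix_one f hf

theorem stdRows_mul_stdCols_eq_zero [Fintype N] {f : ι → N} {g : κ → N} (h : ∀ i j, f i ≠ g j) :
    stdRows K f * stdCols K g = 0 := by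
  ext i j
  simp [stdRows_mul, stdCols, h]

theorem stdCols_eq_fromCols (f : ι ⊕ κ → N) :
    stdCols K f = fromCols (stdCols K (f ∘ Sum.inl)) (stdCols K (f ∘ Sum.inr)) := by
  ext i (j | j) <;> rfl

end CoordinateMatrices

section LinearAlgebra

variable {K N p q κ : Type*} [Field K] [Fintype N] [DecidableEq N] [Fintype p] [Fintype q]
  [DecidableEq κ]

theorem exists_GL_mul_eq [Finite κ] {A A' : Matrix N κ K} {R R' : Matrix κ N K}
    (hA : R * A = 1) (hA' : R' * A' = 1) :
    ∃ g : GL N K, (g : Matrix N N K) * A = A' := by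
  have := Fintype.ofFinite κ
  have toLin'_injective {A : Matrix N κ K} {R : Matrix κ N K} (h : R * A = 1) :
      Function.Injective (Matrix.toLin' A) :=
    Function.LeftInverse.injective (g := Matrix.toLin' R) fun x => by
      rw [← LinearMap.comp_apply, ← Matrix.toLin'_mul, h, Matrix.toLin'_one, LinearMap.id_apply]
  let e := LinearEquiv.ofInjective _ (toLin'_injective hA)
  let e' := LinearEquiv.ofInjective _ (toLin'_injective hA')
  obtain ⟨φ, hφ⟩ := Submodule.exists_linearEquiv_restrict_eq (e.symm ≪≫ₗ e')
  let g : GL N K := Matrix.GeneralLinearGroup.toLin.symm (.ofLinearEquiv φ)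
  have toLin'_g : Matrix.toLin' (g : Matrix N N K) = φ.toLinearMap :=
    congrArg Units.val (Matrix.GeneralLinearGroup.toLin.apply_symm_apply (.ofLinearEquiv φ))
  refine ⟨g, Matrix.toLin'.injective (LinearMap.ext fun x => ?_)⟩
  rw [Matrix.toLin'_mul, toLin'_g]
  calc φ (e x) = (e.symm ≪≫ₗ e') (e x) := (hφ (e x)).symm
    _ = e' x := by simp

theorem exists_mul_mul_eq_one_of_rank_eq [Fintype κ] {T : Matrix q p K}
    (hT : T.rank = Fintype.card κ) :
    ∃ (P : Matrix p κ K) (Q : Matrix κ q K), Q * T * P = 1 := by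
  classical
  let f := Matrix.toLin' T
  let e : (κ → K) ≃ₗ[K] LinearMap.range f :=
    LinearEquiv.ofFinrankEq _ _ (by rw [Module.finrank_fintype_fun_eq_card, ← hT]; rfl)
  obtain ⟨s, hs⟩ := f.rangeRestrict.exists_rightInverse_of_surjective f.range_rangeRestrict
  have hfs : f ∘ₗ s = (LinearMap.range f).subtype :=
    LinearMap.ext fun y => congrArg Subtype.val (LinearMap.congr_fun hs y)
  obtain ⟨t, ht⟩ := LinearMap.exists_leftInverse_of_injective (LinearMap.range f).subtype
    (Submodule.ker_subtype _)
  refine ⟨LinearMap.toMatrix' (s ∘ₗ e.toLinearMap),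
    LinearMap.toMatrix' (e.symm.toLinearMap ∘ₗ t), ?_⟩
  rw [← LinearMap.toMatrix'_toLin' T, ← LinearMap.toMatrix'_comp, ← LinearMap.toMatrix'_comp,
    ← LinearMap.toMatrix'_id]
  congr 1
  calc (e.symm.toLinearMap ∘ₗ t) ∘ₗ f ∘ₗ s ∘ₗ e.toLinearMap
      = e.symm.toLinearMap ∘ₗ (t ∘ₗ (f ∘ₗ s)) ∘ₗ e.toLinearMap := rfl
    _ = LinearMap.id := by rw [hfs, ht]; ext; simp

end LinearAlgebra

section FrameEigenspace

variable {K N κ E : Type*} [Field K] [Fintype N] [DecidableEq N] [Fintype κ]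
  [AddCommGroup E] [Module ℂ E]

/-- The eigenspace of the character `1 + A * Y ↦ χ₀ (trace (Y * C))` of the abelian group of
matrices `1 + A * Y` with `Y * A = 0`. For `A` of full column rank this group is the unipotent
radical of the stabilizer of the column space of `A`, and the character depends only on `C` modulo
that column space. -/
def frameEigenspace (χ₀ : AddChar K ℂ) (ρ : Representation ℂ (GL N K) E) (A C : Matrix N κ K) :
    Submodule ℂ E where
  carrier := {v | ∀ (Y : Matrix κ N K) (g : GL N K), Y * A = 0 → (g : Matrix N N K) = 1 + A * Y →
    ρ g v = χ₀ (Y * C).trace • v}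
  zero_mem' := by simp
  add_mem' hv hw Y g hY hg := by rw [map_add, hv Y g hY hg, hw Y g hY hg, smul_add]
  smul_mem' c v hv Y g hY hg := by rw [map_smul, hv Y g hY hg, smul_comm]

variable {χ₀ : AddChar K ℂ} {ρ : Representation ℂ (GL N K) E} {A C A' C' : Matrix N κ K} {v : E}

theorem frameEigenspace_le_blockEigenspace {q : Type*} [Fintype q] {B : Matrix q N K}
    (hBA : B * A = 0) : frameEigenspace χ₀ ρ A C ≤ blockEigenspace χ₀ ρ A B (B * C) := by
  intro v hv X g hg
  rw [hv (X * B) g (by rw [Matrix.mul_assoc, hBA, Matrix.mul_zero])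
    (by rw [hg, Matrix.mul_assoc]), Matrix.mul_assoc, Matrix.trace_mul_comm]

theorem blockEigenspace_le_frameEigenspace (R : Matrix κ N K) :
    blockEigenspace χ₀ ρ A (1 - A * R) C ≤ frameEigenspace χ₀ ρ A C := by
  intro v hv Y g hY hg
  have hYR : Y * (1 - A * R) = Y := by
    rw [Matrix.mul_sub, Matrix.mul_one, ← Matrix.mul_assoc, hY, Matrix.zero_mul, sub_zero]
  rw [hv Y g (by rw [Matrix.mul_assoc, hYR, hg]), Matrix.trace_mul_comm]

theorem apply_mem_frameEigenspace {g : GL N K} (hA : (g : Matrix N N K) * A = A')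
    (hC : (g : Matrix N N K) * C = C') (hv : v ∈ frameEigenspace χ₀ ρ A C) :
    ρ g v ∈ frameEigenspace χ₀ ρ A' C' := by
  intro Y u hY hu
  have hconj : ((g⁻¹ * u * g : GL N K) : Matrix N N K) = 1 + A * (Y * (g : Matrix N N K)) := by
    rw [Units.val_mul, Units.val_mul, hu, ← hA, Matrix.mul_add, Matrix.add_mul, Matrix.mul_one,
      Units.inv_mul]
    simp only [← Matrix.mul_assoc]
    rw [Units.inv_mul, Matrix.one_mul]
  have hact := hv _ _ (by rw [Matrix.mul_assoc, hA, hY]) hconj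
  rw [Matrix.mul_assoc, hC] at hact
  rw [← map_smul, ← hact, ← Module.End.mul_apply, ← Module.End.mul_apply, ← map_mul, ← map_mul]
  congr 2
  group

theorem frameEigenspace_ne_bot_of_mul [DecidableEq κ] {R R' : Matrix (κ ⊕ κ) N K}
    (hR : R * fromCols A C = 1) (hR' : R' * fromCols A' C' = 1)
    (hne : frameEigenspace χ₀ ρ A C ≠ ⊥) : frameEigenspace χ₀ ρ A' C' ≠ ⊥ := by
  obtain ⟨v, hv, hv₀⟩ := Submodule.exists_mem_ne_zero_of_ne_bot hne
  obtain ⟨g, hg⟩ := exists_GL_mul_eq hR hR'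
  rw [mul_fromCols] at hg
  obtain ⟨hA, hC⟩ := fromCols_inj hg
  refine (Submodule.ne_bot_iff _).2 ⟨ρ g v, apply_mem_frameEigenspace hA hC hv, ?_⟩
  rwa [Ne, ← map_zero (ρ g), (ρ.apply_bijective g).1.eq_iff]

/-- The frame eigenspace attached to a `κ ⊕ κ`-indexed family of standard basis vectors. -/
abbrev stdFrameEigenspace (χ₀ : AddChar K ℂ) (ρ : Representation ℂ (GL N K) E) (f : κ ⊕ κ → N) :
    Submodule ℂ E :=
  frameEigenspace χ₀ ρ (stdCols K (f ∘ Sum.inl)) (stdCols K (f ∘ Sum.inr))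

theorem stdFrameEigenspace_ne_bot_of_injective {f f' : κ ⊕ κ → N} (hf : Function.Injective f)
    (hf' : Function.Injective f') (hne : stdFrameEigenspace χ₀ ρ f ≠ ⊥) :
    stdFrameEigenspace χ₀ ρ f' ≠ ⊥ := by
  classical
  refine frameEigenspace_ne_bot_of_mul (R := stdRows K f) (R' := stdRows K f') ?_ ?_ hne
  · rw [← stdCols_eq_fromCols, stdRows_mul_stdCols_self hf]
  · rw [← stdCols_eq_fromCols, stdRows_mul_stdCols_self hf']

theorem stdFrameEigenspace_le_blockEigenspace {p q : Type*} [Fintype p] [DecidableEq p]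
    [Fintype q] [DecidableEq q] {r : p → N} {c : q → N} (hc : Function.Injective c)
    (hcr : ∀ j i, c j ≠ r i) {i : κ → p} {j : κ → q} :
    stdFrameEigenspace χ₀ ρ (Sum.elim (r ∘ i) (c ∘ j)) ≤
      blockEigenspace χ₀ ρ (stdCols K r * stdCols K i) (stdRows K c) (stdCols K j) := by
  have hzero : stdRows K c * stdCols K (r ∘ i) = 0 :=
    stdRows_mul_stdCols_eq_zero fun _ _ => hcr _ _
  have hval : stdRows K c * stdCols K (c ∘ j) = stdCols K j := by
    rw [stdCols_comp, ← Matrix.mul_assoc, stdRows_mul_stdCols_self hc, Matrix.one_mul]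
  rw [← stdCols_comp, ← hval]
  exact frameEigenspace_le_blockEigenspace hzero

variable [Finite K]

theorem exists_frameEigenspace_ne_bot [DecidableEq κ] (hχ₀ : χ₀ ≠ 1) {B R : Matrix κ N K}
    (hBA : B * A = 0) (hRA : R * A = 1) (hne : blockEigenspace χ₀ ρ A B 1 ≠ ⊥) :
    ∃ C : Matrix N κ K, B * C = 1 ∧ frameEigenspace χ₀ ρ A C ≠ ⊥ := by
  have hBR : B * ((1 : Matrix N N K) - A * R) = B := by
    rw [Matrix.mul_sub, Matrix.mul_one, ← Matrix.mul_assoc, hBA, Matrix.zero_mul, sub_zero]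
  have hRA' : (1 - A * R) * A = 0 := by
    rw [Matrix.sub_mul, Matrix.one_mul, Matrix.mul_assoc, hRA, Matrix.mul_one, sub_self]
  have hne' : blockEigenspace χ₀ ρ (A * (1 : Matrix κ κ K)) (B * ((1 : Matrix N N K) - A * R)) 1
      ≠ ⊥ := by
    rwa [hBR, Matrix.mul_one]
  obtain ⟨C, hBC, hC⟩ := exists_blockEigenspace_ne_bot_of_mul hχ₀ hRA' hne'
  exact ⟨C, by rwa [Matrix.mul_one] at hBC,
    ne_bot_of_le_ne_bot hC (blockEigenspace_le_frameEigenspace R)⟩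

theorem stdFrameEigenspace_ne_bot_of_one [DecidableEq κ] (hχ₀ : χ₀ ≠ 1) {B R : Matrix κ N K}
    (hBA : B * A = 0) (hRA : R * A = 1) (hne : blockEigenspace χ₀ ρ A B 1 ≠ ⊥) {f : κ ⊕ κ → N}
    (hf : Function.Injective f) : stdFrameEigenspace χ₀ ρ f ≠ ⊥ := by
  obtain ⟨C, hBC, hC⟩ := exists_frameEigenspace_ne_bot hχ₀ hBA hRA hne
  have hleft : fromRows (R - R * C * B) B * fromCols A C = 1 := by
    rw [fromRows_mul_fromCols, Matrix.sub_mul, Matrix.sub_mul, Matrix.mul_assoc _ B,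
      Matrix.mul_assoc _ B, hBA, hBC, hRA, Matrix.mul_zero, Matrix.mul_one, sub_zero, sub_self,
      fromBlocks_one]
  refine frameEigenspace_ne_bot_of_mul hleft (R' := stdRows K f) ?_ hC
  rw [← stdCols_eq_fromCols, stdRows_mul_stdCols_self hf]

theorem stdFrameEigenspace_ne_bot_of_rank (hχ₀ : χ₀ ≠ 1) {p q : Type*} [Fintype p] [Fintype q]
    [DecidableEq p] {A : Matrix N p K} {B : Matrix q N K} {L : Matrix p N K} {T : Matrix q p K}
    (hBA : B * A = 0) (hLA : L * A = 1) (hT : T.rank = Fintype.card κ)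
    (hne : blockEigenspace χ₀ ρ A B T ≠ ⊥) {f : κ ⊕ κ → N} (hf : Function.Injective f) :
    stdFrameEigenspace χ₀ ρ f ≠ ⊥ := by
  classical
  obtain ⟨P, Q, hQTP⟩ := exists_mul_mul_eq_one_of_rank_eq hT
  have hRA : Q * T * L * (A * P) = 1 := by
    rw [Matrix.mul_assoc, ← Matrix.mul_assoc L, hLA, Matrix.one_mul, hQTP]
  refine stdFrameEigenspace_ne_bot_of_one hχ₀ (mul_mul_mul_eq_zero hBA P Q) hRA ?_ hf
  rw [← hQTP]
  exact ne_bot_of_le_ne_bot hne (blockEigenspace_le_mul P Q)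

theorem exists_card_le_rank_of_stdFrameEigenspace_ne_bot (hχ₀ : χ₀ ≠ 1) {p q : Type*} [Fintype p]
    [Fintype q] {r : p → N} {c : q → N} (hr : Function.Injective r) (hc : Function.Injective c)
    (hcr : ∀ j i, c j ≠ r i) (hp : Fintype.card κ ≤ Fintype.card p)
    (hq : Fintype.card κ ≤ Fintype.card q) {f : κ ⊕ κ → N} (hf : Function.Injective f)
    (hne : stdFrameEigenspace χ₀ ρ f ≠ ⊥) :
    ∃ T, blockEigenspace χ₀ ρ (stdCols K r) (stdRows K c) T ≠ ⊥ ∧ Fintype.card κ ≤ T.rank := by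
  classical
  obtain ⟨i⟩ := Function.Embedding.nonempty_of_card_le hp
  obtain ⟨j⟩ := Function.Embedding.nonempty_of_card_le hq
  have hri : Function.Injective (r ∘ i) := hr.comp i.injective
  have hcj : Function.Injective (c ∘ j) := hc.comp j.injective
  have hne' : stdFrameEigenspace χ₀ ρ (Sum.elim (r ∘ i) (c ∘ j)) ≠ ⊥ :=
    stdFrameEigenspace_ne_bot_of_injective hf
      (hri.sumElim hcj fun _ _ => (hcr _ _).symm) hne
  have hblock := ne_bot_of_le_ne_bot hne' (stdFrameEigenspace_le_blockEigenspace hc hcr)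
  rw [← Matrix.one_mul (stdRows K c)] at hblock
  obtain ⟨T, hT, hTne⟩ :=
    exists_blockEigenspace_ne_bot_of_mul hχ₀ (stdRows_mul_stdCols_eq_zero hcr) hblock
  refine ⟨T, hTne, ?_⟩
  calc Fintype.card κ = (1 : Matrix κ κ K).rank := Matrix.rank_one.symm
    _ = (stdRows K j * (T * stdCols K i)).rank := by
      rw [← Matrix.one_mul T, hT, stdRows_mul_stdCols_self j.injective]
    _ ≤ (T * stdCols K i).rank := Matrix.rank_mul_le_right _ _
    _ ≤ T.rank := Matrix.rank_mul_le_left _ _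

end FrameEigenspace

section Transvection

variable {K N κ E : Type*} [Field K] [Fintype N] [DecidableEq N] [Fintype κ]
  [AddCommGroup E] [Module ℂ E]

theorem single_eq_stdCols_mul_single_mul_stdRows {K N ι ι' : Type*} [Semiring K] [DecidableEq N]
    [Fintype ι] [DecidableEq ι] [Fintype ι'] [DecidableEq ι'] (r : ι → N) (c : ι' → N) (i : ι)
    (j : ι') (t : K) :
    Matrix.single (r i) (c j) t = stdCols K r * Matrix.single i j t * stdRows K c := by
  ext x y
  simp only [Matrix.mul_apply, stdCols, stdRows, submatrix_apply, single_apply, Matrix.one_apply]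
  rw [Finset.sum_eq_single j (by grind [Finset.sum_eq_zero]) (by simp),
    Finset.sum_eq_single i (by grind) (by simp)]
  grind

theorem eq_fromBlocks_of_mul_stdCols_inl {K m l : Type*} [Semiring K] [Fintype m] [DecidableEq m]
    [Fintype l] [DecidableEq l] {M : Matrix (m ⊕ l) (m ⊕ l) K}
    (hM : M * (stdCols K Sum.inl : Matrix (m ⊕ l) m K) = stdCols K Sum.inl) :
    M = fromBlocks 1 M.toBlocks₁₂ 0 M.toBlocks₂₂ := by
  rw [mul_stdCols] at hM
  have hinl (x : m ⊕ l) (y : m) :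
      M x (.inl y) = (1 : Matrix (m ⊕ l) (m ⊕ l) K) x (.inl y) := congrFun₂ hM x y
  ext (x | x) (y | y)
  · simp [hinl, Matrix.one_apply]
  · rfl
  · simp [hinl]
  · rfl

theorem isUnit_det_of_mul_stdCols_inl [DecidableEq κ] {T : Matrix (κ ⊕ Unit) (κ ⊕ Unit) K}
    (hT : T * (stdCols K Sum.inl : Matrix (κ ⊕ Unit) κ K) = stdCols K Sum.inl)
    (hcorner : T (.inr ()) (.inr ()) ≠ 0) : IsUnit T.det := by
  rw [eq_fromBlocks_of_mul_stdCols_inl hT, det_fromBlocks_zero₂₁, det_one, one_mul]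
  simpa [Matrix.det_unique, toBlocks₂₂] using hcorner

theorem apply_eq_self_of_mem_stdFrameEigenspace [Finite K] {χ₀ : AddChar K ℂ} (hχ₀ : χ₀ ≠ 1)
    {ρ : Representation ℂ (GL N K) E}
    (hmax : ∀ f : (κ ⊕ Unit) ⊕ (κ ⊕ Unit) → N, Function.Injective f →
      stdFrameEigenspace χ₀ ρ f = ⊥)
    {r c : κ ⊕ Unit → N} (hrc : Function.Injective (Sum.elim r c)) {g : GL N K} {t : K}
    (hg : (g : Matrix N N K) = transvection (r (.inr ())) (c (.inr ())) t) {w : E}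
    (hw : w ∈ stdFrameEigenspace χ₀ ρ (Sum.elim (r ∘ Sum.inl) (c ∘ Sum.inl))) :
    ρ g w = w := by
  classical
  obtain ⟨hr, hc, hdisj⟩ := Sum.elim_injective.1 hrc
  have hcr (j i) : c j ≠ r i := (hdisj i j).symm
  have hBA : stdRows K c * stdCols K r = 0 := stdRows_mul_stdCols_eq_zero hcr
  let J : Matrix (κ ⊕ Unit) κ K := stdCols K Sum.inl
  let I : Matrix (κ ⊕ Unit) (κ ⊕ Unit) K := 1
  suffices h : blockEigenspace χ₀ ρ (stdCols K r * J) (I * stdRows K c) J ≤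
      LinearMap.ker (ρ g - 1) by
    rw [Matrix.one_mul] at h
    exact sub_eq_zero.1 (h (stdFrameEigenspace_le_blockEigenspace hc hcr hw))
  -- Decompose under the larger block group with rows `r` and columns `c`: a character `γ_T` that
  -- occurs must restrict to the given one, and the corner entry of `T` vanishes since otherwise
  -- its rank would exceed the maximum.
  refine le_of_forall_inf_blockEigenspace_le hχ₀ hBA
    (fun X w hw => apply_unip_mem_blockEigenspace_mul hBA X hw) fun T w ⟨hwJ, hwT⟩ => ?_
  by_cases hw₀ : w = 0
  · rw [hw₀]; exact zero_mem _
  have hTJ : T * J = J := by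
    have h := eq_of_mem_blockEigenspace hχ₀ (mul_mul_mul_eq_zero hBA J 1) hw₀
      (blockEigenspace_le_mul J 1 hwT) hwJ
    rwa [Matrix.one_mul] at h
  have hcorner : T (.inr ()) (.inr ()) = 0 := by
    by_contra hcorner
    have hrank : T.rank = Fintype.card (κ ⊕ Unit) :=
      rank_of_isUnit T ((isUnit_iff_isUnit_det T).2 (isUnit_det_of_mul_stdCols_inl hTJ hcorner))
    exact stdFrameEigenspace_ne_bot_of_rank hχ₀ hBA (stdRows_mul_stdCols_self hr) hrank
      ((Submodule.ne_bot_iff _).2 ⟨w, hwT, hw₀⟩) hrc (hmax _ hrc)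
  refine sub_eq_zero.2 ((hwT (Matrix.single (.inr ()) (.inr ()) t) g ?_).trans ?_)
  · rw [hg, transvection, single_eq_stdCols_mul_single_mul_stdRows]
  · rw [Matrix.trace_mul_single, hcorner]
    simp

end Transvection

section AffineGroup

theorem diag2n_eq_prod_transvection {K l : Type*} [Field K] [Fintype l] [DecidableEq l] {i j : l}
    (hij : i ≠ j) {c : K} (hc : c ≠ 0) :
    SpecialLinearGroup.diag2n hij c hc =
      SpecialLinearGroup.transvection hij c * SpecialLinearGroup.transvection hij.symm (-c⁻¹) *
      SpecialLinearGroup.transvection hij c * SpecialLinearGroup.transvection hij (-1) *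
      SpecialLinearGroup.transvection hij.symm 1 * SpecialLinearGroup.transvection hij (-1) := by
  ext x y
  simp only [SpecialLinearGroup.diag2n_coe, diagonal_apply, Matrix.SpecialLinearGroup.coe_mul,
    SpecialLinearGroup.transvection_coe, mul_add, mul_one, add_mul, one_mul, mul_neg, neg_mul,
    neg_neg, single_mul_single_same, single_mul_single_of_ne, ne_eq, hij, hij.symm,
    not_false_eq_true, mul_inv_cancel₀, inv_mul_cancel₀, hc, add_zero, Matrix.add_apply,
    Matrix.one_apply, single_apply]
  grind

theorem specialLinearGroup_transvection_induction {K l : Type*} [Field K] [Fintype l]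
    [DecidableEq l] [Nontrivial l] (P : SpecialLinearGroup l K → Prop)
    (htransvec : ∀ (i j : l) (hij : i ≠ j) t, P (SpecialLinearGroup.transvection hij t))
    (hmul : ∀ M M', P M → P M' → P (M * M')) (M : SpecialLinearGroup l K) : P M := by
  refine SpecialLinearGroup.diagonal_transvection_induction' P M (fun i j hij c hc => ?_)
    htransvec hmul
  rw [diag2n_eq_prod_transvection hij hc]
  iterate 5 refine hmul _ _ ?_ (htransvec _ _ _ _)
  exact htransvec _ _ _ _

section CommRing

variable {K m l : Type*} [CommRing K] [Fintype m] [DecidableEq m] [Fintype l] [DecidableEq l]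

/-- The matrix `[1 B; 0 D]`. These elements form the subgroup of `GL (m ⊕ l) K` fixing the standard
basis vectors indexed by `m`. -/
def affineGL (B : Matrix m l K) (D : GL l K) : GL (m ⊕ l) K where
  val := fromBlocks 1 B 0 D
  inv := fromBlocks 1 (-(B * ((D⁻¹ : GL l K) : Matrix l l K))) 0 (D⁻¹ : GL l K)
  val_inv := by simp [fromBlocks_multiply]
  inv_val := by simp [fromBlocks_multiply, Matrix.mul_assoc]

theorem affineGL_mul (B B' : Matrix m l K) (D D' : GL l K) :
    affineGL B D * affineGL B' D' = affineGL (B' + B * (D' : Matrix l l K)) (D * D') :=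
  Units.ext <| by simp [affineGL, fromBlocks_multiply]

theorem affineGL_zero_one : affineGL (0 : Matrix m l K) 1 = 1 :=
  Units.ext fromBlocks_one

theorem affineGL_inv (B : Matrix m l K) (D : GL l K) :
    (affineGL B D)⁻¹ = affineGL (-(B * ((D⁻¹ : GL l K) : Matrix l l K))) D⁻¹ :=
  Units.ext rfl

theorem affineGL_mul_single_mem (S : Subgroup (GL (m ⊕ l) K))
    (hconj : ∀ B, ∀ g ∈ S, affineGL B 1 * g * (affineGL B 1)⁻¹ ∈ S) {i j : l} (hij : i ≠ j) {t : K}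
    (htransvec : affineGL 0 (SpecialLinearGroup.toGL (.transvection hij t)) ∈ S)
    (B : Matrix m l K) : affineGL (B * Matrix.single i j t) 1 ∈ S := by
  -- The left-hand side is the commutator of the inverse transvection with `affineGL B 1`.
  convert S.mul_mem (S.inv_mem htransvec) (hconj B _ htransvec) using 1
  simp [affineGL_inv, affineGL_mul, SpecialLinearGroup.transvection_coe, Matrix.mul_add]

theorem affineGL_one_mem [Nontrivial l] (S : Subgroup (GL (m ⊕ l) K))
    (hconj : ∀ B, ∀ g ∈ S, affineGL B 1 * g * (affineGL B 1)⁻¹ ∈ S)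
    (htransvec : ∀ (i j : l) (hij : i ≠ j) t,
      affineGL 0 (SpecialLinearGroup.toGL (.transvection hij t)) ∈ S) (B : Matrix m l K) :
    affineGL B 1 ∈ S := by
  induction B using Matrix.induction_on' with
  | h_zero =>
    rw [affineGL_zero_one]
    exact S.one_mem
  | h_add B B' hB hB' =>
    convert S.mul_mem hB' hB using 1
    simp [affineGL_mul]
  | h_std_basis x j t =>
    obtain ⟨i, hij⟩ := exists_ne j
    simpa using affineGL_mul_single_mem S hconj hij (htransvec i j hij 1) (Matrix.single x i t)

end CommRing

variable {K m l E : Type*} [Field K] [Fintype m] [DecidableEq m] [Fintype l] [DecidableEq l]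
  [AddCommGroup E] [Module ℂ E]

theorem affineGL_mem_of_det_eq_one [Nontrivial l] (S : Subgroup (GL (m ⊕ l) K))
    (hconj : ∀ B, ∀ g ∈ S, affineGL B 1 * g * (affineGL B 1)⁻¹ ∈ S)
    (htransvec : ∀ (i j : l) (hij : i ≠ j) t,
      affineGL 0 (SpecialLinearGroup.toGL (.transvection hij t)) ∈ S)
    (B : Matrix m l K) {D : GL l K} (hD : GeneralLinearGroup.det D = 1) : affineGL B D ∈ S := by
  have hlinear (M : SpecialLinearGroup l K) :
      affineGL 0 (SpecialLinearGroup.toGL M) ∈ S := by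
    refine specialLinearGroup_transvection_induction
      (fun M => affineGL 0 (SpecialLinearGroup.toGL M) ∈ S) htransvec (fun M M' hM hM' => ?_) M
    simpa [affineGL_mul] using S.mul_mem hM hM'
  have hD_mem : affineGL 0 D ∈ S := by
    convert hlinear ⟨D, congrArg Units.val hD⟩
    exact Units.ext rfl
  simpa [affineGL_mul] using S.mul_mem hD_mem (affineGL_one_mem S hconj htransvec B)

theorem exists_monoidHom_det_apply_eq (K l : Type*) [CommRing K] [Fintype l] [DecidableEq l]
    [Nonempty l] : ∃ s : Kˣ →* GL l K, ∀ u, GeneralLinearGroup.det (s u) = u := by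
  inhabit l
  let diag : (l → Kˣ) →* GL l K :=
    (Units.map (diagonalRingHom l K : (l → K) →* Matrix l l K)).comp
      MulEquiv.piUnits.symm.toMonoidHom
  refine ⟨diag.comp (MonoidHom.mulSingle (fun _ => Kˣ) default), fun u => Units.ext ?_⟩
  simp [diag, ← Units.coe_prod]

/-- The subgroup of elements acting as the identity on `W`. -/
def pointwiseFixer {G : Type*} [Group G] (σ : Representation ℂ G E) (W : Submodule ℂ E) :
    Subgroup G where
  carrier := {g | ∀ w ∈ W, σ g w = w}
  one_mem' w _ := by simp
  mul_mem' {g h} hg hh w hw := by rw [map_mul, Module.End.mul_apply, hh w hw, hg w hw]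
  inv_mem' {g} hg w hw := by
    nth_rw 1 [← hg w hw]
    exact σ.inv_self_apply g w

theorem conj_mem_pointwiseFixer {G : Type*} [Group G] {σ : Representation ℂ G E}
    {W : Submodule ℂ E} {g h : G} (hh : ∀ w ∈ W, σ h⁻¹ w ∈ W) (hg : g ∈ pointwiseFixer σ W) :
    h * g * h⁻¹ ∈ pointwiseFixer σ W := fun w hw => by
  rw [map_mul, map_mul, Module.End.mul_apply, Module.End.mul_apply, hg _ (hh w hw)]
  exact σ.self_inv_apply h w

theorem exists_affineGL_eigenvector [Finite K] [Nontrivial l]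
    (σ : Representation ℂ (GL (m ⊕ l) K) E) {W : Submodule ℂ E} (hne : W ≠ ⊥)
    (hstable : ∀ B D, ∀ w ∈ W, σ (affineGL B D) w ∈ W)
    (htransvec : ∀ (i j : l) (hij : i ≠ j) t, ∀ w ∈ W,
      σ (affineGL 0 (SpecialLinearGroup.toGL (.transvection hij t))) w = w) :
    ∃ α : Kˣ →* ℂˣ, ∃ w ∈ W, w ≠ 0 ∧
      ∀ B D, σ (affineGL B D) w = (α (GeneralLinearGroup.det D) : ℂ) • w := by
  obtain ⟨s, hs⟩ := exists_monoidHom_det_apply_eq K l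
  let linear : GL l K →* GL (m ⊕ l) K :=
    { toFun := affineGL 0
      map_one' := affineGL_zero_one
      map_mul' D D' := by simp [affineGL_mul] }
  obtain ⟨α, w, hwW, hw₀, hw⟩ := exists_eigenvector (σ.comp (linear.comp s)) hne
    fun u w hw => hstable 0 (s u) w hw
  have hunimodular (B : Matrix m l K) {D : GL l K} (hD : GeneralLinearGroup.det D = 1) :
      affineGL B D ∈ pointwiseFixer σ W :=
    affineGL_mem_of_det_eq_one _
      (fun B _ => conj_mem_pointwiseFixer fun w hw => affineGL_inv B 1 ▸ hstable _ _ w hw)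
      htransvec B hD
  refine ⟨α, w, hwW, hw₀, fun B D => ?_⟩
  let u : Kˣ := GeneralLinearGroup.det D
  have hdecomp : affineGL B D = linear (s u) * affineGL B ((s u)⁻¹ * D) := by
    simp [linear, affineGL_mul]
  have hdet : GeneralLinearGroup.det ((s u)⁻¹ * D) = 1 := by simp [hs, u]
  rw [hdecomp, map_mul, Module.End.mul_apply, hunimodular B hdet w hwW]
  exact hw u

end AffineGroup

section Stabilizer

section CommRing

variable {K N m l : Type*} [CommRing K] [Fintype N] [DecidableEq N] [Fintype m] [DecidableEq m]
  [Fintype l] [DecidableEq l]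

/-- The isomorphism of general linear groups induced by a bijection of index types. -/
def reindexGL {N' : Type*} [Fintype N'] [DecidableEq N'] (e : N' ≃ N) : GL N' K ≃* GL N K :=
  Units.mapEquiv (Matrix.reindexAlgEquiv K K e).toMulEquiv

theorem reindexGL_affineGL_mul_stdCols (e : m ⊕ l ≃ N) (B : Matrix m l K) (D : GL l K) :
    (reindexGL e (affineGL B D) : Matrix N N K) * stdCols K (e ∘ Sum.inl) =
      stdCols K (e ∘ Sum.inl) := by
  rw [mul_stdCols]
  ext x y
  obtain ⟨x | x, rfl⟩ := e.surjective x <;>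
    simp [reindexGL, affineGL, stdCols, Matrix.one_apply]

theorem reindexGL_affineGL_transvection (e : m ⊕ l ≃ N) {i j : l} (hij : i ≠ j) (t : K) :
    (reindexGL e (affineGL 0 (SpecialLinearGroup.toGL (.transvection hij t))) : Matrix N N K) =
      transvection (e (.inr i)) (e (.inr j)) t := by
  ext x y
  obtain ⟨x | x, rfl⟩ := e.surjective x <;> obtain ⟨y | y, rfl⟩ := e.surjective y <;>
    simp [reindexGL, affineGL, transvection, single_apply, Matrix.one_apply,
      SpecialLinearGroup.transvection_coe]

theorem exists_reindexGL_affineGL_eq (e : m ⊕ l ≃ N) {g : GL N K}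
    (hg : (g : Matrix N N K) * stdCols K (e ∘ Sum.inl) = stdCols K (e ∘ Sum.inl)) :
    ∃ B D, reindexGL e (affineGL B D) = g ∧
      GeneralLinearGroup.det D = GeneralLinearGroup.det g := by
  let M : Matrix (m ⊕ l) (m ⊕ l) K := (g : Matrix N N K).submatrix e e
  have hM : M = fromBlocks 1 M.toBlocks₁₂ 0 M.toBlocks₂₂ := by
    refine eq_fromBlocks_of_mul_stdCols_inl ?_
    rw [mul_stdCols] at hg ⊢
    ext x y
    simpa [M, stdCols, Matrix.one_apply] using congrFun₂ hg (e x) y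
  have hdet : M.toBlocks₂₂.det = (g : Matrix N N K).det := by
    rw [← Matrix.det_submatrix_equiv_self e (g : Matrix N N K)]
    change _ = M.det
    rw [hM, det_fromBlocks_zero₂₁, det_one, one_mul, toBlocks_fromBlocks₂₂]
  let D : GL l K := GeneralLinearGroup.mk'' M.toBlocks₂₂ (hdet ▸ (GeneralLinearGroup.det g).isUnit)
  refine ⟨M.toBlocks₁₂, D, Units.ext ?_, Units.ext hdet⟩
  change Matrix.reindex e e (fromBlocks 1 M.toBlocks₁₂ 0 M.toBlocks₂₂) = g
  rw [← hM]
  simp [M]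

end CommRing

variable {K N l κ E : Type*} [Field K] [Fintype N] [DecidableEq N] [Fintype l] [DecidableEq l]
  [Fintype κ] [DecidableEq κ] [AddCommGroup E] [Module ℂ E]
  {χ₀ : AddChar K ℂ} {ρ : Representation ℂ (GL N K) E} {w : E}

theorem apply_reindexGL_affineGL_mem_stdFrameEigenspace (e : (κ ⊕ κ) ⊕ l ≃ N)
    (B : Matrix (κ ⊕ κ) l K) (D : GL l K) (hw : w ∈ stdFrameEigenspace χ₀ ρ (e ∘ Sum.inl)) :
    ρ (reindexGL e (affineGL B D)) w ∈ stdFrameEigenspace χ₀ ρ (e ∘ Sum.inl) := by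
  have hfix := reindexGL_affineGL_mul_stdCols e B D
  rw [stdCols_eq_fromCols, mul_fromCols] at hfix
  obtain ⟨hA, hC⟩ := fromCols_inj hfix
  exact apply_mem_frameEigenspace hA hC hw

variable [Finite K]

theorem apply_reindexGL_affineGL_transvection_eq_self (hχ₀ : χ₀ ≠ 1)
    (hmax : ∀ f : (κ ⊕ Unit) ⊕ (κ ⊕ Unit) → N, Function.Injective f →
      stdFrameEigenspace χ₀ ρ f = ⊥)
    (e : (κ ⊕ κ) ⊕ l ≃ N) {i j : l} (hij : i ≠ j) (t : K)
    (hw : w ∈ stdFrameEigenspace χ₀ ρ (e ∘ Sum.inl)) :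
    ρ (reindexGL e (affineGL 0 (SpecialLinearGroup.toGL (.transvection hij t)))) w = w := by
  let r : κ ⊕ Unit → N := e ∘ Sum.elim (Sum.inl ∘ Sum.inl) fun _ => .inr i
  let c : κ ⊕ Unit → N := e ∘ Sum.elim (Sum.inl ∘ Sum.inr) fun _ => .inr j
  have hrc : Function.Injective (Sum.elim r c) := by
    rw [← Sum.comp_elim]
    refine e.injective.comp ?_
    rintro ((_ | _) | (_ | _)) ((_ | _) | (_ | _)) <;> simp [hij, hij.symm]
  exact apply_eq_self_of_mem_stdFrameEigenspace hχ₀ hmax hrc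
    (reindexGL_affineGL_transvection e hij t) hw

theorem exists_det_eigenvector {κ l : Type*} [Fintype κ] [Nontrivial l] (hχ₀ : χ₀ ≠ 1)
    (hmax : ∀ f : (κ ⊕ Unit) ⊕ (κ ⊕ Unit) → N, Function.Injective f →
      stdFrameEigenspace χ₀ ρ f = ⊥)
    (e : (κ ⊕ κ) ⊕ l ≃ N) (hne : stdFrameEigenspace χ₀ ρ (e ∘ Sum.inl) ≠ ⊥) :
    ∃ α : Kˣ →* ℂˣ, ∃ w : E, w ≠ 0 ∧ ∀ g : GL N K,
      (g : Matrix N N K) * stdCols K (e ∘ Sum.inl) = stdCols K (e ∘ Sum.inl) →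
        ρ g w = (α (GeneralLinearGroup.det g) : ℂ) • w := by
  classical
  have := Finite.of_injective _ (e.injective.comp Sum.inr_injective)
  have := Fintype.ofFinite l
  obtain ⟨α, w, -, hw₀, hw⟩ := exists_affineGL_eigenvector (ρ.comp (reindexGL e).toMonoidHom) hne
    (fun B D w => apply_reindexGL_affineGL_mem_stdFrameEigenspace e B D)
    fun i j hij t w => apply_reindexGL_affineGL_transvection_eq_self hχ₀ hmax e hij t
  refine ⟨α, w, hw₀, fun g hg => ?_⟩
  obtain ⟨B, D, rfl, hdet⟩ := exists_reindexGL_affineGL_eq e hg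
  rw [← hdet]
  exact hw B D

end Stabilizer

section StandardSubgroups

variable {K : Type} [Field K] {n a b : ℕ}

theorem blockEmbed_eq_stdCols_mul_stdRows (ha : a ≤ n) (hb : n - b + b = n)
    (X : Matrix (Fin a) (Fin b) K) :
    blockEmbed n a b X = stdCols K (Fin.castLE ha) * X *
      stdRows K (Fin.cast hb ∘ Fin.natAdd (n - b)) := by
  ext i j
  simp only [blockEmbed, Matrix.of_apply, Matrix.mul_apply, stdCols, stdRows, submatrix_apply, id,
    Matrix.one_apply, ite_mul, one_mul, zero_mul, mul_ite, mul_one, mul_zero, Fin.ext_iff,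
    Function.comp_apply, Fin.val_cast, Fin.val_natAdd, Fin.val_castLE]
  by_cases hi : (i : ℕ) < a
  · have row_iff (x : Fin a) : (i : ℕ) = x ↔ ⟨i, hi⟩ = x := by rw [Fin.ext_iff]
    simp only [row_iff, Finset.sum_ite_eq, Finset.mem_univ, if_true, dif_pos hi]
    split_ifs with hj
    · rw [Finset.sum_eq_single ⟨j - (n - b), hj.2⟩]
      all_goals grind
    · exact (Finset.sum_eq_zero fun y _ => if_neg (by omega)).symm
  · rw [dif_neg hi]
    refine (Finset.sum_eq_zero fun y _ => ?_).symm
    rw [Finset.sum_eq_zero fun x _ => if_neg (by omega), ite_self]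

theorem natAdd_ne_castLE (hab : a + b ≤ n) (ha : a ≤ n) (hb : n - b + b = n) (j : Fin b)
    (i : Fin a) : (Fin.cast hb ∘ Fin.natAdd (n - b)) j ≠ Fin.castLE ha i := by
  simp only [Function.comp_apply, ne_eq, Fin.ext_iff, Fin.val_cast, Fin.val_natAdd, Fin.val_castLE]
  omega

theorem charAppears_iff_blockEigenspace_ne_bot {χ₀ : AddChar F ℂ}
    {π : Representation ℂ (GL (Fin n) F) V} (hab : a + b ≤ n) (ha : a ≤ n) (hb : n - b + b = n)
    {T : Matrix (Fin b) (Fin a) F} :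
    CharAppears χ₀ π hab T ↔ blockEigenspace χ₀ π (stdCols F (Fin.castLE ha))
      (stdRows F (Fin.cast hb ∘ Fin.natAdd (n - b))) T ≠ ⊥ := by
  have hval (X : Matrix (Fin a) (Fin b) F) : (uU n a b hab X : Matrix (Fin n) (Fin n) F) =
      1 + stdCols F (Fin.castLE ha) * X * stdRows F (Fin.cast hb ∘ Fin.natAdd (n - b)) :=
    congrArg (1 + ·) (blockEmbed_eq_stdCols_mul_stdRows ha hb X)
  rw [Submodule.ne_bot_iff]
  constructor
  · rintro ⟨v, hv₀, hv⟩
    refine ⟨v, fun X g hg => ?_, hv₀⟩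
    rw [Units.ext (hg.trans (hval X).symm), hv X]
  · rintro ⟨v, hv, hv₀⟩
    exact ⟨v, hv₀, fun X => hv X _ (hval X)⟩

theorem mul_stdCols_eq_self_of_mem_Hsub {ι : Type*} {m : ℕ} {g : GL (Fin n) K} (hg : g ∈ Hsub n m)
    {f : ι → Fin n} (hf : ∀ i, (f i : ℕ) < m) :
    (g : Matrix (Fin n) (Fin n) K) * stdCols K f = stdCols K f := by
  rw [mul_stdCols]
  ext x i
  have hcol := congrFun (hg (Pi.single (f i) 1) fun y hy =>
    Pi.single_eq_of_ne (by rintro rfl; exact (hf i).not_ge hy) _) x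
  simpa [stdCols, Matrix.one_apply, Pi.single_apply] using hcol

theorem mem_Hsub_of_mul_stdCols_eq_self {m : ℕ} (hm : m ≤ n) {g : GL (Fin n) K}
    (hg : (g : Matrix (Fin n) (Fin n) K) * stdCols K (Fin.castLE hm) =
      stdCols K (Fin.castLE hm)) : g ∈ Hsub n m := by
  rw [mul_stdCols] at hg
  intro v hv
  nth_rw 2 [← Matrix.one_mulVec v]
  ext x
  simp only [Matrix.mulVec, dotProduct]
  refine Finset.sum_congr rfl fun y _ => ?_
  by_cases hy : (y : ℕ) < m
  · exact congrArg (· * v y) (congrFun₂ hg x ⟨y, hy⟩)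
  · rw [hv y (not_lt.1 hy), mul_zero, mul_zero]

theorem exists_sum_equiv_fin {k : ℕ} (hk : 2 * k ≤ n) :
    ∃ e : (Fin k ⊕ Fin k) ⊕ Fin (n - 2 * k) ≃ Fin n, ∀ x, (e (.inl x) : ℕ) < 2 * k := by
  refine ⟨((finSumFinEquiv.sumCongr (.refl _)).trans finSumFinEquiv).trans (finCongr (by omega)),
    fun x => by simp [two_mul]⟩

end StandardSubgroups

section Frobenius

variable {K : Type} [Field K] [Finite K]

theorem occurs_permRep_of_hasFixedVec {n m : ℕ} (hm : m ≤ n)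
    {σ : Representation ℂ (GL (Fin n) K) V} (hfix : HasFixedVec σ (Hsub n m)) :
    Occurs σ (permRep n m) := by
  classical
  have := Fintype.ofFinite K
  obtain ⟨v, hv₀, hv⟩ := hfix
  obtain ⟨lam, hlam⟩ : ∃ lam : Module.Dual ℂ V, lam v ≠ 0 := by
    by_contra! h
    exact hv₀ ((Module.forall_dual_apply_eq_zero_iff ℂ v).1 h)
  -- The intertwiner is `w ↦ (g * base ↦ lam (σ g⁻¹ w))`, summed over the stabilizer of `base`.
  let base : Matrix (Fin n) (Fin m) K := stdCols K (Fin.castLE hm)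
  let fiber (T : Matrix (Fin n) (Fin m) K) : Finset (GL (Fin n) K) :=
    {g | (g : Matrix (Fin n) (Fin n) K) * base = T}
  let φ : V →ₗ[ℂ] (Matrix (Fin n) (Fin m) K → ℂ) :=
    LinearMap.pi fun T => ∑ g ∈ fiber T, lam ∘ₗ σ g⁻¹
  have φ_apply (w : V) (T : Matrix (Fin n) (Fin m) K) :
      φ w T = ∑ g ∈ fiber T, lam (σ g⁻¹ w) := by simp [φ]
  refine ⟨φ, fun hφ => ?_, fun x => LinearMap.ext fun w => funext fun T => ?_⟩
  · have hval : φ v base = (fiber base).card • lam v := by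
      rw [φ_apply]
      refine Finset.sum_eq_card_nsmul fun g hg => ?_
      rw [hv _ (inv_mem (mem_Hsub_of_mul_stdCols_eq_self hm (Finset.mem_filter.1 hg).2))]
    have hone : 1 ∈ fiber base := by simp [fiber]
    rw [hφ, LinearMap.zero_apply, Pi.zero_apply, eq_comm, smul_eq_zero] at hval
    exact hval.elim (Finset.card_ne_zero_of_mem hone) hlam
  · change φ (σ x w) T = φ w (((x⁻¹ : GL (Fin n) K) : Matrix (Fin n) (Fin n) K) * T)
    rw [φ_apply, φ_apply]
    refine Finset.sum_equiv (Equiv.mulLeft x⁻¹) (fun g => ?_) fun g _ => ?_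
    · simp only [fiber, Finset.mem_filter_univ, Equiv.coe_mulLeft, Units.val_mul, Matrix.mul_assoc]
      refine ⟨congrArg _, fun h => ?_⟩
      simpa only [← Matrix.mul_assoc, Units.mul_inv, Matrix.one_mul] using
        congrArg ((x : Matrix (Fin n) (Fin n) K) * ·) h
    · simp

end Frobenius

section RankAB

variable {χ₀ : AddChar F ℂ} {n a b k : ℕ} {ρ : Representation ℂ (GL (Fin n) F) V}

theorem stdFrameEigenspace_ne_bot_of_hasRankAB (hχ₀ : χ₀ ≠ 1) {hab : a + b ≤ n}
    (hrk : HasRankAB χ₀ ρ hab k) {f : Fin k ⊕ Fin k → Fin n} (hf : Function.Injective f) :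
    stdFrameEigenspace χ₀ ρ f ≠ ⊥ := by
  have ha : a ≤ n := by omega
  have hb : n - b + b = n := by omega
  obtain ⟨T, hT, hTk⟩ := hrk.1
  exact stdFrameEigenspace_ne_bot_of_rank hχ₀
    (stdRows_mul_stdCols_eq_zero (natAdd_ne_castLE hab ha hb))
    (stdRows_mul_stdCols_self (Fin.castLE_injective ha)) (by rw [hTk, Fintype.card_fin])
    ((charAppears_iff_blockEigenspace_ne_bot hab ha hb).1 hT) hf

theorem stdFrameEigenspace_eq_bot_of_hasRankAB (hχ₀ : χ₀ ≠ 1) {hab : a + b ≤ n}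
    (hrk : HasRankAB χ₀ ρ hab k) {κ : Type*} [Fintype κ] (hk : k < Fintype.card κ)
    (hκa : Fintype.card κ ≤ a) (hκb : Fintype.card κ ≤ b) {f : κ ⊕ κ → Fin n}
    (hf : Function.Injective f) : stdFrameEigenspace χ₀ ρ f = ⊥ := by
  by_contra hne
  have ha : a ≤ n := by omega
  have hb : n - b + b = n := by omega
  obtain ⟨T, hT, hTκ⟩ := exists_card_le_rank_of_stdFrameEigenspace_ne_bot hχ₀
    (Fin.castLE_injective ha) ((Fin.cast_injective hb).comp (Fin.natAdd_injective _ _))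
    (natAdd_ne_castLE hab ha hb) (by rwa [Fintype.card_fin]) (by rwa [Fintype.card_fin]) hf hne
  have hTk := hrk.2 T ((charAppears_iff_blockEigenspace_ne_bot hab ha hb).2 hT)
  omega

theorem exists_det_eigenvector_Hsub (hχ₀ : χ₀ ≠ 1) {hab : a + b ≤ n}
    (hrk : HasRankAB χ₀ ρ hab k) (hka : k < a) (hkb : k < b) :
    ∃ α : Fˣ →* ℂˣ, ∃ w : V, w ≠ 0 ∧ ∀ g ∈ Hsub n (2 * k), ρ g w = (α (detHom n g) : ℂ) • w := by
  have : Nontrivial (Fin (n - 2 * k)) := Fin.nontrivial_iff_two_le.2 (by omega)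
  obtain ⟨e, he⟩ := exists_sum_equiv_fin (n := n) (k := k) (by omega)
  have hcard : Fintype.card (Fin k ⊕ Unit) = k + 1 := by simp
  obtain ⟨α, w, hw₀, hw⟩ := exists_det_eigenvector hχ₀
    (fun f hf => stdFrameEigenspace_eq_bot_of_hasRankAB (κ := Fin k ⊕ Unit) hχ₀ hrk
      (by omega) (by omega) (by omega) hf)
    e (stdFrameEigenspace_ne_bot_of_hasRankAB hχ₀ hrk (e.injective.comp Sum.inl_injective))
  exact ⟨α, w, hw₀, fun g hg => hw g (mul_stdCols_eq_self_of_mem_Hsub hg he)⟩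

end RankAB

section DetEigenvector

variable {K : Type} [Field K] {n : ℕ} {ρ : Representation ℂ (GL (Fin n) K) V}
  {H : Subgroup (GL (Fin n) K)} {α : Kˣ →* ℂˣ} {w : V}

theorem hasEigenVec_of_det (hw₀ : w ≠ 0) (hw : ∀ g ∈ H, ρ g w = (α (detHom n g) : ℂ) • w) :
    HasEigenVec ρ H :=
  ⟨(Units.coeHom ℂ).comp (α.comp ((detHom n).comp H.subtype)), w, hw₀, fun g => hw g g.2⟩

theorem hasFixedVec_twistRep_inv (hw₀ : w ≠ 0)
    (hw : ∀ g ∈ H, ρ g w = (α (detHom n g) : ℂ) • w) : HasFixedVec (twistRep α⁻¹ ρ) H := by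
  refine ⟨w, hw₀, fun g hg => ?_⟩
  change (((α⁻¹) (detHom n g) : ℂˣ) : ℂ) • ρ g w = w
  rw [hw g hg, smul_smul, MonoidHom.inv_apply, Units.inv_mul, one_smul]

end DetEigenvector

theorem eigenvector_of_low_uRank_general (χ₀ : AddChar F ℂ) (hχ₀ : χ₀ ≠ 1) {n a b k : ℕ}
    (hab : a + b ≤ n) (ρ : Representation ℂ (GL (Fin n) F) V) (hrk : HasRankAB χ₀ ρ hab k)
    (hka : k < a) (hkb : k < b) :
    HasEigenVec ρ (Hsub n (2 * k)) ∧
      ∃ α : Fˣ →* ℂˣ, Occurs (twistRep α ρ) (permRep n (2 * k)) := by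
  obtain ⟨α, w, hw₀, hw⟩ := exists_det_eigenvector_Hsub hχ₀ hrk hka hkb
  exact ⟨hasEigenVec_of_det hw₀ hw, α⁻¹,
    occurs_permRep_of_hasFixedVec (by omega) (hasFixedVec_twistRep_inv hw₀ hw)⟩

/-- Proposition 11.1. -/
theorem eigenvector_of_low_uRank
    (χ₀ : AddChar F ℂ) (hχ₀ : χ₀ ≠ 1)
    {n : ℕ} {V : Type} [AddCommGroup V] [Module ℂ V] [FiniteDimensional ℂ V]
    (ρ : Representation ℂ (GL (Fin n) F) V) (hρ : IsIrred ρ)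
    {k : ℕ} (hrk : HasURank χ₀ ρ k) (hk : k < n / 2) :
    HasEigenVec ρ (Hsub n (2 * k)) ∧
      -- equivalently: the tensor rank of `ρ` is at most `2k`
      sInf {j : ℕ | ∃ α : Fˣ →* ℂˣ, Occurs (twistRep α ρ) (permRep n j)} ≤ 2 * k := by
  exact (eigenvector_of_low_uRank_general χ₀ hχ₀ _ ρ hrk hk (by omega)).imp_right Nat.sInf_le

end Stmt17
end

section
/- Let ρ be an irreducible complex representation of GL_n(F_q) of U-rank k with k < n/4. Then the tensor rank of ρ equals k; equivalently, the least j for which ρ has a nonzero H_j-eigenvector is j = k. -/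
/-!
STATEMENT 18: An irreducible representation ρ of GL_n(F_q) of U-rank k with
k < n/4 has tensor rank exactly k; equivalently, the least j for which ρ has a
nonzero H_j-eigenvector is j = k.
-/

open Matrix
open scoped MatrixGroups

namespace Stmt18

variable {F : Type} [Field F] [Fintype F] [DecidableEq F]

/-- The `n × n` matrix with the `a × b` matrix `X` placed in the block occupying
rows `0,…,a-1` and columns `n-b,…,n-1`, and `0` elsewhere. -/
def blockEmbed (n a b : ℕ) (X : Matrix (Fin a) (Fin b) F) : Matrix (Fin n) (Fin n) F :=
  Matrix.of fun i j =>
    if hi : (i : ℕ) < a then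
      if hj : n - b ≤ (j : ℕ) ∧ (j : ℕ) - (n - b) < b then
        X ⟨i, hi⟩ ⟨(j : ℕ) - (n - b), hj.2⟩
      else 0
    else 0

lemma blockEmbed_mul_blockEmbed {n a b : ℕ} (hab : a + b ≤ n)
    (X Y : Matrix (Fin a) (Fin b) F) :
    blockEmbed n a b X * blockEmbed n a b Y = 0 := by
  ext i j
  rw [Matrix.mul_apply, Matrix.zero_apply]
  apply Finset.sum_eq_zero
  intro k _
  rcases Nat.lt_or_ge (k : ℕ) a with hk | hk
  · have h2 : ¬ (n - b ≤ (k : ℕ) ∧ (k : ℕ) - (n - b) < b) := by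
      rintro ⟨h, -⟩; omega
    have hz : blockEmbed n a b X i k = 0 := by
      unfold blockEmbed
      by_cases hi : (i : ℕ) < a
      · rw [Matrix.of_apply, dif_pos hi, dif_neg h2]
      · rw [Matrix.of_apply, dif_neg hi]
    rw [hz, zero_mul]
  · have hz : blockEmbed n a b Y k j = 0 := by
      unfold blockEmbed
      rw [Matrix.of_apply, dif_neg (Nat.not_lt.2 hk)]
    rw [hz, mul_zero]

/-- The element `I_n + blockEmbed X` of `GL_n(F)`; for `a + b ≤ n` these elements
form the abelian subgroup `U_{a,b}` (identified with `(M_{a,b}(F), +)`). -/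
def uU (n a b : ℕ) (hab : a + b ≤ n) (X : Matrix (Fin a) (Fin b) F) : GL (Fin n) F where
  val := 1 + blockEmbed n a b X
  inv := 1 - blockEmbed n a b X
  val_inv := by
    have h := blockEmbed_mul_blockEmbed hab X X
    have e : (1 + blockEmbed n a b X) * (1 - blockEmbed n a b X)
        = 1 - blockEmbed n a b X * blockEmbed n a b X := by noncomm_ring
    rw [e, h, sub_zero]
  inv_val := by
    have h := blockEmbed_mul_blockEmbed hab X X
    have e : (1 - blockEmbed n a b X) * (1 + blockEmbed n a b X)
        = 1 - blockEmbed n a b X * blockEmbed n a b X := by noncomm_ring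
    rw [e, h, sub_zero]

variable {V : Type} [AddCommGroup V] [Module ℂ V]

/-- The character `γ_T` of `U_{a,b} ≅ M_{a,b}(F_q)`, `γ_T(X) = χ₀(trace (T*X))`,
appears in (the restriction to `U_{a,b}` of) the representation `π`, i.e. its
eigenspace is nonzero. -/
def CharAppears (χ₀ : AddChar F ℂ) {n : ℕ} (π : Representation ℂ (GL (Fin n) F) V)
    {a b : ℕ} (hab : a + b ≤ n) (T : Matrix (Fin b) (Fin a) F) : Prop :=
  ∃ v : V, v ≠ 0 ∧ ∀ X : Matrix (Fin a) (Fin b) F,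
    π (uU n a b hab X) v = χ₀ ((T * X).trace) • v

/-- `rank_{a,b}(π) = k` : the maximal rank of a character of `U_{a,b}`
appearing in `π|U_{a,b}` is `k`.  (The rank of `γ_T` is `rank T`.) -/
def HasRankAB (χ₀ : AddChar F ℂ) {n : ℕ} (π : Representation ℂ (GL (Fin n) F) V)
    {a b : ℕ} (hab : a + b ≤ n) (k : ℕ) : Prop :=
  (∃ T, CharAppears χ₀ π hab T ∧ T.rank = k) ∧
  (∀ T, CharAppears χ₀ π hab T → T.rank ≤ k)


/-- The `U`-rank of a representation `π` of `GL_n(F_q)` equals `k`: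
this is `rank_{⌊n/2⌋,⌈n/2⌉}(π) = k`. -/
def HasURank (χ₀ : AddChar F ℂ) {n : ℕ} (π : Representation ℂ (GL (Fin n) F) V) (k : ℕ) : Prop :=
  HasRankAB χ₀ π (show n / 2 + (n - n / 2) ≤ n by omega) k

/-- The subgroup `H_k ≤ GL_n(F)` of elements fixing the first `k` standard
basis vectors of `F^n` (equivalently, fixing pointwise every vector supported
in the first `k` coordinates). -/
def Hsub (n k : ℕ) : Subgroup (GL (Fin n) F) where
  carrier := {g | ∀ v : Fin n → F, (∀ i : Fin n, k ≤ (i : ℕ) → v i = 0) →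
      (↑g : Matrix (Fin n) (Fin n) F) *ᵥ v = v}
  one_mem' := by intro v hv; simp
  mul_mem' := by
    intro g h hg hh v hv
    rw [Units.val_mul, ← Matrix.mulVec_mulVec, hh v hv, hg v hv]
  inv_mem' := by
    intro g hg v hv
    calc (↑g⁻¹ : Matrix (Fin n) (Fin n) F) *ᵥ v
        = (↑g⁻¹ : Matrix (Fin n) (Fin n) F) *ᵥ ((↑g : Matrix (Fin n) (Fin n) F) *ᵥ v) := by
          rw [hg v hv]
      _ = ((↑g⁻¹ * ↑g : Matrix (Fin n) (Fin n) F)) *ᵥ v := Matrix.mulVec_mulVec ..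
      _ = v := by rw [← Units.val_mul, inv_mul_cancel, Units.val_one, Matrix.one_mulVec]

/-- The permutation representation of `GL_n(F)` on complex-valued functions on
`M_{n,k}(F)`, by left matrix multiplication: `(g · f)(T) = f (g⁻¹ * T)`. -/
def permRep (n k : ℕ) : Representation ℂ (GL (Fin n) F) (Matrix (Fin n) (Fin k) F → ℂ) where
  toFun g :=
    { toFun := fun f T => f ((↑g⁻¹ : Matrix (Fin n) (Fin n) F) * T)
      map_add' := fun _ _ => rfl
      map_smul' := fun _ _ => rfl }
  map_one' := by
    refine LinearMap.ext fun f => funext fun T => ?_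
    show f ((↑(1 : GL (Fin n) F)⁻¹ : Matrix (Fin n) (Fin n) F) * T) = f T
    congr 1
    simp
  map_mul' := by
    intro g h
    refine LinearMap.ext fun f => funext fun T => ?_
    show f _ = f _
    congr 1
    simp [_root_.mul_inv_rev, Units.val_mul, Matrix.mul_assoc]

/-- The determinant character `GL_n(F) → Fˣ`. -/
def detHom (n : ℕ) : GL (Fin n) F →* Fˣ :=
  Units.map Matrix.detMonoidHom

/-- The twist `(α ∘ det) ⊗ ρ` of a representation `ρ` of `GL_n(F)` by the
linear character `α ∘ det`. -/
def twistRep {n : ℕ} {V : Type} [AddCommGroup V] [Module ℂ V]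
    (α : Fˣ →* ℂˣ) (ρ : Representation ℂ (GL (Fin n) F) V) :
    Representation ℂ (GL (Fin n) F) V where
  toFun g := ((α (detHom n g) : ℂˣ) : ℂ) • ρ g
  map_one' := by simp
  map_mul' := by
    intro g h
    show ((α (detHom n (g * h)) : ℂˣ) : ℂ) • ρ (g * h)
        = (((α (detHom n g) : ℂˣ) : ℂ) • ρ g) * (((α (detHom n h) : ℂˣ) : ℂ) • ρ h)
    rw [smul_mul_assoc, mul_smul_comm, smul_smul, ← Units.val_mul, ← _root_.map_mul,
      ← _root_.map_mul, _root_.map_mul ρ]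

/-- `ρ` occurs in `σ` : there is a nonzero intertwining operator from `ρ` to
`σ`.  (For irreducible `ρ` this says exactly that `ρ` occurs as a
subrepresentation of `σ`.) -/
def Occurs {G : Type} [Group G] {V W : Type} [AddCommGroup V] [Module ℂ V]
    [AddCommGroup W] [Module ℂ W]
    (ρ : Representation ℂ G V) (σ : Representation ℂ G W) : Prop :=
  ∃ φ : V →ₗ[ℂ] W, φ ≠ 0 ∧ ∀ g, φ.comp (ρ g) = (σ g).comp φ

/-- `ρ` has a nonzero vector fixed by the subgroup `H`. -/
def HasFixedVec {G : Type} [Group G] {V : Type} [AddCommGroup V] [Module ℂ V]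
    (ρ : Representation ℂ G V) (H : Subgroup G) : Prop :=
  ∃ v : V, v ≠ 0 ∧ ∀ h ∈ H, ρ h v = v

/-- `ρ` has a nonzero eigenvector for the subgroup `H`: a nonzero `v` with
`ρ(h) v = c(h) • v` for all `h ∈ H`, for some character `c` of `H`. -/
def HasEigenVec {G : Type} [Group G] {V : Type} [AddCommGroup V] [Module ℂ V]
    (ρ : Representation ℂ G V) (H : Subgroup G) : Prop :=
  ∃ c : H →* ℂ, ∃ v : V, v ≠ 0 ∧ ∀ h : H, ρ (h : G) v = c h • v

/-- Irreducibility of a representation: the space is nonzero, and the only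
invariant subspaces are `⊥` and `⊤`. -/
def IsIrred {G : Type} [Group G] {V : Type} [AddCommGroup V] [Module ℂ V]
    (ρ : Representation ℂ G V) : Prop :=
  (∃ v : V, v ≠ 0) ∧
    ∀ p : Submodule ℂ V, (∀ g : G, ∀ v ∈ p, ρ g v ∈ p) → p = ⊥ ∨ p = ⊤

/-!
The eigenspace of a rank `k` character of `U_{k,n-k}` in `ρ` is nonzero and stable under the
stabilizer of the first `k` and the last `k` basis vectors. Since no character of
`U_{⌊n/2⌋,⌈n/2⌉}` of rank above `k` occurs in `ρ`, one transvection of that stabilizer acts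
trivially on the eigenspace, hence so do all of them, and what remains is a torus acting through
the determinant. By Frobenius reciprocity a twist of `ρ` therefore occurs in the functions on
`n × 2k` matrices.

The endomorphisms of the functions on `n × (m + 1)` matrices are spanned by operators indexed by
the linear relations between the columns of two such matrices. All but those coming from
`GL_{m+1}` factor through functions on `n × m` matrices, where only characters of rank at most `m`
occur. So an irreducible representation in which no character of rank `m + 1` occurs descends from
`m + 1` to `m`, and iterating brings the twist of `ρ` down from `2k` to `k`; the same rank bound
shows that it descends no further.
-/

section Transvections

variable {K : Type*} [Field K] {ι : Type*} [Fintype ι] [DecidableEq ι]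

/-- The transvection `1 + c · E_{ij}`, `i ≠ j`, as an element of `GL ι K`. -/
abbrev glTransvection {i j : ι} (hij : i ≠ j) (c : K) : GL ι K :=
  SpecialLinearGroup.toGL (SpecialLinearGroup.transvection hij c)

lemma glTransvection_mulVec {i j : ι} (hij : i ≠ j) (c : K) (x : ι → K) :
    (glTransvection hij c : Matrix ι ι K) *ᵥ x = x + Pi.single i (c * x j) := by
  rw [SpecialLinearGroup.coe_GL_coe_matrix, SpecialLinearGroup.transvection_coe, add_mulVec,
    one_mulVec, single_mulVec_eq, ← Pi.single_smul, smul_eq_mul, mul_one]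

lemma glTransvection_mul_glTransvection {i l j : ι} (hil : i ≠ l) (hlj : l ≠ j) (hij : i ≠ j)
    (c d : K) :
    glTransvection hil c * glTransvection hlj d =
      glTransvection hij (c * d) * glTransvection hlj d * glTransvection hil c := by
  ext1
  simp only [Units.val_mul, SpecialLinearGroup.coe_GL_coe_matrix,
    SpecialLinearGroup.transvection_coe]
  simp only [mul_add, add_mul, mul_one, one_mul, single_mul_single_same,
    single_mul_single_of_ne _ _ _ _ hij.symm, single_mul_single_of_ne _ _ _ _ hlj.symm, zero_mul]
  abel

variable (K) in
/-- The pointwise stabilizer in `GL ι K` of the standard basis vectors indexed by `I`. -/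
def basisStabilizer (I : Set ι) : Subgroup (GL ι K) where
  carrier := {g | ∀ i ∈ I, (g : Matrix ι ι K) *ᵥ Pi.single i 1 = Pi.single i 1}
  one_mem' := fun i _ ↦ by rw [Units.val_one, one_mulVec]
  mul_mem' := fun {g h} hg hh i hi ↦ by
    rw [Units.val_mul, ← mulVec_mulVec, hh i hi, hg i hi]
  inv_mem' := fun {g} hg i hi ↦ by
    conv_lhs => rw [← hg i hi, mulVec_mulVec, ← Units.val_mul, inv_mul_cancel, Units.val_one,
      one_mulVec]

lemma mem_basisStabilizer {I : Set ι} {g : GL ι K} :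
    g ∈ basisStabilizer K I ↔ ∀ i ∈ I, (g : Matrix ι ι K) *ᵥ Pi.single i 1 = Pi.single i 1 :=
  Iff.rfl

lemma mulVec_eq_self_of_mem_basisStabilizer {I : Set ι} {g : GL ι K} (hg : g ∈ basisStabilizer K I)
    {x : ι → K} (hx : ∀ i ∉ I, x i = 0) : (g : Matrix ι ι K) *ᵥ x = x := by
  conv_lhs => rw [← Finset.univ_sum_single x, mulVec_sum]
  conv_rhs => rw [← Finset.univ_sum_single x]
  refine Finset.sum_congr rfl fun i _ ↦ ?_
  by_cases hi : i ∈ I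
  · rw [← mul_one (x i), ← smul_eq_mul, Pi.single_smul, mulVec_smul, hg i hi]
  · rw [hx i hi, Pi.single_zero, mulVec_zero]

lemma exists_notMem_mulVec_single_ne_zero {I : Set ι} {g : GL ι K} (hg : g ∈ basisStabilizer K I)
    {j : ι} (hj : j ∉ I) : ∃ l ∉ I, ((g : Matrix ι ι K) *ᵥ Pi.single j 1) l ≠ 0 := by
  by_contra! hvanish
  have hfix : (g : Matrix ι ι K) *ᵥ Pi.single j 1 = Pi.single j 1 :=
    mulVec_injective_of_isUnit g.isUnit (mulVec_eq_self_of_mem_basisStabilizer hg hvanish)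
  simpa [hfix] using hvanish j hj

variable (K) in
/-- The subgroup generated by the transvections fixing the basis vectors indexed by `I`. -/
def transvectionSubgroup (I : Set ι) : Subgroup (GL ι K) :=
  Subgroup.closure {g | ∃ (i j : ι) (hij : i ≠ j) (c : K), j ∉ I ∧ glTransvection hij c = g}

lemma transvectionSubgroup_le_iff {I : Set ι} {N : Subgroup (GL ι K)} :
    transvectionSubgroup K I ≤ N ↔
      ∀ ⦃i j : ι⦄ (hij : i ≠ j) (c : K), j ∉ I → glTransvection hij c ∈ N := by
  rw [transvectionSubgroup, Subgroup.closure_le]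
  exact ⟨fun h i j hij c hj ↦ h ⟨i, j, hij, c, hj, rfl⟩,
    fun h _ ⟨i, j, hij, c, hj, hg⟩ ↦ hg ▸ h hij c hj⟩

lemma glTransvection_mem_transvectionSubgroup {I : Set ι} {i j : ι} (hij : i ≠ j) (hj : j ∉ I)
    (c : K) : glTransvection hij c ∈ transvectionSubgroup K I :=
  transvectionSubgroup_le_iff.1 le_rfl hij c hj

lemma transvectionSubgroup_anti {I J : Set ι} (hIJ : I ⊆ J) :
    transvectionSubgroup K J ≤ transvectionSubgroup K I :=
  transvectionSubgroup_le_iff.2 fun _ _ hij c hj ↦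
    glTransvection_mem_transvectionSubgroup hij (fun h ↦ hj (hIJ h)) c

lemma transvectionSubgroup_le_basisStabilizer (I : Set ι) :
    transvectionSubgroup K I ≤ basisStabilizer K I :=
  transvectionSubgroup_le_iff.2 fun i j hij c hj l hl ↦ by
    have hjl : j ≠ l := fun h ↦ hj (h ▸ hl)
    rw [glTransvection_mulVec, Pi.single_eq_of_ne hjl, mul_zero, Pi.single_zero, add_zero]

lemma det_eq_one_of_mem_transvectionSubgroup {I : Set ι} {g : GL ι K}
    (hg : g ∈ transvectionSubgroup K I) : GeneralLinearGroup.det g = 1 :=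
  (transvectionSubgroup_le_iff (N := GeneralLinearGroup.det.ker)).2
    (fun _ _ hij c _ ↦ Units.ext (det_transvection_of_ne _ _ hij c)) hg

lemma exists_mulVec_eq_zero_on_finset {I : Set ι} {j : ι} (hj : j ∉ I) {x : ι → K} (hx : x j = 1)
    {s : Finset ι} (hs : j ∉ s) :
    ∃ u ∈ transvectionSubgroup K I,
      (u : Matrix ι ι K) *ᵥ x = fun i ↦ if i ∈ s then 0 else x i := by
  induction s using Finset.induction_on with
  | empty => exact ⟨1, one_mem _, by simp⟩
  | insert i s his ih =>
    rw [Finset.mem_insert, not_or] at hs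
    obtain ⟨u, hu, hux⟩ := ih hs.2
    refine ⟨glTransvection (Ne.symm hs.1) (-x i) * u,
      mul_mem (glTransvection_mem_transvectionSubgroup _ hj _) hu, ?_⟩
    rw [Units.val_mul, ← mulVec_mulVec, hux, glTransvection_mulVec]
    ext r
    by_cases hr : r = i
    · subst hr; simp [his, hs.2, hx]
    · simp [hr]

lemma exists_mulVec_eq_single_of_apply_eq_one {I : Set ι} {j : ι} (hj : j ∉ I) {x : ι → K}
    (hx : x j = 1) :
    ∃ u ∈ transvectionSubgroup K I, (u : Matrix ι ι K) *ᵥ x = Pi.single j 1 := by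
  obtain ⟨u, hu, hux⟩ := exists_mulVec_eq_zero_on_finset hj hx (Finset.notMem_erase j Finset.univ)
  refine ⟨u, hu, hux.trans (funext fun r ↦ ?_)⟩
  by_cases hr : r = j
  · subst hr; simp [hx]
  · simp [hr]

lemma exists_mulVec_apply_eq_one {I : Set ι} {j l : ι} (hjl : j ≠ l) (hl : l ∉ I) {x : ι → K}
    (hx : x l ≠ 0) :
    ∃ u ∈ transvectionSubgroup K I,
      ((u : Matrix ι ι K) *ᵥ x) j = 1 ∧ ((u : Matrix ι ι K) *ᵥ x) l = x l := by
  refine ⟨glTransvection hjl ((1 - x j) / x l), glTransvection_mem_transvectionSubgroup hjl hl _,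
    ?_, ?_⟩
  · rw [glTransvection_mulVec, Pi.add_apply, Pi.single_eq_same, div_mul_cancel₀ _ hx,
      add_sub_cancel]
  · rw [glTransvection_mulVec, Pi.add_apply, Pi.single_eq_of_ne hjl.symm, add_zero]

lemma exists_mulVec_eq_single_of_apply_ne_zero {I : Set ι} {i j l : ι} (hij : i ≠ j) (hi : i ∉ I)
    (hj : j ∉ I) (hl : l ∉ I) {x : ι → K} (hx : x l ≠ 0) :
    ∃ u ∈ transvectionSubgroup K I, (u : Matrix ι ι K) *ᵥ x = Pi.single j 1 := by
  obtain ⟨u, hu, m, hmj, hm, hum⟩ : ∃ u ∈ transvectionSubgroup K I,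
      ∃ m, m ≠ j ∧ m ∉ I ∧ ((u : Matrix ι ι K) *ᵥ x) m ≠ 0 := by
    by_cases hlj : l = j
    · subst hlj
      obtain ⟨u, hu, hui, -⟩ := exists_mulVec_apply_eq_one hij hl hx
      exact ⟨u, hu, i, hij, hi, hui ▸ one_ne_zero⟩
    · exact ⟨1, one_mem _, l, hlj, hl, by simpa using hx⟩
  obtain ⟨t, ht, htj, -⟩ := exists_mulVec_apply_eq_one hmj.symm hm hum
  obtain ⟨w, hw, hwx⟩ := exists_mulVec_eq_single_of_apply_eq_one hj htj
  refine ⟨w * t * u, mul_mem (mul_mem hw ht) hu, ?_⟩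
  rw [Units.val_mul, Units.val_mul, ← mulVec_mulVec, ← mulVec_mulVec, hwx]

/-- The diagonal matrix with entry `d` at position `i` and `1` elsewhere. -/
def dilation (i : ι) : Kˣ →* GL ι K :=
  (Units.map (diagonalRingHom ι K).toMonoidHom).comp
    (MulEquiv.piUnits.symm.toMonoidHom.comp (MonoidHom.mulSingle (fun _ ↦ Kˣ) i))

lemma coe_dilation (i : ι) (d : Kˣ) :
    (dilation i d : Matrix ι ι K) = diagonal (Pi.mulSingle i (d : K)) := by
  refine congrArg diagonal (funext fun r ↦ ?_)
  by_cases hr : r = i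
  · subst hr; simp [MulEquiv.piUnits]
  · simp [MulEquiv.piUnits, hr]

lemma det_dilation (i : ι) (d : Kˣ) : GeneralLinearGroup.det (dilation i d) = d := by
  ext1
  rw [GeneralLinearGroup.val_det_apply, coe_dilation, det_diagonal, Finset.prod_pi_mulSingle']
  simp

lemma dilation_mulVec_single_self (i : ι) (d : Kˣ) :
    (dilation i d : Matrix ι ι K) *ᵥ Pi.single i 1 = (d : K) • Pi.single i 1 := by
  ext r
  rw [coe_dilation, mulVec_diagonal]
  by_cases hr : r = i
  · subst hr; simp
  · simp [hr]

lemma dilation_mem_basisStabilizer {I : Set ι} {i : ι} (hi : i ∉ I) (d : Kˣ) :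
    dilation i d ∈ basisStabilizer K I := fun l hl ↦ by
  have hli : l ≠ i := fun h ↦ hi (h ▸ hl)
  ext r
  rw [coe_dilation, mulVec_diagonal]
  by_cases hr : r = l
  · subst hr; simp [hli]
  · simp [hr]

lemma basisStabilizer_univ : basisStabilizer K (Set.univ : Set ι) = ⊥ := by
  refine (Subgroup.eq_bot_iff_forall _).2 fun g hg ↦ Units.ext ?_
  ext r i
  simpa [one_apply, Pi.single_apply] using congrFun (hg i (Set.mem_univ i)) r

lemma mul_mem_basisStabilizer_insert {I : Set ι} {j : ι} {u g : GL ι K}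
    (hu : u ∈ basisStabilizer K I) (hg : g ∈ basisStabilizer K I)
    (hug : (u : Matrix ι ι K) *ᵥ ((g : Matrix ι ι K) *ᵥ Pi.single j 1) = Pi.single j 1) :
    u * g ∈ basisStabilizer K (insert j I) := by
  rintro i (rfl | hi)
  · rw [Units.val_mul, ← mulVec_mulVec, hug]
  · exact mul_mem hu hg i hi

lemma exists_eq_mul_dilation_of_compl_eq_singleton {I : Set ι} {i : ι} (hI : Iᶜ = {i}) {g : GL ι K}
    (hg : g ∈ basisStabilizer K I) :
    ∃ s ∈ transvectionSubgroup K I, ∃ d : Kˣ, g = s * dilation i d := by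
  have hi : i ∉ I := by rw [← Set.mem_compl_iff, hI]; rfl
  obtain ⟨l, hl, hgl⟩ := exists_notMem_mulVec_single_ne_zero hg hi
  obtain rfl : l = i := by rwa [← Set.mem_compl_iff, hI] at hl
  set d : Kˣ := Units.mk0 _ hgl
  have hcol : ((g * dilation l d⁻¹ : GL ι K) : Matrix ι ι K) *ᵥ Pi.single l 1 =
      (d⁻¹ : K) • (g : Matrix ι ι K) *ᵥ Pi.single l 1 := by
    rw [Units.val_mul, ← mulVec_mulVec, dilation_mulVec_single_self, mulVec_smul,
      Units.val_inv_eq_inv_val]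
  obtain ⟨u, hu, hux⟩ := exists_mulVec_eq_single_of_apply_eq_one hi
    (x := ((g * dilation l d⁻¹ : GL ι K) : Matrix ι ι K) *ᵥ Pi.single l 1)
    (by rw [hcol]; exact inv_mul_cancel₀ hgl)
  have hone : u * (g * dilation l d⁻¹) ∈ basisStabilizer K (insert l I) :=
    mul_mem_basisStabilizer_insert (transvectionSubgroup_le_basisStabilizer I hu)
      (mul_mem hg (dilation_mem_basisStabilizer hi _)) hux
  rw [Set.insert_eq, ← hI, Set.compl_union_self, basisStabilizer_univ, Subgroup.mem_bot] at hone
  refine ⟨u⁻¹, inv_mem hu, d, ?_⟩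
  rw [map_inv, ← mul_assoc, mul_inv_eq_one] at hone
  rw [← hone, inv_mul_cancel_left]

theorem exists_eq_mul_dilation {I : Set ι} {i : ι} (hi : i ∉ I) {g : GL ι K}
    (hg : g ∈ basisStabilizer K I) :
    ∃ s ∈ transvectionSubgroup K I, ∃ d : Kˣ, g = s * dilation i d := by
  obtain ⟨s, his, hI⟩ : ∃ s : Finset ι, i ∉ s ∧ Iᶜ = insert i (s : Set ι) := by
    classical
    exact ⟨(Iᶜ.toFinset).erase i, Finset.notMem_erase _ _, by simp [hi]⟩
  induction s using Finset.induction_on generalizing I g with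
  | empty => exact exists_eq_mul_dilation_of_compl_eq_singleton (by simpa using hI) hg
  | insert j s hjs ih =>
    rw [Finset.mem_insert, not_or] at his
    have hj : j ∉ I := by rw [← Set.mem_compl_iff, hI]; simp
    obtain ⟨l, hl, hgl⟩ := exists_notMem_mulVec_single_ne_zero hg hj
    obtain ⟨u, hu, hux⟩ := exists_mulVec_eq_single_of_apply_ne_zero his.1 hi hj hl hgl
    have hug := mul_mem_basisStabilizer_insert (transvectionSubgroup_le_basisStabilizer I hu) hg hux
    obtain ⟨t, ht, d, htd⟩ := ih (by simp [his.1, hi]) hug his.2 (by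
      rw [← Set.union_singleton, Set.compl_union, hI]
      ext r
      by_cases hr : r = j
      · subst hr; simp [hjs, Ne.symm his.1]
      · simp [hr])
    refine ⟨u⁻¹ * t, mul_mem (inv_mem hu) (transvectionSubgroup_anti (Set.subset_insert j I) ht),
      d, ?_⟩
    rw [mul_assoc, ← htd, inv_mul_cancel_left]

lemma swap_mul_glTransvection {i j : ι} (hij : i ≠ j) (c : K) (a b : ι) :
    GeneralLinearGroup.swap K a b * glTransvection hij c =
      glTransvection ((Equiv.swap a b).injective.ne hij) c * GeneralLinearGroup.swap K a b := by
  ext1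
  simp only [Units.val_mul, SpecialLinearGroup.coe_GL_coe_matrix,
    SpecialLinearGroup.transvection_coe, GeneralLinearGroup.val_swap, swap, mul_add, add_mul,
    mul_one, one_mul, PEquiv.toMatrix_toPEquiv_mul, PEquiv.mul_toMatrix_toPEquiv, Equiv.symm_swap]
  congr 1
  ext r s
  simp [single_apply, Equiv.swap_apply_eq_iff]

lemma swap_mem_basisStabilizer {I : Set ι} {a b : ι} (ha : a ∉ I) (hb : b ∉ I) :
    GeneralLinearGroup.swap K a b ∈ basisStabilizer K I := fun i hi ↦ by
  have hia : i ≠ a := fun h ↦ ha (h ▸ hi)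
  have hib : i ≠ b := fun h ↦ hb (h ▸ hi)
  rw [GeneralLinearGroup.val_swap, swap_mulVec]
  ext r
  simp [Pi.single_apply, Equiv.swap_apply_eq_iff, Equiv.swap_apply_of_ne_of_ne hia hib]

section NormalizedByStabilizer

variable {I : Set ι} {N : Subgroup (GL ι K)}

lemma glTransvection_swap_mem (hN : ∀ g ∈ basisStabilizer K I, ∀ u ∈ N, g * u * g⁻¹ ∈ N)
    {i j : ι} (hij : i ≠ j) {c : K} (hmem : glTransvection hij c ∈ N) {a b : ι} (ha : a ∉ I)
    (hb : b ∉ I) : glTransvection ((Equiv.swap a b).injective.ne hij) c ∈ N := by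
  rw [← mul_inv_cancel_right (glTransvection ((Equiv.swap a b).injective.ne hij) c)
    (GeneralLinearGroup.swap K a b), ← swap_mul_glTransvection hij]
  exact hN _ (swap_mem_basisStabilizer ha hb) _ hmem

lemma glTransvection_mem_of_notMem (hN : ∀ g ∈ basisStabilizer K I, ∀ u ∈ N, g * u * g⁻¹ ∈ N)
    {i₀ j₀ : ι} (hij₀ : i₀ ≠ j₀) (hi₀ : i₀ ∉ I) (hj₀ : j₀ ∉ I) {c : K}
    (hmem : glTransvection hij₀ c ∈ N) {i j : ι} (hij : i ≠ j) (hi : i ∉ I) (hj : j ∉ I) :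
    glTransvection hij c ∈ N := by
  set i₁ := Equiv.swap j₀ j i₀ with hi₁_def
  have hi₁ : i₁ ∉ I := by rw [hi₁_def, Equiv.swap_apply_def]; split_ifs <;> assumption
  have hi₁j : i₁ ≠ j := by
    simpa [hi₁_def] using (Equiv.swap j₀ j).injective.ne hij₀
  have hmem₁ : glTransvection hi₁j c ∈ N := by
    simpa only [Equiv.swap_apply_left] using glTransvection_swap_mem hN hij₀ hmem hj₀ hj
  simpa only [Equiv.swap_apply_left, Equiv.swap_apply_of_ne_of_ne hi₁j.symm hij.symm] using
    glTransvection_swap_mem hN hi₁j hmem₁ hi₁ hi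

lemma transvectionSubgroup_le_of_normalized
    (hN : ∀ g ∈ basisStabilizer K I, ∀ u ∈ N, g * u * g⁻¹ ∈ N)
    {i₀ j₀ : ι} (hij₀ : i₀ ≠ j₀) (hi₀ : i₀ ∉ I) (hj₀ : j₀ ∉ I)
    (hmem : ∀ c : K, glTransvection hij₀ c ∈ N) : transvectionSubgroup K I ≤ N := by
  refine transvectionSubgroup_le_iff.2 fun i j hij c hj ↦ ?_
  by_cases hi : i ∈ I
  · obtain ⟨l, hl, hlj⟩ : ∃ l ∉ I, l ≠ j := by
      by_cases h : i₀ = j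
      · exact ⟨j₀, hj₀, h ▸ hij₀.symm⟩
      · exact ⟨i₀, hi₀, h⟩
    have hil : i ≠ l := fun h ↦ hl (h ▸ hi)
    have hlj_mem : glTransvection hlj c ∈ N :=
      glTransvection_mem_of_notMem hN hij₀ hi₀ hj₀ (hmem c) hlj hl hj
    have hcomm : glTransvection hij c = glTransvection hil 1 * glTransvection hlj c *
        (glTransvection hil 1)⁻¹ * (glTransvection hlj c)⁻¹ := by
      rw [glTransvection_mul_glTransvection hil hlj hij, one_mul]; group
    rw [hcomm]
    exact mul_mem (hN _ (transvectionSubgroup_le_basisStabilizer I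
      (glTransvection_mem_transvectionSubgroup hil hl 1)) _ hlj_mem) (inv_mem hlj_mem)
  · exact glTransvection_mem_of_notMem hN hij₀ hi₀ hj₀ (hmem c) hij hi hj

end NormalizedByStabilizer

end Transvections

section BasisColumns

variable {K : Type*} [Field K] {ι κ κ' μ : Type*} [DecidableEq ι]

variable (K) in
/-- The matrix whose columns are the standard basis vectors `e_{f i}`. -/
def basisColumns (f : κ → ι) : Matrix ι κ K :=
  (1 : Matrix ι ι K).submatrix id f

lemma basisColumns_apply (f : κ → ι) (i : ι) (j : κ) :
    basisColumns K f i j = if i = f j then 1 else 0 :=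
  one_apply

lemma basisColumns_mul_single_mul_transpose [Fintype κ] [Fintype κ'] [DecidableEq κ]
    [DecidableEq κ'] (f : κ → ι) (h : κ' → ι) (i : κ) (j : κ') (x : K) :
    basisColumns K f * single i j x * (basisColumns K h)ᵀ = single (f i) (h j) x := by
  ext s t
  rw [mul_apply, Fintype.sum_eq_single j fun l hl ↦ ?_]
  · rw [transpose_apply, basisColumns_apply, mul_single_apply_same, basisColumns_apply]
    grind
  · simp [hl]

section Fintype

variable [Fintype ι]

lemma mul_basisColumns (M : Matrix μ ι K) (f : κ → ι) :
    M * basisColumns K f = M.submatrix id f := by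
  ext i j
  simp [mul_apply, basisColumns_apply]

lemma transpose_basisColumns_mul (f : κ → ι) (M : Matrix ι μ K) :
    (basisColumns K f)ᵀ * M = M.submatrix f id := by
  ext i j
  simp [mul_apply, basisColumns_apply]

lemma transpose_basisColumns_mul_self [DecidableEq κ] {f : κ → ι} (hf : f.Injective) :
    (basisColumns K f)ᵀ * basisColumns K f = 1 := by
  rw [transpose_basisColumns_mul]
  ext i j
  simp [basisColumns_apply, one_apply, hf.eq_iff]

lemma transpose_basisColumns_mul_of_disjoint {f : κ → ι} {g : κ' → ι}
    (hfg : ∀ i j, f i ≠ g j) : (basisColumns K f)ᵀ * basisColumns K g = 0 := by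
  rw [transpose_basisColumns_mul]
  ext i j
  simp [basisColumns_apply, hfg]

lemma mem_basisStabilizer_range {f : κ → ι} {g : GL ι K} :
    g ∈ basisStabilizer K (Set.range f) ↔
      (g : Matrix ι ι K) * basisColumns K f = basisColumns K f := by
  rw [mem_basisStabilizer, Set.forall_mem_range, mul_basisColumns, ← Matrix.ext_iff, forall_comm]
  refine forall_congr' fun i ↦ ?_
  simp [funext_iff, basisColumns_apply, Pi.single_apply]

end Fintype

lemma basisColumns_mul_basisColumns [Fintype κ] [DecidableEq κ] (f : κ → ι) (g : μ → κ) :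
    basisColumns K f * basisColumns K g = basisColumns K (f ∘ g) := by
  rw [mul_basisColumns]; rfl

lemma basisColumns_mul_transpose_add [Fintype κ] [Fintype κ'] {f : κ → ι} {g : κ' → ι}
    (hfg : (Sum.elim f g).Bijective) :
    basisColumns K f * (basisColumns K f)ᵀ + basisColumns K g * (basisColumns K g)ᵀ = 1 := by
  have := Fintype.ofBijective _ hfg
  ext i j
  have hsum := hfg.sum_comp fun l ↦ (1 : Matrix ι ι K) i l * (1 : Matrix ι ι K)ᵀ l j
  rw [← mul_apply, one_mul, Fintype.sum_sum_type] at hsum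
  rw [← transpose_one, ← hsum, Matrix.add_apply, mul_apply, mul_apply]
  rfl

end BasisColumns

section LinearAlgebra

variable {K : Type*} [Field K] {ι κ μ : Type*} [Fintype ι] [Fintype μ]

lemma exists_ker_mul_eq_bot_of_rank_eq {T : Matrix κ ι K} (hT : T.rank = Fintype.card μ) :
    ∃ J : Matrix ι μ K, LinearMap.ker (T * J).mulVecLin = ⊥ := by
  classical
  obtain ⟨s, hs⟩ := T.mulVecLin.rangeRestrict.exists_rightInverse_of_surjective
    T.mulVecLin.range_rangeRestrict
  let e : (μ → K) ≃ₗ[K] LinearMap.range T.mulVecLin :=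
    LinearEquiv.ofFinrankEq _ _ ((Module.finrank_fintype_fun_eq_card K).trans hT.symm)
  refine ⟨LinearMap.toMatrix' (s ∘ₗ e.toLinearMap), ?_⟩
  have hTJ : (T * LinearMap.toMatrix' (s ∘ₗ e.toLinearMap)).mulVecLin =
      (LinearMap.range T.mulVecLin).subtype ∘ₗ e.toLinearMap := by
    rw [mulVecLin_mul, ← toLin'_apply' (LinearMap.toMatrix' _), toLin'_toMatrix']
    exact congrArg (fun φ ↦ (LinearMap.range T.mulVecLin).subtype ∘ₗ φ ∘ₗ e.toLinearMap) hs
  rw [hTJ, LinearMap.ker_comp_of_ker_eq_bot _ (Submodule.ker_subtype _), LinearEquiv.ker]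

variable [Fintype κ]

lemma exists_mul_eq_of_ker_eq [DecidableEq ι] {Z Z' : Matrix ι κ K}
    (h : LinearMap.ker Z.mulVecLin = LinearMap.ker Z'.mulVecLin) :
    ∃ g : GL ι K, (g : Matrix ι ι K) * Z = Z' := by
  let e := Z.mulVecLin.quotKerEquivRange.symm ≪≫ₗ Submodule.quotEquivOfEq _ _ h ≪≫ₗ
    Z'.mulVecLin.quotKerEquivRange
  obtain ⟨E, hE⟩ := Submodule.exists_linearEquiv_restrict_eq e
  have he (x : κ → K) : e ⟨Z *ᵥ x, x, rfl⟩ = ⟨Z' *ᵥ x, x, rfl⟩ := by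
    have hsymm : Z.mulVecLin.quotKerEquivRange.symm ⟨Z *ᵥ x, x, rfl⟩ = Submodule.Quotient.mk x := by
      rw [LinearEquiv.symm_apply_eq]; rfl
    simp only [e, LinearEquiv.trans_apply, hsymm]
    rfl
  refine ⟨GeneralLinearGroup.toLin.symm (LinearMap.GeneralLinearGroup.ofLinearEquiv E),
    ext_iff_mulVec.2 fun x ↦ ?_⟩
  rw [← mulVec_mulVec, ← mulVecLin_apply _ (Z *ᵥ x), ← GeneralLinearGroup.coe_toLin,
    MulEquiv.apply_symm_apply]
  exact (hE ⟨Z *ᵥ x, x, rfl⟩).symm.trans (congrArg Subtype.val (he x))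

lemma ker_mulVecLin_eq_bot_of_mul_eq_one [DecidableEq κ] {Z : Matrix ι κ K} {L : Matrix κ ι K}
    (hL : L * Z = 1) : LinearMap.ker Z.mulVecLin = ⊥ := by
  refine LinearMap.ker_eq_bot'.2 fun x hx ↦ ?_
  rw [← one_mulVec x, ← hL, ← mulVec_mulVec, ← mulVecLin_apply Z, hx, mulVec_zero]

lemma exists_mul_eq_basisColumns_mul [DecidableEq ι] (S : Matrix ι κ K) {f : κ → ι}
    (hf : f.Injective) :
    ∃ (g : GL ι K) (Q : Matrix κ κ K), (g : Matrix ι ι K) * S = basisColumns K f * Q := by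
  classical
  obtain ⟨q, hq⟩ := finrank_le_iff_exists_linearMap.1 (LinearMap.finrank_range_le S.mulVecLin)
  set Q := LinearMap.toMatrix' (q ∘ₗ S.mulVecLin.rangeRestrict) with hQ
  have hker : LinearMap.ker S.mulVecLin = LinearMap.ker (basisColumns K f * Q).mulVecLin := by
    rw [mulVecLin_mul, LinearMap.ker_comp_of_ker_eq_bot _
      (ker_mulVecLin_eq_bot_of_mul_eq_one (transpose_basisColumns_mul_self hf)), ← toLin'_apply' Q,
      hQ, toLin'_toMatrix', LinearMap.ker_comp_of_ker_eq_bot _ (LinearMap.ker_eq_bot.2 hq),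
      LinearMap.ker_rangeRestrict]
  obtain ⟨g, hg⟩ := exists_mul_eq_of_ker_eq hker
  exact ⟨g, Q, hg⟩

lemma exists_mul_mul_mul_basisColumns_eq [DecidableEq ι] [DecidableEq κ] {T : Matrix κ ι K}
    (hT : T.rank = Fintype.card μ) {f : μ → ι} (hf : f.Injective) {h : μ → κ} (hh : h.Injective) :
    ∃ (Q : GL κ K) (P : GL ι K),
      (Q : Matrix κ κ K) * T * (P : Matrix ι ι K) * basisColumns K f = basisColumns K h := by
  classical
  obtain ⟨J, hTJ⟩ := exists_ker_mul_eq_bot_of_rank_eq hT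
  have hJ : LinearMap.ker J.mulVecLin = ⊥ := by
    rw [eq_bot_iff, ← hTJ, mulVecLin_mul]
    exact LinearMap.ker_le_ker_comp _ _
  obtain ⟨P, hP⟩ := exists_mul_eq_of_ker_eq <|
    (ker_mulVecLin_eq_bot_of_mul_eq_one (transpose_basisColumns_mul_self (K := K) hf)).trans hJ.symm
  obtain ⟨Q, hQ⟩ := exists_mul_eq_of_ker_eq <| hTJ.trans
    (ker_mulVecLin_eq_bot_of_mul_eq_one (transpose_basisColumns_mul_self (K := K) hh)).symm
  exact ⟨Q, P, by rw [Matrix.mul_assoc, hP, Matrix.mul_assoc, hQ]⟩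

/- When `T * J = L` is injective and `T` has the same rank, `T` and `L` have the same column
space. -/
lemma eq_mul_mul_of_rank_le [DecidableEq μ] {T : Matrix κ ι K} {J : Matrix ι μ K}
    {L : Matrix κ μ K} {L' : Matrix μ κ K} (hTJ : T * J = L) (hL : L' * L = 1)
    (hT : T.rank ≤ Fintype.card μ) : T = L * (L' * T) := by
  have hrange : LinearMap.range L.mulVecLin = LinearMap.range T.mulVecLin := by
    refine Submodule.eq_of_le_of_finrank_le ?_ ?_
    · rw [← hTJ, mulVecLin_mul]
      exact LinearMap.range_comp_le_range _ _
    · rw [LinearMap.finrank_range_of_inj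
        (LinearMap.ker_eq_bot.1 (ker_mulVecLin_eq_bot_of_mul_eq_one hL)),
        Module.finrank_fintype_fun_eq_card]
      exact hT
  refine ext_iff_mulVec.2 fun x ↦ ?_
  obtain ⟨y, hy⟩ : T *ᵥ x ∈ LinearMap.range L.mulVecLin := hrange ▸ ⟨x, rfl⟩
  rw [mulVecLin_apply] at hy
  rw [← mulVec_mulVec, ← mulVec_mulVec, ← hy, mulVec_mulVec y L' L, hL, one_mulVec]

end LinearAlgebra

section FirstAndLastColumns

variable {K : Type*} [Field K] {n a b k : ℕ}

variable (K) in
/-- The inclusion `K^a → K^n` of the first `a` coordinates. -/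
abbrev firstCols (ha : a ≤ n) : Matrix (Fin n) (Fin a) K :=
  basisColumns K (Fin.castLE ha)

variable (K) in
/-- The inclusion `K^b → K^n` of the last `b` coordinates. -/
abbrev lastCols (hb : b ≤ n) : Matrix (Fin n) (Fin b) K :=
  basisColumns K (Fin.natAdd_castLEEmb hb)

lemma transpose_firstCols_mul_self (ha : a ≤ n) : (firstCols K ha)ᵀ * firstCols K ha = 1 :=
  transpose_basisColumns_mul_self (Fin.castLE_injective ha)

lemma transpose_lastCols_mul_self (hb : b ≤ n) : (lastCols K hb)ᵀ * lastCols K hb = 1 :=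
  transpose_basisColumns_mul_self (Fin.natAdd_castLEEmb hb).injective

lemma castLE_ne_natAdd_castLEEmb (ha : a ≤ n) (hb : b ≤ n) (hab : a + b ≤ n) (i : Fin a)
    (j : Fin b) : Fin.castLE ha i ≠ Fin.natAdd_castLEEmb hb j := by
  simp only [ne_eq, Fin.ext_iff, Fin.val_castLE, Fin.natAdd_castLEEmb_apply_val]
  omega

lemma transpose_firstCols_mul_lastCols (ha : a ≤ n) (hb : b ≤ n) (hab : a + b ≤ n) :
    (firstCols K ha)ᵀ * lastCols K hb = 0 :=
  transpose_basisColumns_mul_of_disjoint (castLE_ne_natAdd_castLEEmb ha hb hab)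

lemma transpose_lastCols_mul_firstCols (ha : a ≤ n) (hb : b ≤ n) (hab : a + b ≤ n) :
    (lastCols K hb)ᵀ * firstCols K ha = 0 :=
  transpose_basisColumns_mul_of_disjoint fun i j ↦
    (castLE_ne_natAdd_castLEEmb ha hb hab j i).symm

lemma firstCols_mul_firstCols (hk : k ≤ a) (ha : a ≤ n) :
    firstCols K ha * firstCols K hk = firstCols K (hk.trans ha) :=
  basisColumns_mul_basisColumns _ _

lemma lastCols_mul_lastCols (hk : k ≤ b) (hb : b ≤ n) :
    lastCols K hb * lastCols K hk = lastCols K (hk.trans hb) := by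
  refine (basisColumns_mul_basisColumns _ _).trans (congrArg (basisColumns K) ?_)
  ext i
  simp only [Function.comp_apply, Fin.natAdd_castLEEmb_apply_val]
  omega

lemma firstCols_mul_transpose_add (ha : a ≤ n) (hb : b ≤ n) (hab : a + b = n) :
    firstCols K ha * (firstCols K ha)ᵀ + lastCols K hb * (lastCols K hb)ᵀ = 1 := by
  refine basisColumns_mul_transpose_add ((Fintype.bijective_iff_injective_and_card _).2 ⟨?_, ?_⟩)
  · exact (Fin.castLE_injective ha).sumElim (Fin.natAdd_castLEEmb hb).injective
      (castLE_ne_natAdd_castLEEmb ha hb hab.le)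
  · simp [hab]

lemma blockEmbed_eq {K : Type} [Field K] (ha : a ≤ n) (hb : b ≤ n)
    (X : Matrix (Fin a) (Fin b) K) :
    blockEmbed n a b X = firstCols K ha * X * (lastCols K hb)ᵀ := by
  ext i j
  simp only [blockEmbed, of_apply, mul_apply, basisColumns_apply, transpose_apply, ite_mul,
    one_mul, zero_mul, mul_ite, mul_one, mul_zero, Fin.ext_iff, Fin.val_castLE,
    Fin.natAdd_castLEEmb_apply_val]
  split_ifs with hi hj
  · rw [Fintype.sum_eq_single (⟨j - (n - b), hj.2⟩ : Fin b), if_pos (by grind),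
      Fintype.sum_eq_single (⟨i, hi⟩ : Fin a), if_pos rfl]
    · exact fun l hl ↦ if_neg fun hil ↦ hl (Fin.ext hil.symm)
    · exact fun l hl ↦ if_neg fun hjl ↦ hl (Fin.ext (by grind))
  · exact (Finset.sum_eq_zero fun l _ ↦ if_neg (by grind)).symm
  · exact (Finset.sum_eq_zero fun l _ ↦ by
      rw [Finset.sum_eq_zero fun l _ ↦ if_neg (by grind), ite_self]).symm

end FirstAndLastColumns

section BlockUnipotent

variable {n a b : ℕ} (hab : a + b ≤ n)

lemma coe_uU (ha : a ≤ n) (hb : b ≤ n) (X : Matrix (Fin a) (Fin b) F) :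
    (uU n a b hab X : Matrix (Fin n) (Fin n) F) =
      1 + firstCols F ha * X * (lastCols F hb)ᵀ :=
  congrArg (1 + ·) (blockEmbed_eq ha hb X)

lemma uU_add (X Y : Matrix (Fin a) (Fin b) F) :
    uU n a b hab (X + Y) = uU n a b hab X * uU n a b hab Y := by
  have hXY := blockEmbed_mul_blockEmbed hab X Y
  rw [blockEmbed_eq (by omega) (by omega), blockEmbed_eq (by omega) (by omega)] at hXY
  apply Units.ext
  rw [Units.val_mul, coe_uU hab (by omega) (by omega), coe_uU hab (by omega) (by omega),
    coe_uU hab (by omega) (by omega), Matrix.mul_add, Matrix.add_mul, one_add_mul, mul_one_add,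
    hXY, add_zero, add_assoc, add_comm (_ * Y * _)]

lemma uU_zero : uU n a b hab (0 : Matrix (Fin a) (Fin b) F) = 1 := by
  have h := uU_add hab (0 : Matrix (Fin a) (Fin b) F) 0
  rwa [add_zero, left_eq_mul] at h

lemma uU_neg (X : Matrix (Fin a) (Fin b) F) : uU n a b hab (-X) = (uU n a b hab X)⁻¹ := by
  rw [eq_inv_iff_mul_eq_one, ← uU_add, neg_add_cancel, uU_zero]

lemma detHom_uU (X : Matrix (Fin a) (Fin b) F) : detHom n (uU n a b hab X) = 1 := by
  apply Units.ext
  change (uU n a b hab X : Matrix (Fin n) (Fin n) F).det = 1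
  rw [coe_uU hab (by omega) (by omega), Matrix.mul_assoc, det_one_add_mul_comm,
    Matrix.mul_assoc, transpose_lastCols_mul_firstCols _ _ hab, Matrix.mul_zero, add_zero, det_one]

end BlockUnipotent

section TraceCharacters

variable {K : Type*} [Field K] {κ μ : Type*} [Fintype κ] [Fintype μ]

/-- The character `γ_T : X ↦ χ₀ (tr (T * X))` of the additive group of `μ × κ` matrices. -/
def traceChar (χ₀ : AddChar K ℂ) (T : Matrix κ μ K) : AddChar (Matrix μ κ K) ℂ :=
  χ₀.compAddMonoidHom ((traceAddMonoidHom κ K).comp (addMonoidHomMulLeft T))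

lemma traceChar_apply (χ₀ : AddChar K ℂ) (T : Matrix κ μ K) (X : Matrix μ κ K) :
    traceChar χ₀ T X = χ₀ (T * X).trace :=
  rfl

lemma traceChar_comm (χ₀ : AddChar K ℂ) (T : Matrix κ μ K) (X : Matrix μ κ K) :
    traceChar χ₀ T X = traceChar χ₀ X T := by
  rw [traceChar_apply, traceChar_apply, trace_mul_comm]

lemma traceChar_mul_left {ν : Type*} [Fintype ν] (χ₀ : AddChar K ℂ) (T : Matrix κ μ K)
    (A : Matrix μ ν K) (X : Matrix ν κ K) : traceChar χ₀ T (A * X) = traceChar χ₀ (T * A) X := by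
  rw [traceChar_apply, traceChar_apply, Matrix.mul_assoc]

lemma traceChar_mul_right {ν : Type*} [Fintype ν] (χ₀ : AddChar K ℂ) (T : Matrix κ μ K)
    (X : Matrix μ ν K) (A : Matrix ν κ K) : traceChar χ₀ T (X * A) = traceChar χ₀ (A * T) X := by
  rw [traceChar_apply, ← Matrix.mul_assoc, trace_mul_comm, ← Matrix.mul_assoc, ← traceChar_apply]

variable {χ₀ : AddChar K ℂ}

lemma eq_zero_of_forall_char_mul_eq_one (hχ₀ : χ₀ ≠ 1) {t : K} (ht : ∀ x, χ₀ (t * x) = 1) :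
    t = 0 := by
  by_contra ht₀
  refine hχ₀ (DFunLike.ext _ _ fun x ↦ ?_)
  rw [AddChar.one_apply, ← ht (t⁻¹ * x), mul_inv_cancel_left₀ ht₀]

lemma traceChar_eq_zero_iff (hχ₀ : χ₀ ≠ 1) {T : Matrix κ μ K} : traceChar χ₀ T = 0 ↔ T = 0 := by
  classical
  refine ⟨fun h ↦ Matrix.ext fun j i ↦ ?_, fun h ↦ DFunLike.ext _ _ fun X ↦ ?_⟩
  · refine eq_zero_of_forall_char_mul_eq_one hχ₀ fun x ↦ ?_
    have hx := DFunLike.congr_fun h (single i j x)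
    rwa [traceChar_apply, trace_mul_single, op_smul_eq_mul, AddChar.zero_apply] at hx
  · rw [h, traceChar_apply, Matrix.zero_mul, trace_zero, AddChar.map_zero_eq_one,
      AddChar.zero_apply]

lemma traceChar_injective (hχ₀ : χ₀ ≠ 1) :
    Function.Injective (traceChar χ₀ : Matrix κ μ K → AddChar (Matrix μ κ K) ℂ) := by
  intro T T' h
  rw [← sub_eq_zero, ← traceChar_eq_zero_iff hχ₀]
  refine DFunLike.ext _ _ fun X ↦ ?_
  rw [traceChar_apply, Matrix.sub_mul, trace_sub, AddChar.map_sub_eq_div, ← traceChar_apply,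
    ← traceChar_apply, h, AddChar.zero_apply, div_self (AddChar.val_isUnit _ _).ne_zero]

lemma sum_traceChar_apply (hχ₀ : χ₀ ≠ 1) [Fintype (Matrix κ μ K)] [DecidableEq (Matrix μ κ K)]
    (X : Matrix μ κ K) :
    ∑ T : Matrix κ μ K, traceChar χ₀ T X =
      if X = 0 then (Fintype.card (Matrix κ μ K) : ℂ) else 0 := by
  classical
  simp only [traceChar_comm χ₀ _ X, AddChar.sum_eq_ite, traceChar_eq_zero_iff hχ₀]

end TraceCharacters

section CharacterEigenspaces

variable (χ₀ : AddChar F ℂ) {n : ℕ} (π : Representation ℂ (GL (Fin n) F) V) {a b : ℕ}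
  (hab : a + b ≤ n)

/-- The eigenspace of the character `γ_T` of `U_{a,b}` in the representation `π`. -/
def charEigenspace (T : Matrix (Fin b) (Fin a) F) : Submodule ℂ V :=
  ⨅ X, Module.End.eigenspace (π (uU n a b hab X)) (traceChar χ₀ T X)

variable {χ₀ π hab}

lemma mem_charEigenspace {T : Matrix (Fin b) (Fin a) F} {v : V} :
    v ∈ charEigenspace χ₀ π hab T ↔ ∀ X, π (uU n a b hab X) v = traceChar χ₀ T X • v := by
  simp only [charEigenspace, Submodule.mem_iInf, Module.End.mem_eigenspace_iff]

lemma charAppears_of_mem {T : Matrix (Fin b) (Fin a) F} {v : V} (hv : v ≠ 0)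
    (hvT : v ∈ charEigenspace χ₀ π hab T) : CharAppears χ₀ π hab T :=
  ⟨v, hv, mem_charEigenspace.1 hvT⟩

lemma exists_mem_of_charAppears {T : Matrix (Fin b) (Fin a) F} (h : CharAppears χ₀ π hab T) :
    ∃ v ∈ charEigenspace χ₀ π hab T, v ≠ 0 :=
  let ⟨v, hv, hvT⟩ := h
  ⟨v, mem_charEigenspace.2 hvT, hv⟩

variable (χ₀ π hab) in
/-- The projection of `π` onto the eigenspace of the character `γ_T` of `U_{a,b}`. -/
noncomputable def charProj (T : Matrix (Fin b) (Fin a) F) : Module.End ℂ V :=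
  (Fintype.card (Matrix (Fin b) (Fin a) F) : ℂ)⁻¹ •
    ∑ X, traceChar χ₀ T (-X) • π (uU n a b hab X)

lemma sum_charProj (hχ₀ : χ₀ ≠ 1) :
    ∑ T : Matrix (Fin b) (Fin a) F, charProj χ₀ π hab T = 1 := by
  have hcard : (Fintype.card (Matrix (Fin b) (Fin a) F) : ℂ) ≠ 0 :=
    Nat.cast_ne_zero.2 Fintype.card_ne_zero
  simp only [charProj]
  rw [← Finset.smul_sum, Finset.sum_comm]
  simp only [← Finset.sum_smul, sum_traceChar_apply hχ₀, neg_eq_zero, ite_smul, zero_smul,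
    Finset.sum_ite_eq', Finset.mem_univ, if_true, uU_zero, map_one, smul_smul,
    inv_mul_cancel₀ hcard, one_smul]

lemma charProj_mem (T : Matrix (Fin b) (Fin a) F) (v : V) :
    charProj χ₀ π hab T v ∈ charEigenspace χ₀ π hab T := by
  refine mem_charEigenspace.2 fun X ↦ ?_
  simp only [charProj, LinearMap.smul_apply, LinearMap.sum_apply, map_smul, map_sum]
  rw [smul_comm (traceChar χ₀ T X), Finset.smul_sum (r := traceChar χ₀ T X)]
  refine congrArg _ ?_
  refine Fintype.sum_equiv (Equiv.addLeft X) _ _ fun Y ↦ ?_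
  rw [Equiv.coe_addLeft, smul_smul, ← AddChar.map_add_eq_mul, neg_add, add_neg_cancel_left,
    uU_add, _root_.map_mul, Module.End.mul_apply]

lemma charProj_apply_of_commute {g : GL (Fin n) F} (hg : ∀ X, Commute g (uU n a b hab X))
    (T : Matrix (Fin b) (Fin a) F) (v : V) :
    charProj χ₀ π hab T (π g v) = π g (charProj χ₀ π hab T v) := by
  simp only [charProj, LinearMap.smul_apply, LinearMap.sum_apply, map_smul, map_sum,
    ← Module.End.mul_apply, ← _root_.map_mul, (hg _).eq]

lemma exists_charProj_ne_zero (hχ₀ : χ₀ ≠ 1) {v : V} (hv : v ≠ 0) :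
    ∃ T, charProj χ₀ π hab T v ≠ 0 := by
  by_contra! h
  apply hv
  rw [← Module.End.one_apply (R := ℂ) v, ← sum_charProj hχ₀ (π := π) (hab := hab),
    LinearMap.sum_apply]
  exact Finset.sum_eq_zero fun T _ ↦ h T

end CharacterEigenspaces

section Intertwiners

open Representation

variable {G : Type} [Group G] {W : Type} [AddCommGroup W] [Module ℂ W]
  {ρ : Representation ℂ G V} {σ : Representation ℂ G W}

lemma occurs_iff_exists_intertwiningMap : Occurs ρ σ ↔ ∃ φ : IntertwiningMap ρ σ, φ ≠ 0 := by
  refine ⟨fun ⟨φ, hφ, hcomm⟩ ↦ ⟨⟨φ, hcomm⟩, fun h ↦ hφ ?_⟩, fun ⟨φ, hφ⟩ ↦ ⟨φ.toLinearMap, ?_, φ.2⟩⟩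
  · exact congrArg IntertwiningMap.toLinearMap h
  · exact fun h ↦ hφ (IntertwiningMap.ext h)

lemma IsIrred.isIrreducible (hρ : IsIrred ρ) : ρ.IsIrreducible := by
  obtain ⟨⟨v, hv⟩, hsub⟩ := hρ
  have : Nontrivial (Subrepresentation ρ) :=
    ⟨⊥, ⊤, fun h ↦ hv <| (Submodule.mem_bot ℂ).1 <|
      (congrArg Subrepresentation.toSubmodule h).ge (Submodule.mem_top : v ∈ ⊤)⟩
  exact ⟨fun p ↦ (hsub p.toSubmodule fun g _ hw ↦ p.apply_mem_toSubmodule g hw).imp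
    (fun h ↦ Subrepresentation.toSubmodule_injective h)
    fun h ↦ Subrepresentation.toSubmodule_injective h⟩

lemma IsIrred.injective (hρ : IsIrred ρ) {φ : IntertwiningMap ρ σ} (hφ : φ ≠ 0) :
    Function.Injective φ :=
  have := hρ.isIrreducible
  (IsIrreducible.injective_or_eq_zero φ).resolve_right hφ

lemma IsIrred.exists_leftInverse [Finite G] (hρ : IsIrred ρ) {φ : IntertwiningMap ρ σ}
    (hφ : φ ≠ 0) : ∃ ψ : IntertwiningMap σ ρ, Function.LeftInverse ψ φ := by
  have : NeZero (Nat.card G : ℂ) := ⟨Nat.cast_ne_zero.2 Nat.card_pos.ne'⟩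
  obtain ⟨ψ, hψ⟩ := MonoidAlgebra.exists_leftInverse_of_injective
    (IntertwiningMap.equivLinearMapAsModule ρ σ φ) (LinearMap.ker_eq_bot.2 (hρ.injective hφ))
  exact ⟨(IntertwiningMap.equivLinearMapAsModule σ ρ).symm ψ, LinearMap.congr_fun hψ⟩

end Intertwiners

section Twists

variable {K : Type} [Field K] {n : ℕ} (α : Kˣ →* ℂˣ) (ρ : Representation ℂ (GL (Fin n) K) V)

lemma twistRep_apply (g : GL (Fin n) K) (v : V) :
    twistRep α ρ g v = ((α (detHom n g) : ℂˣ) : ℂ) • ρ g v :=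
  rfl

variable {ρ} in
lemma IsIrred.twistRep (hρ : IsIrred ρ) : IsIrred (twistRep α ρ) := by
  refine ⟨hρ.1, fun p hp ↦ hρ.2 p fun g v hv ↦ ?_⟩
  exact (p.smul_mem_iff (Units.ne_zero (α (detHom n g)))).1 (hp g v hv)

lemma charAppears_twistRep_iff {χ₀ : AddChar F ℂ} {α : Fˣ →* ℂˣ}
    {ρ : Representation ℂ (GL (Fin n) F) V} {a b : ℕ} {hab : a + b ≤ n}
    {T : Matrix (Fin b) (Fin a) F} :
    CharAppears χ₀ (Stmt18.twistRep α ρ) hab T ↔ CharAppears χ₀ ρ hab T := by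
  simp only [CharAppears, twistRep_apply, detHom_uU, map_one, Units.val_one, one_smul]

end Twists

section PermutationRepresentation

variable {K : Type} [Field K] {n j : ℕ}

lemma permRep_apply (g : GL (Fin n) K) (f : Matrix (Fin n) (Fin j) K → ℂ)
    (S : Matrix (Fin n) (Fin j) K) :
    permRep n j g f S = f (((g⁻¹ : GL (Fin n) K) : Matrix (Fin n) (Fin n) K) * S) :=
  rfl

lemma permRep_single [DecidableEq K] (g : GL (Fin n) K) (S : Matrix (Fin n) (Fin j) K) (c : ℂ) :
    permRep n j g (Pi.single S c) = Pi.single ((g : Matrix (Fin n) (Fin n) K) * S) c := by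
  ext T
  have hiff : ((g⁻¹ : GL (Fin n) K) : Matrix (Fin n) (Fin n) K) * T = S ↔
      T = (g : Matrix (Fin n) (Fin n) K) * S :=
    ⟨fun h ↦ by rw [← h, ← Matrix.mul_assoc, Units.mul_inv, Matrix.one_mul],
      fun h ↦ by rw [h, ← Matrix.mul_assoc, Units.inv_mul, Matrix.one_mul]⟩
  simp only [permRep_apply, Pi.single_apply, hiff]

/- Frobenius reciprocity: the functional `ℓ` below spreads over the orbit of `S` to an
intertwining map. -/
lemma occurs_permRep_of_fixed [Finite K] {ρ : Representation ℂ (GL (Fin n) K) V}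
    (S : Matrix (Fin n) (Fin j) K) {v : V} (hv : v ≠ 0)
    (hfix : ∀ g : GL (Fin n) K, (g : Matrix (Fin n) (Fin n) K) * S = S → ρ g v = v) :
    Occurs ρ (permRep n j) := by
  classical
  have := Fintype.ofFinite K
  obtain ⟨ℓ, hℓ⟩ : ∃ ℓ : Module.Dual ℂ V, ℓ v ≠ 0 := by
    by_contra! h
    exact hv ((Module.forall_dual_apply_eq_zero_iff ℂ v).1 h)
  let φ : V →ₗ[ℂ] Matrix (Fin n) (Fin j) K → ℂ := LinearMap.pi fun T ↦
    ∑ g : GL (Fin n) K with g.1 * S = T, ℓ ∘ₗ ρ g⁻¹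
  have hφ (w : V) (T : Matrix (Fin n) (Fin j) K) :
      φ w T = ∑ g : GL (Fin n) K with g.1 * S = T, ℓ (ρ g⁻¹ w) := by
    simp only [φ, LinearMap.pi_apply, LinearMap.sum_apply, LinearMap.comp_apply]
  refine ⟨φ, fun h ↦ ?_, fun h ↦ LinearMap.ext fun w ↦ funext fun T ↦ ?_⟩
  · have hsum : φ v S = ∑ g : GL (Fin n) K with g.1 * S = S, ℓ v := by
      rw [hφ]
      refine Finset.sum_congr rfl fun g hg ↦ ?_
      rw [← hfix g (Finset.mem_filter.1 hg).2, ρ.inv_self_apply, hfix g (Finset.mem_filter.1 hg).2]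
    rw [h, LinearMap.zero_apply, Pi.zero_apply, Finset.sum_const, eq_comm, smul_eq_zero,
      or_iff_left hℓ, Finset.card_eq_zero] at hsum
    exact Finset.notMem_empty 1 (hsum ▸ Finset.mem_filter.2
      ⟨Finset.mem_univ _, by rw [Units.val_one, Matrix.one_mul]⟩)
  · rw [LinearMap.comp_apply, LinearMap.comp_apply, permRep_apply, hφ, hφ]
    refine Finset.sum_equiv (Equiv.mulLeft h⁻¹) (fun g ↦ ?_) fun g _ ↦ ?_
    · simp only [Finset.mem_filter, Finset.mem_univ, true_and, Equiv.coe_mulLeft, Units.val_mul,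
        Matrix.mul_assoc]
      refine ⟨fun hg ↦ congrArg _ hg, fun hg ↦ ?_⟩
      simpa only [← Matrix.mul_assoc, Units.mul_inv, Matrix.one_mul] using
        congrArg ((h : Matrix (Fin n) (Fin n) K) * ·) hg
    · rw [Equiv.coe_mulLeft, _root_.mul_inv_rev, inv_inv, _root_.map_mul, Module.End.mul_apply]

lemma exists_fixed_of_occurs_permRep [Finite K] {ρ : Representation ℂ (GL (Fin n) K) V}
    (hρ : IsIrred ρ) (hocc : Occurs ρ (permRep n j)) :
    ∃ (S : Matrix (Fin n) (Fin j) K) (v : V), v ≠ 0 ∧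
      ∀ g : GL (Fin n) K, (g : Matrix (Fin n) (Fin n) K) * S = S → ρ g v = v := by
  classical
  obtain ⟨φ, hφ⟩ := occurs_iff_exists_intertwiningMap.1 hocc
  obtain ⟨ψ, hψ⟩ := hρ.exists_leftInverse hφ
  obtain ⟨S, hS⟩ : ∃ S, ψ (Pi.single S 1) ≠ 0 := by
    by_contra! h
    obtain ⟨v, hv⟩ := hρ.1
    have hψ₀ : ψ.toLinearMap = 0 := LinearMap.pi_ext' fun S ↦ LinearMap.ext_ring (h S)
    exact hv ((hψ v).symm.trans (LinearMap.congr_fun hψ₀ (φ v)))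
  exact ⟨S, _, hS, fun g hg ↦ by rw [← ψ.isIntertwining, permRep_single, hg]⟩

end PermutationRepresentation

section RankBound

lemma rank_le_of_ker_le {K : Type*} [Field K] {ι κ μ : Type*} [Finite κ] [Finite μ] [Fintype ι]
    {A : Matrix κ ι K} {B : Matrix μ ι K}
    (h : LinearMap.ker B.mulVecLin ≤ LinearMap.ker A.mulVecLin) : A.rank ≤ B.rank := by
  have hA := A.mulVecLin.finrank_range_add_finrank_ker
  have hB := B.mulVecLin.finrank_range_add_finrank_ker
  have hker := Submodule.finrank_mono h
  simp only [Matrix.rank]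
  omega

lemma rank_le_of_traceChar_eq_one {K : Type*} [Field K] {ι κ μ : Type*} [Fintype ι] [Fintype κ]
    [Fintype μ] {χ₀ : AddChar K ℂ} (hχ₀ : χ₀ ≠ 1) {T : Matrix κ ι K} {Z : Matrix κ μ K}
    (h : ∀ X : Matrix ι κ K, X * Z = 0 → traceChar χ₀ T X = 1) : T.rank ≤ Z.rank := by
  classical
  rw [← rank_transpose T, ← rank_transpose Z]
  refine rank_le_of_ker_le fun w hw ↦ ?_
  rw [LinearMap.mem_ker, mulVecLin_apply, mulVec_transpose] at hw ⊢
  ext i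
  refine eq_zero_of_forall_char_mul_eq_one hχ₀ fun c ↦ ?_
  have hX := h (vecMulVec (Pi.single i c) w)
    (by rw [vecMulVec_mul, hw]; exact ext fun _ _ ↦ mul_zero _)
  rwa [traceChar_comm, traceChar_apply, vecMulVec_mul, trace_vecMulVec, single_dotProduct,
    mul_comm] at hX

lemma rank_le_of_charAppears_permRep {χ₀ : AddChar F ℂ} (hχ₀ : χ₀ ≠ 1) {n j a b : ℕ}
    {hab : a + b ≤ n} {T : Matrix (Fin b) (Fin a) F}
    (h : CharAppears χ₀ (permRep n j) hab T) : T.rank ≤ j := by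
  have ha : a ≤ n := by omega
  have hb : b ≤ n := by omega
  obtain ⟨f, hfT, hf⟩ := exists_mem_of_charAppears h
  obtain ⟨S, hS⟩ := Function.ne_iff.1 hf
  have hle : T.rank ≤ ((lastCols F hb)ᵀ * S).rank := by
    refine rank_le_of_traceChar_eq_one hχ₀ fun X hX ↦ ?_
    have hfix : ((uU n a b hab X)⁻¹ : GL (Fin n) F).1 * S = S := by
      rw [← uU_neg, coe_uU hab ha hb, Matrix.add_mul, Matrix.one_mul, Matrix.mul_assoc,
        Matrix.mul_assoc, Matrix.neg_mul, hX, neg_zero, Matrix.mul_zero, add_zero]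
    have hfS := congrFun (mem_charEigenspace.1 hfT X) S
    rw [permRep_apply, hfix, Pi.smul_apply, smul_eq_mul] at hfS
    exact (mul_eq_right₀ hS).1 hfS.symm
  exact hle.trans (rank_le_width _)

end RankBound

section LinearRelations

variable {K : Type*} [Field K] {ι κ μ : Type*} [Fintype κ] [Fintype μ]

/-- The linear relations `S x = T y` between the columns of `S` and those of `T`: they determine
the pair `(S, T)` up to left multiplication by an invertible matrix. -/
def relSpace (S : Matrix ι κ K) (T : Matrix ι μ K) : Submodule K ((κ → K) × (μ → K)) :=
  LinearMap.eqLocus (S.mulVecLin ∘ₗ LinearMap.fst K _ _) (T.mulVecLin ∘ₗ LinearMap.snd K _ _)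

lemma mem_relSpace {S : Matrix ι κ K} {T : Matrix ι μ K} {p : (κ → K) × (μ → K)} :
    p ∈ relSpace S T ↔ S *ᵥ p.1 = T *ᵥ p.2 :=
  Iff.rfl

lemma relSpace_units_mul [Fintype ι] [DecidableEq ι] (g : GL ι K) (S : Matrix ι κ K)
    (T : Matrix ι μ K) : relSpace (g.1 * S) (g.1 * T) = relSpace S T := by
  ext p
  rw [mem_relSpace, mem_relSpace, ← mulVec_mulVec, ← mulVec_mulVec,
    (mulVec_injective_of_isUnit g.isUnit).eq_iff]

lemma relSpace_mul_left {κ' : Type*} [Fintype κ'] (S : Matrix ι κ K) (Q : Matrix κ κ' K)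
    (T : Matrix ι μ K) :
    relSpace (S * Q) T = (relSpace S T).comap (Q.mulVecLin.prodMap LinearMap.id) := by
  ext p
  simp only [mem_relSpace, Submodule.mem_comap, LinearMap.prodMap_apply, mulVecLin_apply,
    LinearMap.id_apply, mulVec_mulVec]

lemma relSpace_one_le_iff [DecidableEq κ] {G : Matrix κ μ K} {S : Matrix ι κ K}
    {T : Matrix ι μ K} : relSpace 1 G ≤ relSpace S T ↔ S * G = T := by
  classical
  refine ⟨fun h ↦ Matrix.ext_of_mulVec_single fun j ↦ ?_, fun h p hp ↦ ?_⟩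
  · rw [← mulVec_mulVec]
    exact h (mem_relSpace.2 (one_mulVec _) : (G *ᵥ Pi.single j 1, Pi.single j 1) ∈ relSpace 1 G)
  · rw [mem_relSpace, one_mulVec] at hp
    rw [mem_relSpace, hp, mulVec_mulVec, h]

lemma exists_units_mul_eq_of_relSpace_eq [Fintype ι] [DecidableEq ι] {S S' : Matrix ι κ K}
    {T T' : Matrix ι μ K} (h : relSpace S T = relSpace S' T') :
    ∃ g : GL ι K, g.1 * S = S' ∧ g.1 * T = T' := by
  have hker : LinearMap.ker (fromCols S (-T)).mulVecLin =
      LinearMap.ker (fromCols S' (-T')).mulVecLin := by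
    ext x
    have hx := SetLike.ext_iff.1 h (x ∘ Sum.inl, x ∘ Sum.inr)
    simpa only [mem_relSpace, LinearMap.mem_ker, mulVecLin_apply, fromCols_mulVec, neg_mulVec,
      add_neg_eq_zero] using hx
  obtain ⟨g, hg⟩ := exists_mul_eq_of_ker_eq hker
  rw [mul_fromCols, fromCols_ext_iff, Matrix.mul_neg, neg_inj] at hg
  exact ⟨g, hg⟩

/- A degenerate relation factors through one fewer column on the left; the two lemmas below
cover the two ways of being degenerate. -/
lemma exists_le_range_mulVecLin {m : ℕ} {P : Submodule K (Fin (m + 1) → K)} (hP : P ≠ ⊤) :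
    ∃ Q : Matrix (Fin (m + 1)) (Fin m) K, P ≤ LinearMap.range Q.mulVecLin := by
  have hfinrank : Module.finrank K P ≤ Module.finrank K (Fin m → K) := by
    have := Submodule.finrank_lt hP
    rw [Module.finrank_fin_fun] at this ⊢
    omega
  obtain ⟨f, hf⟩ := finrank_le_iff_exists_linearMap.1 hfinrank
  obtain ⟨g, hg⟩ := f.exists_leftInverse_of_injective (LinearMap.ker_eq_bot.2 hf)
  refine ⟨LinearMap.toMatrix' (P.subtype ∘ₗ g), fun x hx ↦ ⟨f ⟨x, hx⟩, ?_⟩⟩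
  rw [mulVecLin_apply, LinearMap.toMatrix'_mulVec, LinearMap.comp_apply, ← LinearMap.comp_apply g,
    hg, LinearMap.id_apply, Submodule.subtype_apply]

lemma exists_eq_mul_of_mulVec_eq_zero {m : ℕ} {z : Fin (m + 1) → K} (hz : z ≠ 0) :
    ∃ P : Matrix (Fin m) (Fin (m + 1)) K, ∀ S : Matrix ι (Fin (m + 1)) K, S *ᵥ z = 0 →
      ∃ S' : Matrix ι (Fin m) K, S' * P = S := by
  have hfinrank : Module.finrank K ((Fin (m + 1) → K) ⧸ K ∙ z) = Module.finrank K (Fin m → K) := by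
    have := (K ∙ z).finrank_quotient_add_finrank
    rw [finrank_span_singleton hz, Module.finrank_fin_fun] at this
    rw [Module.finrank_fin_fun]
    omega
  let e := LinearEquiv.ofFinrankEq _ _ hfinrank
  refine ⟨LinearMap.toMatrix' (e.toLinearMap ∘ₗ (K ∙ z).mkQ), fun S hS ↦ ?_⟩
  have hle : K ∙ z ≤ LinearMap.ker S.mulVecLin :=
    (Submodule.span_singleton_le_iff_mem _ _).2 hS
  refine ⟨LinearMap.toMatrix' ((K ∙ z).liftQ S.mulVecLin hle ∘ₗ e.symm.toLinearMap), ?_⟩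
  rw [← LinearMap.toMatrix'_comp, LinearMap.comp_assoc, ← LinearMap.comp_assoc (K ∙ z).mkQ,
    LinearEquiv.symm_comp, LinearMap.id_comp, Submodule.liftQ_mkQ]
  exact LinearMap.toMatrix'_toLin' S

lemma exists_eq_relSpace_one [DecidableEq κ] {R : Submodule K ((κ → K) × (κ → K))}
    (hfst : R.map (LinearMap.fst K _ _) = ⊤) (hker : ∀ z, (z, 0) ∈ R → z = 0) :
    ∃ G : GL κ K, R = relSpace 1 G.1 := by
  have hsurj : Function.Surjective (LinearMap.fst K (κ → K) (κ → K) ∘ₗ R.subtype) := by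
    rw [← LinearMap.range_eq_top, LinearMap.range_comp, Submodule.range_subtype, hfst]
  have hinj : Function.Injective (LinearMap.snd K (κ → K) (κ → K) ∘ₗ R.subtype) := by
    refine (injective_iff_map_eq_zero _).2 fun p hp ↦ Subtype.ext (Prod.ext (hker _ ?_) hp)
    have hp' : (p.1.1, 0) = p.1 := Prod.ext rfl hp.symm
    exact hp' ▸ p.2
  have hfinrank : Module.finrank K R = Module.finrank K (κ → K) :=
    le_antisymm (LinearMap.finrank_le_finrank_of_injective hinj)
      (LinearMap.finrank_le_finrank_of_surjective hsurj)
  obtain ⟨e, he⟩ := Submodule.exists_equiv_eq_graph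
    ⟨(LinearMap.injective_iff_surjective_of_finrank_eq_finrank hfinrank).2 hsurj, hsurj⟩
    ⟨hinj, (LinearMap.injective_iff_surjective_of_finrank_eq_finrank hfinrank).1 hinj⟩
  refine ⟨⟨LinearMap.toMatrix' e.symm, LinearMap.toMatrix' e, ?_, ?_⟩, ?_⟩
  · rw [← LinearMap.toMatrix'_comp, LinearEquiv.symm_comp, LinearMap.toMatrix'_id]
  · rw [← LinearMap.toMatrix'_comp, LinearEquiv.comp_symm, LinearMap.toMatrix'_id]
  · ext p
    rw [he, LinearMap.mem_graph_iff, mem_relSpace, one_mulVec, LinearMap.toMatrix'_mulVec]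
    exact eq_comm.trans e.eq_symm_apply.symm

end LinearRelations

section MoebiusInversion

lemma exists_forall_sum_le_eq {k X : Type*} [Field k] [Fintype X] [PartialOrder X]
    [DecidableLE X] (κ : X → k) : ∃ c : X → k, ∀ x, ∑ y with y ≤ x, c y = κ x := by
  let zeta : (X → k) →ₗ[k] (X → k) := LinearMap.pi fun x ↦ ∑ y with y ≤ x, LinearMap.proj y
  have zeta_apply (c : X → k) (x : X) : zeta c x = ∑ y with y ≤ x, c y := by
    simp only [zeta, LinearMap.pi_apply, LinearMap.sum_apply, LinearMap.proj_apply]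
  have zeta_injective : Function.Injective zeta := by
    refine (injective_iff_map_eq_zero _).2 fun c hc ↦ funext fun x ↦ ?_
    induction x using WellFoundedLT.induction with
    | ind x ih =>
      have hx := congrFun hc x
      rwa [zeta_apply, Finset.sum_eq_single_of_mem x (by simp) fun y hy hyx ↦
        ih y (lt_of_le_of_ne (Finset.mem_filter.1 hy).2 hyx)] at hx
  obtain ⟨c, hc⟩ := LinearMap.injective_iff_surjective.1 zeta_injective κ
  exact ⟨c, fun x ↦ (zeta_apply c x).symm.trans (congrFun hc x)⟩

end MoebiusInversion

section RelationOperators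

open Representation

variable {K : Type} [Field K] {n i j : ℕ}

lemma intertwiningMap_single_apply_eq_of_relSpace_eq [DecidableEq K]
    (p : IntertwiningMap (permRep (F := K) n j) (permRep n i)) {S S' : Matrix (Fin n) (Fin i) K}
    {T T' : Matrix (Fin n) (Fin j) K} (h : relSpace S T = relSpace S' T') :
    p (Pi.single T 1) S = p (Pi.single T' 1) S' := by
  obtain ⟨g, rfl, rfl⟩ := exists_units_mul_eq_of_relSpace_eq h
  rw [← permRep_single, p.isIntertwining, permRep_apply, ← Matrix.mul_assoc, Units.inv_mul,
    Matrix.one_mul]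

variable [Fintype K]

open Classical in
variable (n) in
/-- The intertwining operator that sums a function over all `T` such that the pair `(S, T)`
satisfies the linear relations `R`. -/
noncomputable def relationOp (R : Submodule K ((Fin i → K) × (Fin j → K))) :
    IntertwiningMap (permRep (F := K) n j) (permRep n i) where
  toLinearMap := LinearMap.pi fun S ↦ ∑ T with R ≤ relSpace S T, LinearMap.proj T
  isIntertwining' g := by
    refine LinearMap.ext fun f ↦ funext fun S ↦ ?_
    simp only [LinearMap.comp_apply, LinearMap.pi_apply, LinearMap.sum_apply,
      LinearMap.proj_apply, permRep_apply]
    refine Finset.sum_bijective (g⁻¹.1 * ·) ?_ (fun T ↦ ?_) fun T _ ↦ rfl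
    · refine Function.bijective_iff_has_inverse.2 ⟨(g.1 * ·), fun T ↦ ?_, fun T ↦ ?_⟩
      · simp only [← Matrix.mul_assoc, Units.mul_inv, Matrix.one_mul]
      · simp only [← Matrix.mul_assoc, Units.inv_mul, Matrix.one_mul]
    · simp only [Finset.mem_filter_univ, relSpace_units_mul]

open Classical in
lemma relationOp_apply (R : Submodule K ((Fin i → K) × (Fin j → K)))
    (f : Matrix (Fin n) (Fin j) K → ℂ) (S : Matrix (Fin n) (Fin i) K) :
    relationOp n R f S = ∑ T with R ≤ relSpace S T, f T := by
  change LinearMap.pi _ f S = _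
  simp only [LinearMap.pi_apply, LinearMap.sum_apply, LinearMap.proj_apply]

lemma relationOp_relSpace_one (G : Matrix (Fin i) (Fin j) K) (f : Matrix (Fin n) (Fin j) K → ℂ)
    (S : Matrix (Fin n) (Fin i) K) : relationOp n (relSpace 1 G) f S = f (S * G) := by
  classical
  simp only [relationOp_apply, relSpace_one_le_iff, Finset.filter_eq, Finset.mem_univ, if_true,
    Finset.sum_singleton]

/- The matrix entries of `p` are a function of `relSpace S T`, which Möbius inversion over the
lattice of relations expands in the indicators of `R ≤ relSpace S T`. -/
lemma exists_eq_sum_smul_relationOp [Fintype (Submodule K ((Fin i → K) × (Fin j → K)))]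
    (p : IntertwiningMap (permRep (F := K) n j) (permRep n i)) :
    ∃ c : Submodule K ((Fin i → K) × (Fin j → K)) → ℂ,
      ∀ f, p f = ∑ R, c R • relationOp n R f := by
  classical
  let entry (q : Matrix (Fin n) (Fin i) K × Matrix (Fin n) (Fin j) K) : ℂ := p (Pi.single q.2 1) q.1
  have hentry : entry.FactorsThrough fun q ↦ relSpace q.1 q.2 :=
    fun _ _ h ↦ intertwiningMap_single_apply_eq_of_relSpace_eq p h
  obtain ⟨c, hc⟩ :=
    exists_forall_sum_le_eq (Function.extend (fun q ↦ relSpace q.1 q.2) entry 0)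
  refine ⟨c, fun f ↦ funext fun S ↦ ?_⟩
  calc p f S = ∑ T, f T * entry (S, T) := by
        conv_lhs => rw [pi_eq_sum_univ' f]
        simp [entry]
    _ = ∑ T, ∑ R with R ≤ relSpace S T, c R * f T := by
        refine Finset.sum_congr rfl fun T _ ↦ ?_
        rw [← Finset.sum_mul, hc, hentry.extend_apply 0 (S, T), mul_comm]
    _ = ∑ R, c R * ∑ T with R ≤ relSpace S T, f T := by
        simp only [Finset.mul_sum, Finset.sum_filter, mul_ite, mul_zero]
        rw [Finset.sum_comm]
    _ = (∑ R, c R • relationOp n R f) S := by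
        simp only [Finset.sum_apply, Pi.smul_apply, smul_eq_mul, relationOp_apply]

lemma relationOp_comap_apply {R : Submodule K ((Fin i → K) × (Fin j → K))} {m : ℕ}
    {Q : Matrix (Fin i) (Fin m) K}
    (hQ : R.map (LinearMap.fst K _ _) ≤ LinearMap.range Q.mulVecLin)
    (f : Matrix (Fin n) (Fin j) K → ℂ) (S : Matrix (Fin n) (Fin i) K) :
    relationOp n (R.comap (Q.mulVecLin.prodMap LinearMap.id)) f (S * Q) =
      relationOp n R f S := by
  classical
  have hrange : R ≤ LinearMap.range (Q.mulVecLin.prodMap LinearMap.id) := by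
    rintro ⟨x, y⟩ hxy
    obtain ⟨x', rfl⟩ := hQ ⟨_, hxy, rfl⟩
    exact ⟨(x', y), rfl⟩
  simp only [relationOp_apply, relSpace_mul_left, ← Submodule.map_le_iff_le_comap,
    Submodule.map_comap_eq, inf_eq_right.2 hrange]

lemma relationOp_map_apply (R : Submodule K ((Fin i → K) × (Fin j → K))) {m : ℕ}
    (P : Matrix (Fin m) (Fin i) K) (f : Matrix (Fin n) (Fin j) K → ℂ)
    (S : Matrix (Fin n) (Fin m) K) :
    relationOp n (R.map (P.mulVecLin.prodMap LinearMap.id)) f S = relationOp n R f (S * P) := by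
  classical
  simp only [relationOp_apply, relSpace_mul_left, Submodule.map_le_iff_le_comap]

lemma relationOp_apply_eq_zero {R : Submodule K ((Fin i → K) × (Fin j → K))} {z : Fin i → K}
    (hz : (z, 0) ∈ R) (f : Matrix (Fin n) (Fin j) K → ℂ) {S : Matrix (Fin n) (Fin i) K}
    (hS : S *ᵥ z ≠ 0) : relationOp n R f S = 0 := by
  classical
  rw [relationOp_apply, Finset.sum_eq_zero]
  refine fun T hT ↦ absurd ?_ hS
  rw [mem_relSpace.1 ((Finset.mem_filter.1 hT).2 hz), mulVec_zero]

variable (n) in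
lemma exists_relationOp_eq_zero_imp {m : ℕ}
    {R : Submodule K ((Fin (m + 1) → K) × (Fin (m + 1) → K))}
    (hR : ∀ G : GL (Fin (m + 1)) K, R ≠ relSpace 1 G.1) :
    ∃ R' : Submodule K ((Fin m → K) × (Fin (m + 1) → K)),
      ∀ f, relationOp n R' f = 0 → relationOp n R f = 0 := by
  by_cases hfst : R.map (LinearMap.fst K _ _) = ⊤
  · obtain ⟨z, hzR, hz⟩ : ∃ z, (z, 0) ∈ R ∧ z ≠ 0 := by
      by_contra! hker
      obtain ⟨G, hG⟩ := exists_eq_relSpace_one hfst hker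
      exact hR G hG
    obtain ⟨P, hP⟩ := exists_eq_mul_of_mulVec_eq_zero (ι := Fin n) hz
    refine ⟨R.map (P.mulVecLin.prodMap LinearMap.id), fun f hf ↦ funext fun S ↦ ?_⟩
    by_cases hS : S *ᵥ z = 0
    · obtain ⟨S', rfl⟩ := hP S hS
      rw [← relationOp_map_apply, hf]
      rfl
    · exact relationOp_apply_eq_zero hzR f hS
  · obtain ⟨Q, hQ⟩ := exists_le_range_mulVecLin hfst
    refine ⟨R.comap (Q.mulVecLin.prodMap LinearMap.id), fun f hf ↦ funext fun S ↦ ?_⟩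
    rw [← relationOp_comap_apply hQ, hf]
    rfl

end RelationOperators

section TestFunctions

open Representation

variable {χ₀ : AddChar F ℂ} {n j a b : ℕ}

lemma intertwiningMap_mem_charEigenspace {W : Type} [AddCommGroup W] [Module ℂ W]
    {ρ : Representation ℂ (GL (Fin n) F) V} {σ : Representation ℂ (GL (Fin n) F) W}
    (φ : IntertwiningMap ρ σ) {hab : a + b ≤ n} {T : Matrix (Fin b) (Fin a) F} {v : V}
    (hv : v ∈ charEigenspace χ₀ ρ hab T) : φ v ∈ charEigenspace χ₀ σ hab T := by
  refine mem_charEigenspace.2 fun X ↦ ?_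
  rw [← φ.isIntertwining, mem_charEigenspace.1 hv, map_smul]

variable (χ₀) in
/-- The function on `n × j` matrices supported on those whose last `b` rows are `L`, where it is a
character of the first `a` rows. It is an eigenvector of `U_{a,b}` with character
`γ_{L * A}`. -/
noncomputable def testFunction (ha : a ≤ n) (hb : b ≤ n) (L : Matrix (Fin b) (Fin j) F)
    (A : Matrix (Fin j) (Fin a) F) (S : Matrix (Fin n) (Fin j) F) : ℂ :=
  if (lastCols F hb)ᵀ * S = L then traceChar χ₀ A (-((firstCols F ha)ᵀ * S)) else 0

lemma testFunction_mem_charEigenspace (ha : a ≤ n) (hb : b ≤ n) (hab : a + b ≤ n)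
    (L : Matrix (Fin b) (Fin j) F) (A : Matrix (Fin j) (Fin a) F) :
    testFunction χ₀ ha hb L A ∈ charEigenspace χ₀ (permRep n j) hab (L * A) := by
  refine mem_charEigenspace.2 fun X ↦ funext fun S ↦ ?_
  have hlast : (lastCols F hb)ᵀ * ((uU n a b hab (-X)).1 * S) = (lastCols F hb)ᵀ * S := by
    rw [coe_uU hab ha hb, Matrix.add_mul, Matrix.one_mul, Matrix.mul_add]
    simp only [← Matrix.mul_assoc, transpose_lastCols_mul_firstCols ha hb hab, Matrix.zero_mul,
      add_zero]
  have hfirst : (firstCols F ha)ᵀ * ((uU n a b hab (-X)).1 * S) =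
      (firstCols F ha)ᵀ * S - X * ((lastCols F hb)ᵀ * S) := by
    rw [coe_uU hab ha hb, Matrix.add_mul, Matrix.one_mul, Matrix.mul_add, sub_eq_add_neg]
    simp only [← Matrix.mul_assoc, transpose_firstCols_mul_self, Matrix.one_mul, Matrix.neg_mul]
  rw [permRep_apply, ← uU_neg, Pi.smul_apply, smul_eq_mul]
  simp only [testFunction, hlast, hfirst]
  split_ifs with hS
  · rw [hS, neg_sub, sub_eq_add_neg, AddChar.map_add_eq_mul, traceChar_mul_right]
  · rw [mul_zero]

lemma relationOp_testFunction_apply (ha : a ≤ n) (hb : b ≤ n) (hab : a + b ≤ n)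
    {L : Matrix (Fin b) (Fin j) F} {L' : Matrix (Fin j) (Fin b) F} (hL : L' * L = 1)
    (A : Matrix (Fin j) (Fin a) F) (G G₀ : GL (Fin j) F) :
    relationOp n (relSpace 1 G.1) (testFunction χ₀ ha hb L A) (lastCols F hb * (L * G₀⁻¹.1)) =
      if G = G₀ then 1 else 0 := by
  have hiff : L * G₀⁻¹.1 * G.1 = L ↔ G = G₀ := by
    refine ⟨fun h ↦ ?_, fun h ↦ by rw [h, Matrix.mul_assoc, Units.inv_mul, Matrix.mul_one]⟩
    have hinv := congrArg (L' * ·) h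
    simp only [← Matrix.mul_assoc, hL, Matrix.one_mul] at hinv
    exact (inv_mul_eq_one.1 (Units.ext hinv)).symm
  rw [relationOp_relSpace_one, testFunction]
  simp only [← Matrix.mul_assoc, transpose_lastCols_mul_self, Matrix.one_mul, hiff,
    transpose_firstCols_mul_lastCols ha hb hab, Matrix.zero_mul, neg_zero,
    AddChar.map_zero_eq_one]

lemma coeff_relSpace_one_eq_zero (ha : a ≤ n) (hb : b ≤ n) (hab : a + b ≤ n)
    {L : Matrix (Fin b) (Fin j) F} {L' : Matrix (Fin j) (Fin b) F} (hL : L' * L = 1)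
    {A : Matrix (Fin j) (Fin a) F} [Fintype (Submodule F ((Fin j → F) × (Fin j → F)))]
    {c : Submodule F ((Fin j → F) × (Fin j → F)) → ℂ}
    (hsum : ∑ R, c R • relationOp n R (testFunction χ₀ ha hb L A) = 0)
    (hdeg : ∀ R : Submodule F ((Fin j → F) × (Fin j → F)),
      (∀ G : GL (Fin j) F, R ≠ relSpace 1 G.1) → relationOp n R (testFunction χ₀ ha hb L A) = 0)
    (G₀ : GL (Fin j) F) : c (relSpace 1 G₀.1) = 0 := by
  have heval := congrFun hsum (lastCols F hb * (L * G₀⁻¹.1))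
  rw [Finset.sum_apply, Fintype.sum_eq_single (relSpace 1 G₀.1)] at heval
  · simpa only [Pi.smul_apply, relationOp_testFunction_apply ha hb hab hL, if_true, smul_eq_mul,
      mul_one, Pi.zero_apply] using heval
  · intro R hR
    by_cases hG : ∃ G : GL (Fin j) F, R = relSpace 1 G.1
    · obtain ⟨G, rfl⟩ := hG
      rw [Pi.smul_apply, relationOp_testFunction_apply ha hb hab hL, if_neg, smul_zero]
      exact fun h ↦ hR (h ▸ rfl)
    · rw [hdeg R (not_exists.1 hG), smul_zero, Pi.zero_apply]

end TestFunctions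

section Descent

open Representation

variable {χ₀ : AddChar F ℂ} {n m a b : ℕ}

lemma relationOp_eq_zero_of_mem_charEigenspace (hχ₀ : χ₀ ≠ 1) {hab : a + b ≤ n}
    {T : Matrix (Fin b) (Fin a) F} (hT : T.rank = m + 1)
    {f : Matrix (Fin n) (Fin (m + 1)) F → ℂ}
    (hf : f ∈ charEigenspace χ₀ (permRep n (m + 1)) hab T)
    {R : Submodule F ((Fin (m + 1) → F) × (Fin (m + 1) → F))}
    (hR : ∀ G : GL (Fin (m + 1)) F, R ≠ relSpace 1 G.1) : relationOp n R f = 0 := by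
  obtain ⟨R', hR'⟩ := exists_relationOp_eq_zero_imp n hR
  refine hR' f (by_contra fun hne ↦ ?_)
  have := rank_le_of_charAppears_permRep hχ₀
    (charAppears_of_mem hne (intertwiningMap_mem_charEigenspace (relationOp n R') hf))
  omega

lemma relationOp_eq_zero_of_not_occurs {K : Type} [Field K] [Fintype K]
    {τ : Representation ℂ (GL (Fin n) K) V}
    (hocc : ¬ Occurs τ (permRep n m)) (φ : IntertwiningMap τ (permRep n (m + 1)))
    {R : Submodule K ((Fin (m + 1) → K) × (Fin (m + 1) → K))}
    (hR : ∀ G : GL (Fin (m + 1)) K, R ≠ relSpace 1 G.1) (v : V) : relationOp n R (φ v) = 0 := by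
  obtain ⟨R', hR'⟩ := exists_relationOp_eq_zero_imp n hR
  refine hR' (φ v) (by_contra fun hne ↦ hocc ?_)
  exact occurs_iff_exists_intertwiningMap.2
    ⟨(relationOp n R').comp φ, fun h ↦ hne (DFunLike.congr_fun h v)⟩

lemma rank_firstCols_mul_transpose {K : Type*} [Field K] {j : ℕ} (ha : j ≤ a) (hb : j ≤ b) :
    (firstCols K hb * (firstCols K ha)ᵀ).rank = j := by
  refine le_antisymm ((rank_mul_le_left _ _).trans (rank_le_width _)) ?_
  have hone : (firstCols K hb)ᵀ * (firstCols K hb * (firstCols K ha)ᵀ) * firstCols K ha = 1 := by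
    rw [← Matrix.mul_assoc, transpose_firstCols_mul_self, Matrix.one_mul,
      transpose_firstCols_mul_self]
  calc j = ((firstCols K hb)ᵀ * (firstCols K hb * (firstCols K ha)ᵀ) * firstCols K ha).rank := by
        rw [hone, rank_one, Fintype.card_fin]
    _ ≤ _ := (rank_mul_le_left _ _).trans (rank_mul_le_right _ _)

/- If `τ` is not already in functions on `n × m` matrices, the projection `φ ∘ ψ` onto its copy
has no degenerate component; being zero on a test function of rank `m + 1`, it has no invertible
component either. -/
lemma occurs_permRep_of_succ (hχ₀ : χ₀ ≠ 1) (hab : a + b ≤ n) (ha : m + 1 ≤ a) (hb : m + 1 ≤ b)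
    {τ : Representation ℂ (GL (Fin n) F) V} (hτ : IsIrred τ)
    (hocc : Occurs τ (permRep n (m + 1)))
    (hrank : ∀ T, CharAppears χ₀ τ hab T → T.rank ≠ m + 1) : Occurs τ (permRep n m) := by
  by_contra hnot
  have := Fintype.ofFinite (Submodule F ((Fin (m + 1) → F) × (Fin (m + 1) → F)))
  obtain ⟨φ, hφ⟩ := occurs_iff_exists_intertwiningMap.1 hocc
  obtain ⟨ψ, hψ⟩ := hτ.exists_leftInverse hφ
  obtain ⟨c, hc⟩ := exists_eq_sum_smul_relationOp (φ.comp ψ)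
  have hT := rank_firstCols_mul_transpose (K := F) ha hb
  have hf := testFunction_mem_charEigenspace (χ₀ := χ₀) (by omega) (by omega) hab
    (firstCols F hb) (firstCols F ha)ᵀ
  have hψf : ψ (testFunction χ₀ (by omega) (by omega) (firstCols F hb) (firstCols F ha)ᵀ) = 0 :=
    by_contra fun hne ↦
      hrank _ (charAppears_of_mem hne (intertwiningMap_mem_charEigenspace ψ hf)) hT
  have hcoeff (G : GL (Fin (m + 1)) F) : c (relSpace 1 G.1) = 0 := by
    refine coeff_relSpace_one_eq_zero (by omega) (by omega) hab (transpose_firstCols_mul_self hb)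
      ?_ (fun R hR ↦ relationOp_eq_zero_of_mem_charEigenspace hχ₀ hT hf hR) G
    rw [← hc, IntertwiningMap.comp_apply, hψf, map_zero]
  refine hφ (DFunLike.ext _ _ fun v ↦ ?_)
  calc φ v = (φ.comp ψ) (φ v) := by rw [IntertwiningMap.comp_apply, hψ v]
    _ = ∑ R, c R • relationOp n R (φ v) := hc _
    _ = 0 := Finset.sum_eq_zero fun R _ ↦ ?_
  by_cases hG : ∃ G : GL (Fin (m + 1)) F, R = relSpace 1 G.1
  · obtain ⟨G, rfl⟩ := hG
    rw [hcoeff, zero_smul]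
  · rw [relationOp_eq_zero_of_not_occurs hnot φ (not_exists.1 hG), smul_zero]

lemma occurs_permRep_of_le (hχ₀ : χ₀ ≠ 1) {τ : Representation ℂ (GL (Fin n) F) V}
    (hτ : IsIrred τ) {k j : ℕ} (hab : a + b ≤ n)
    (hrank : ∀ T, CharAppears χ₀ τ hab T → T.rank ≤ k) (hkj : k ≤ j) (ha : j ≤ a) (hb : j ≤ b)
    (hocc : Occurs τ (permRep n j)) : Occurs τ (permRep n k) := by
  induction j, hkj using Nat.le_induction with
  | base => exact hocc
  | succ j hkj ih =>
    refine ih (by omega) (by omega) (occurs_permRep_of_succ hχ₀ hab ha hb hτ hocc fun T hT ↦ ?_)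
    have := hrank T hT
    omega

end Descent

section LeviConjugation

variable {n a b : ℕ} {χ₀ : AddChar F ℂ} {π : Representation ℂ (GL (Fin n) F) V} {hab : a + b ≤ n}

lemma uU_mul_eq_mul_uU (ha : a ≤ n) (hb : b ≤ n) {g : GL (Fin n) F}
    {P : Matrix (Fin a) (Fin a) F} {Q : Matrix (Fin b) (Fin b) F}
    (hP : (g : Matrix (Fin n) (Fin n) F) * firstCols F ha = firstCols F ha * P)
    (hQ : (lastCols F hb)ᵀ * (g : Matrix (Fin n) (Fin n) F) = Q * (lastCols F hb)ᵀ)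
    {X Y : Matrix (Fin a) (Fin b) F} (hXY : X * Q = P * Y) :
    uU n a b hab X * g = g * uU n a b hab Y := by
  apply Units.ext
  rw [Units.val_mul, Units.val_mul, coe_uU hab ha hb, coe_uU hab ha hb, one_add_mul, mul_one_add,
    Matrix.mul_assoc, hQ, ← Matrix.mul_assoc, ← Matrix.mul_assoc, ← Matrix.mul_assoc, hP,
    Matrix.mul_assoc _ X, hXY, ← Matrix.mul_assoc]

lemma map_mem_charEigenspace (ha : a ≤ n) (hb : b ≤ n) {g : GL (Fin n) F} {P : GL (Fin a) F}
    {Q : Matrix (Fin b) (Fin b) F}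
    (hP : (g : Matrix (Fin n) (Fin n) F) * firstCols F ha = firstCols F ha * (P⁻¹).1)
    (hQ : (lastCols F hb)ᵀ * (g : Matrix (Fin n) (Fin n) F) = Q * (lastCols F hb)ᵀ)
    {T : Matrix (Fin b) (Fin a) F} {v : V} (hv : v ∈ charEigenspace χ₀ π hab T) :
    π g v ∈ charEigenspace χ₀ π hab (Q * T * P.1) := by
  refine mem_charEigenspace.2 fun X ↦ ?_
  have hXY : X * Q = (P⁻¹).1 * (P.1 * X * Q) := by
    rw [Matrix.mul_assoc P.1, ← Matrix.mul_assoc, Units.inv_mul, Matrix.one_mul]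
  rw [← Module.End.mul_apply, ← _root_.map_mul, uU_mul_eq_mul_uU ha hb hP hQ hXY, _root_.map_mul,
    Module.End.mul_apply, mem_charEigenspace.1 hv, map_smul, traceChar_mul_right,
    traceChar_mul_left]

lemma exists_levi {K : Type*} [Field K] (ha : a ≤ n) (hb : b ≤ n) (hab : a + b = n)
    (P : GL (Fin a) K) (Q : GL (Fin b) K) :
    ∃ g : GL (Fin n) K,
      (g : Matrix (Fin n) (Fin n) K) * firstCols K ha = firstCols K ha * P.1 ∧
      (lastCols K hb)ᵀ * (g : Matrix (Fin n) (Fin n) K) = Q.1 * (lastCols K hb)ᵀ := by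
  let M (P : GL (Fin a) K) (Q : GL (Fin b) K) : Matrix (Fin n) (Fin n) K :=
    firstCols K ha * P.1 * (firstCols K ha)ᵀ + lastCols K hb * Q.1 * (lastCols K hb)ᵀ
  have hfirst (P : GL (Fin a) K) (Q : GL (Fin b) K) :
      M P Q * firstCols K ha = firstCols K ha * P.1 := by
    rw [Matrix.add_mul, Matrix.mul_assoc, Matrix.mul_assoc _ _ (firstCols K ha),
      transpose_firstCols_mul_self, transpose_lastCols_mul_firstCols ha hb hab.le, Matrix.mul_one,
      Matrix.mul_zero, add_zero]
  have hlast (P : GL (Fin a) K) (Q : GL (Fin b) K) :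
      M P Q * lastCols K hb = lastCols K hb * Q.1 := by
    rw [Matrix.add_mul, Matrix.mul_assoc, Matrix.mul_assoc _ _ (lastCols K hb),
      transpose_lastCols_mul_self, transpose_firstCols_mul_lastCols ha hb hab.le, Matrix.mul_one,
      Matrix.mul_zero, zero_add]
  have hinv (P : GL (Fin a) K) (Q : GL (Fin b) K) : M P Q * M P⁻¹ Q⁻¹ = 1 := by
    rw [Matrix.mul_add, ← Matrix.mul_assoc, ← Matrix.mul_assoc, ← Matrix.mul_assoc,
      ← Matrix.mul_assoc, hfirst, hlast, Matrix.mul_assoc _ P.1, Matrix.mul_assoc _ Q.1,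
      Units.mul_inv, Units.mul_inv, Matrix.mul_one, Matrix.mul_one,
      firstCols_mul_transpose_add ha hb hab]
  refine ⟨⟨M P Q, M P⁻¹ Q⁻¹, hinv P Q, by simpa only [inv_inv] using hinv P⁻¹ Q⁻¹⟩,
    hfirst P Q, ?_⟩
  change (lastCols K hb)ᵀ * M P Q = _
  rw [Matrix.mul_add, ← Matrix.mul_assoc, ← Matrix.mul_assoc, ← Matrix.mul_assoc,
    ← Matrix.mul_assoc, transpose_lastCols_mul_firstCols ha hb hab.le, transpose_lastCols_mul_self,
    Matrix.zero_mul, Matrix.zero_mul, zero_add, Matrix.one_mul]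

lemma charAppears_mul_mul (hab : a + b = n) {T : Matrix (Fin b) (Fin a) F}
    (h : CharAppears χ₀ π hab.le T) (Q : GL (Fin b) F) (P : GL (Fin a) F) :
    CharAppears χ₀ π hab.le (Q.1 * T * P.1) := by
  obtain ⟨v, hvT, hv⟩ := exists_mem_of_charAppears h
  obtain ⟨g, hP, hQ⟩ := exists_levi (by omega) (by omega) hab P⁻¹ Q
  exact charAppears_of_mem ((map_ne_zero_iff _ (π.apply_bijective g).injective).2 hv)
    (map_mem_charEigenspace _ _ hP hQ hvT)

end LeviConjugation

section TwoBlocks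

variable {n a b c k : ℕ} {χ₀ : AddChar F ℂ} {π : Representation ℂ (GL (Fin n) F) V}

lemma uU_commute (hab : a + b ≤ n) (X Y : Matrix (Fin a) (Fin b) F) :
    Commute (uU n a b hab X) (uU n a b hab Y) := by
  rw [commute_iff_eq, ← uU_add, ← uU_add, add_comm]

lemma uU_firstCols_mul {hab : a + b ≤ n} {hkc : k + c ≤ n} (hka : k ≤ a) (hbc : b ≤ c)
    (X : Matrix (Fin k) (Fin b) F) :
    uU n a b hab (firstCols F hka * X) = uU n k c hkc (X * (lastCols F hbc)ᵀ) := by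
  apply Units.ext
  rw [coe_uU hab (by omega) (by omega), coe_uU hkc (by omega) (by omega), ← Matrix.mul_assoc,
    firstCols_mul_firstCols, ← Matrix.mul_assoc, Matrix.mul_assoc _ (lastCols F hbc)ᵀ,
    ← transpose_mul, lastCols_mul_lastCols]

lemma eq_of_forall_traceChar_smul_eq {κ μ : Type*} [Fintype κ] [Fintype μ] {K : Type*} [Field K]
    {χ₀ : AddChar K ℂ} (hχ₀ : χ₀ ≠ 1) {A B : Matrix κ μ K} {w : V} (hw : w ≠ 0)
    (h : ∀ X, traceChar χ₀ A X • w = traceChar χ₀ B X • w) : A = B :=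
  traceChar_injective hχ₀ (DFunLike.ext _ _ fun X ↦ smul_left_injective ℂ hw (h X))

lemma transpose_lastCols_mul_eq_of_mem_left (hχ₀ : χ₀ ≠ 1) {hab : a + b ≤ n} {hkc : k + c ≤ n}
    (hka : k ≤ a) (hbc : b ≤ c) {T : Matrix (Fin b) (Fin a) F} {S : Matrix (Fin c) (Fin k) F}
    {v : V} (hv : v ∈ charEigenspace χ₀ π hab T) (hw : charProj χ₀ π hkc S v ≠ 0) :
    (lastCols F hbc)ᵀ * S = T * firstCols F hka := by
  refine eq_of_forall_traceChar_smul_eq hχ₀ hw fun X ↦ ?_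
  rw [← traceChar_mul_right, ← traceChar_mul_left, ← mem_charEigenspace.1 (charProj_mem S v),
    ← charProj_apply_of_commute (uU_commute hkc _), ← uU_firstCols_mul (hab := hab) hka hbc,
    mem_charEigenspace.1 hv, map_smul]

lemma transpose_lastCols_mul_eq_of_mem_right (hχ₀ : χ₀ ≠ 1) {hab : a + b ≤ n} {hkc : k + c ≤ n}
    (hka : k ≤ a) (hbc : b ≤ c) {T : Matrix (Fin b) (Fin a) F} {S : Matrix (Fin c) (Fin k) F}
    {v : V} (hv : v ∈ charEigenspace χ₀ π hkc S) (hw : charProj χ₀ π hab T v ≠ 0) :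
    (lastCols F hbc)ᵀ * S = T * firstCols F hka := by
  refine eq_of_forall_traceChar_smul_eq hχ₀ hw fun X ↦ ?_
  rw [← traceChar_mul_right, ← traceChar_mul_left, ← mem_charEigenspace.1 (charProj_mem T v),
    ← charProj_apply_of_commute (uU_commute hab _), uU_firstCols_mul (hkc := hkc) hka hbc,
    mem_charEigenspace.1 hv, map_smul]

lemma charAppears_lastCols (hχ₀ : χ₀ ≠ 1) (hab : a + b = n) (hkc : k + c = n) (hka : k ≤ a)
    (hkb : k ≤ b) (hk : k ≤ c) {T : Matrix (Fin b) (Fin a) F} (hT : T.rank = k)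
    (h : CharAppears χ₀ π hab.le T) : CharAppears χ₀ π hkc.le (lastCols F hk) := by
  have hbc : b ≤ c := by omega
  obtain ⟨Q, P, hQP⟩ := exists_mul_mul_mul_basisColumns_eq (hT.trans (Fintype.card_fin k).symm)
    (Fin.castLE_injective hka) (Fin.natAdd_castLEEmb hkb).injective
  obtain ⟨v, hvT, hv⟩ := exists_mem_of_charAppears (charAppears_mul_mul hab h Q P)
  obtain ⟨S, hS⟩ := exists_charProj_ne_zero (hab := hkc.le) (π := π) hχ₀ hv
  have hlast : (lastCols F hbc)ᵀ * S = lastCols F hkb :=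
    (transpose_lastCols_mul_eq_of_mem_left hχ₀ hka hbc hvT hS).trans hQP
  have hker : LinearMap.ker S.mulVecLin = LinearMap.ker (lastCols F hk).mulVecLin := by
    rw [ker_mulVecLin_eq_bot_of_mul_eq_one (L := (lastCols F hkb)ᵀ * (lastCols F hbc)ᵀ)
      (by rw [Matrix.mul_assoc, hlast, transpose_lastCols_mul_self]),
      ker_mulVecLin_eq_bot_of_mul_eq_one (transpose_lastCols_mul_self hk)]
  obtain ⟨R, hR⟩ := exists_mul_eq_of_ker_eq hker
  have hRS := charAppears_mul_mul hkc (charAppears_of_mem hS (charProj_mem S v)) R 1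
  rwa [Units.val_one, Matrix.mul_one, hR] at hRS

lemma row_eq_zero_of_rank_le {K : Type*} [Field K] (hka : k ≤ a) (hkb : k ≤ b)
    {T : Matrix (Fin b) (Fin a) K} (hrank : T.rank ≤ k) (hT : T * firstCols K hka = lastCols K hkb)
    {r : Fin b} (hr : (r : ℕ) < b - k) (i : Fin a) : T r i = 0 := by
  rw [eq_mul_mul_of_rank_le hT (transpose_lastCols_mul_self hkb)
    (hrank.trans_eq (Fintype.card_fin k).symm), mul_apply]
  refine Finset.sum_eq_zero fun l _ ↦ ?_
  have hrl : r ≠ Fin.natAdd_castLEEmb hkb l := by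
    rw [ne_eq, Fin.ext_iff, Fin.natAdd_castLEEmb_apply_val]
    omega
  exact mul_eq_zero_of_left ((basisColumns_apply _ r l).trans (if_neg hrl)) _

lemma uU_single (hab : a + b ≤ n) (ha : a ≤ n) (hb : b ≤ n) (i : Fin a) (r : Fin b) (x : F) :
    uU n a b hab (single i r x) = glTransvection (castLE_ne_natAdd_castLEEmb ha hb hab i r) x := by
  ext1
  rw [coe_uU hab ha hb, SpecialLinearGroup.coe_GL_coe_matrix, SpecialLinearGroup.transvection_coe,
    basisColumns_mul_single_mul_transpose]

lemma apply_glTransvection_of_mem_charEigenspace (hχ₀ : χ₀ ≠ 1) {hab : a + b ≤ n}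
    {hkc : k + c ≤ n} (hka : k ≤ a) (hkb : k ≤ b) (hbc : b ≤ c) (ha : a ≤ n) (hb : b ≤ n)
    (hrank : ∀ T, CharAppears χ₀ π hab T → T.rank ≤ k) {v : V}
    (hv : v ∈ charEigenspace χ₀ π hkc (lastCols F (hkb.trans hbc))) (i : Fin a) {r : Fin b}
    (hr : (r : ℕ) < b - k) (x : F) :
    π (glTransvection (castLE_ne_natAdd_castLEEmb ha hb hab i r) x) v = v := by
  rw [← uU_single hab ha hb]
  conv_lhs => rw [← Module.End.one_apply (R := ℂ) v, ← sum_charProj hχ₀ (π := π) (hab := hab)]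
  conv_rhs => rw [← Module.End.one_apply (R := ℂ) v, ← sum_charProj hχ₀ (π := π) (hab := hab)]
  simp only [LinearMap.sum_apply, map_sum]
  refine Finset.sum_congr rfl fun T _ ↦ ?_
  rw [mem_charEigenspace.1 (charProj_mem T v)]
  by_cases hw : charProj χ₀ π hab T v = 0
  · rw [hw, smul_zero]
  have hT : T * firstCols F hka = lastCols F hkb := by
    rw [← transpose_lastCols_mul_eq_of_mem_right hχ₀ hka hbc hv hw, ← lastCols_mul_lastCols hkb hbc,
      ← Matrix.mul_assoc, transpose_lastCols_mul_self, Matrix.one_mul]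
  rw [traceChar_apply, trace_mul_single, row_eq_zero_of_rank_le hka hkb
    (hrank T (charAppears_of_mem hw (charProj_mem T v))) hT hr, smul_zero,
    AddChar.map_zero_eq_one, one_smul]

lemma map_mem_charEigenspace_lastCols (hkc : k + c = n) (hk : k ≤ c) (hkn : k ≤ n)
    {g : GL (Fin n) F} (hfirst : (g : Matrix (Fin n) (Fin n) F) * firstCols F hkn = firstCols F hkn)
    (hlast : (g : Matrix (Fin n) (Fin n) F) * lastCols F hkn = lastCols F hkn) {v : V}
    (hv : v ∈ charEigenspace χ₀ π hkc.le (lastCols F hk)) :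
    π g v ∈ charEigenspace χ₀ π hkc.le (lastCols F hk) := by
  have hcn : c ≤ n := by omega
  set Q := (lastCols F hcn)ᵀ * (g : Matrix (Fin n) (Fin n) F) * lastCols F hcn with hQdef
  have hQ : (lastCols F hcn)ᵀ * (g : Matrix (Fin n) (Fin n) F) = Q * (lastCols F hcn)ᵀ := by
    conv_lhs => rw [← Matrix.mul_one (_ * _), ← firstCols_mul_transpose_add hkn hcn hkc]
    rw [Matrix.mul_add, ← Matrix.mul_assoc, Matrix.mul_assoc _ _ (firstCols F hkn), hfirst,
      transpose_lastCols_mul_firstCols hkn hcn hkc.le, Matrix.zero_mul, zero_add,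
      ← Matrix.mul_assoc]
  have hQk : Q * lastCols F hk = lastCols F hk := by
    rw [hQdef, Matrix.mul_assoc, lastCols_mul_lastCols, Matrix.mul_assoc, hlast,
      ← lastCols_mul_lastCols hk hcn, ← Matrix.mul_assoc, transpose_lastCols_mul_self,
      Matrix.one_mul]
  have hP : (g : Matrix (Fin n) (Fin n) F) * firstCols F hkn =
      firstCols F hkn * ((1 : GL (Fin k) F)⁻¹).1 := by
    rw [inv_one, Units.val_one, Matrix.mul_one, hfirst]
  simpa only [hQk, Units.val_one, Matrix.mul_one] using map_mem_charEigenspace hkn hcn hP hQ hv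

end TwoBlocks

section ScaledVectors

variable {G : Type*} [Group G] (ρ : Representation ℂ G V)

/-- The subgroup of the group elements acting trivially on the subspace `U` of a representation. -/
def pointwiseFixer (U : Submodule ℂ V) : Subgroup G where
  carrier := {g | ∀ v ∈ U, ρ g v = v}
  one_mem' := fun v _ ↦ by rw [map_one, Module.End.one_apply]
  mul_mem' := fun {g h} hg hh v hv ↦ by
    rw [_root_.map_mul, Module.End.mul_apply, hh v hv, hg v hv]
  inv_mem' := fun {g} hg v hv ↦ by
    conv_lhs => rw [← hg v hv, ρ.inv_self_apply]

variable {ρ}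

lemma mul_mul_inv_mem_pointwiseFixer {U : Submodule ℂ V} {g u : G}
    (hg : ∀ v ∈ U, ρ g⁻¹ v ∈ U) (hu : u ∈ pointwiseFixer ρ U) :
    g * u * g⁻¹ ∈ pointwiseFixer ρ U := fun v hv ↦ by
  rw [_root_.map_mul, _root_.map_mul, Module.End.mul_apply, Module.End.mul_apply,
    hu _ (hg v hv), ρ.self_inv_apply]

lemma exists_mem_forall_exists_smul [FiniteDimensional ℂ V] [Finite G] [IsCyclic G]
    {U : Submodule ℂ V} (hU : U ≠ ⊥) (hinv : ∀ g, ∀ v ∈ U, ρ g v ∈ U) :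
    ∃ v ∈ U, v ≠ 0 ∧ ∀ g, ∃ z : ℂ, ρ g v = z • v := by
  obtain ⟨g₀, hg₀⟩ := IsCyclic.exists_generator (α := G)
  have : Nontrivial U := Submodule.nontrivial_iff_ne_bot.2 hU
  obtain ⟨z, hz⟩ := Module.End.exists_eigenvalue ((ρ g₀).restrict (hinv g₀))
  obtain ⟨v, hv⟩ := hz.exists_hasEigenvector
  have hv₀ : (v : V) ≠ 0 := fun h ↦ hv.2 (Subtype.ext h)
  have hvz : Module.End.HasEigenvector (ρ g₀) z (v : V) :=
    ⟨Module.End.mem_eigenspace_iff.2 (congrArg Subtype.val hv.apply_eq_smul), hv₀⟩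
  refine ⟨v, v.2, hv₀, fun g ↦ ?_⟩
  obtain ⟨m, rfl⟩ := (mem_powers_iff_mem_zpowers (x := g₀)).2 (hg₀ g)
  exact ⟨z ^ m, by rw [map_pow, hvz.pow_apply]⟩

lemma exists_monoidHom_of_forall_exists_smul {v : V} (hv : v ≠ 0)
    (h : ∀ g, ∃ z : ℂ, ρ g v = z • v) : ∃ β : G →* ℂˣ, ∀ g, ρ g v = (β g : ℂ) • v := by
  choose z hz using h
  have hinj := smul_left_injective ℂ hv
  let β : G →* ℂ :=
    { toFun := z
      map_one' := hinj <| by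
        simp only [← hz, map_one, Module.End.one_apply, one_smul]
      map_mul' := fun g h ↦ hinj <| by
        change z (g * h) • v = (z g * z h) • v
        rw [← hz, _root_.map_mul, Module.End.mul_apply, hz h, map_smul, hz g, smul_smul, mul_comm] }
  exact ⟨β.toHomUnits, hz⟩

end ScaledVectors

section StabilizerEigenvectors

variable {K : Type} [Field K] {n j : ℕ} {ρ : Representation ℂ (GL (Fin n) K) V}

lemma exists_occurs_twistRep_of_scaled [Finite K] {f : Fin j → Fin n} {i : Fin n}
    (hi : i ∉ Set.range f) {v : V} (hv : v ≠ 0)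
    (hfix : ∀ g ∈ transvectionSubgroup K (Set.range f), ρ g v = v)
    (hscale : ∀ d, ∃ z : ℂ, ρ (dilation i d) v = z • v) :
    ∃ α : Kˣ →* ℂˣ, Occurs (twistRep α ρ) (permRep n j) := by
  obtain ⟨β, hβ⟩ := exists_monoidHom_of_forall_exists_smul (ρ := ρ.comp (dilation i)) hv hscale
  refine ⟨β⁻¹, occurs_permRep_of_fixed (basisColumns K f) hv fun g hg ↦ ?_⟩
  obtain ⟨s, hs, d, rfl⟩ := exists_eq_mul_dilation hi (mem_basisStabilizer_range.2 hg)
  have hdet : detHom n (s * dilation i d) = d := by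
    change GeneralLinearGroup.det (s * dilation i d) = d
    rw [_root_.map_mul, det_eq_one_of_mem_transvectionSubgroup hs, one_mul, det_dilation]
  have hd : ρ (dilation i d) v = (β d : ℂ) • v := hβ d
  rw [twistRep_apply, hdet, _root_.map_mul, Module.End.mul_apply, hd, map_smul, hfix s hs,
    smul_smul, MonoidHom.inv_apply, Units.inv_mul, one_smul]

lemma apply_glTransvection_eq_self_of_scaled {ι : Type*} [Fintype ι] [DecidableEq ι]
    {ρ : Representation ℂ (GL ι K) V} {v : V} (hv : v ≠ 0) {i l m : ι} (him : i ≠ m) (hml : m ≠ l)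
    (hil : i ≠ l) {c : K} (hscale_im : ∃ z : ℂ, ρ (glTransvection him 1) v = z • v)
    (hscale_ml : ∃ z : ℂ, ρ (glTransvection hml c) v = z • v)
    (hscale_il : ∃ z : ℂ, ρ (glTransvection hil c) v = z • v) :
    ρ (glTransvection hil c) v = v := by
  obtain ⟨x, hx⟩ := hscale_im
  obtain ⟨y, hy⟩ := hscale_ml
  obtain ⟨z, hz⟩ := hscale_il
  have hcomm := congrArg (fun g ↦ ρ g v) (glTransvection_mul_glTransvection him hml hil 1 c)
  simp only [one_mul, _root_.map_mul, Module.End.mul_apply, hx, hy, hz, map_smul, smul_smul]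
    at hcomm
  have hxyz : y * x = x * (y * z) := smul_left_injective ℂ hv hcomm
  have hxy : x * y ≠ 0 := by
    refine mul_ne_zero ?_ ?_ <;> rintro rfl
    · exact hv ((map_eq_zero_iff _ (ρ.apply_bijective _).injective).1 (hx.trans (zero_smul ℂ v)))
    · exact hv ((map_eq_zero_iff _ (ρ.apply_bijective _).injective).1 (hy.trans (zero_smul ℂ v)))
  have hz₁ : z = 1 := mul_left_cancel₀ hxy (by linear_combination -hxyz)
  rw [hz, hz₁, one_smul]

lemma Hsub_eq_basisStabilizer (hj : j ≤ n) :
    (Hsub n j : Subgroup (GL (Fin n) K)) = basisStabilizer K (Set.range (Fin.castLE hj)) := by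
  ext g
  refine ⟨fun hg ↦ ?_, fun hg x hx ↦ mulVec_eq_self_of_mem_basisStabilizer hg fun i hi ↦ hx i ?_⟩
  · rintro _ ⟨i, rfl⟩
    refine hg _ fun l hl ↦ Pi.single_eq_of_ne (fun h ↦ ?_) _
    rw [h, Fin.val_castLE] at hl
    omega
  · by_contra! hij
    exact hi ⟨⟨i, hij⟩, rfl⟩

lemma exists_occurs_twistRep_of_hasEigenVec [Finite K] (hj : j + 3 ≤ n)
    (h : HasEigenVec ρ (Hsub n j)) : ∃ α : Kˣ →* ℂˣ, Occurs (twistRep α ρ) (permRep n j) := by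
  obtain ⟨c, v, hv, hc⟩ := h
  have hjn : j ≤ n := by omega
  have hscale (g) (hg : g ∈ basisStabilizer K (Set.range (Fin.castLE hjn))) :
      ∃ z : ℂ, ρ g v = z • v :=
    ⟨_, hc ⟨g, (Hsub_eq_basisStabilizer hjn).ge hg⟩⟩
  have hscale_tv {i l : Fin n} (hil : i ≠ l) (hl : l ∉ Set.range (Fin.castLE hjn)) (x : K) :
      ∃ z : ℂ, ρ (glTransvection hil x) v = z • v :=
    hscale _ (transvectionSubgroup_le_basisStabilizer _
      (glTransvection_mem_transvectionSubgroup hil hl x))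
  have hnotMem (i : Fin n) (hi : j ≤ i) : i ∉ Set.range (Fin.castLE hjn) := by
    rintro ⟨l, rfl⟩
    exact absurd l.2 (not_lt.2 hi)
  have hfix : transvectionSubgroup K (Set.range (Fin.castLE hjn)) ≤
      pointwiseFixer ρ (Submodule.span ℂ {v}) := by
    refine transvectionSubgroup_le_iff.2 fun i l hil x hl w hw ↦ ?_
    obtain ⟨m, hm, hmi, hml⟩ : ∃ m : Fin n, j ≤ m ∧ m ≠ i ∧ m ≠ l := by
      by_contra! hall
      have h₀ := hall ⟨j, by omega⟩ le_rfl
      have h₁ := hall ⟨j + 1, by omega⟩ (by simp)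
      have h₂ := hall ⟨j + 2, by omega⟩ (by simp)
      grind
    have hilv : ρ (glTransvection hil x) v = v :=
      apply_glTransvection_eq_self_of_scaled hv hmi.symm hml hil
        (hscale_tv _ (hnotMem m hm) 1) (hscale_tv _ hl x) (hscale_tv _ hl x)
    obtain ⟨z, rfl⟩ := Submodule.mem_span_singleton.1 hw
    rw [map_smul, hilv]
  have hi := hnotMem ⟨j, by omega⟩ le_rfl
  exact exists_occurs_twistRep_of_scaled hi hv
    (fun g hg ↦ hfix hg v (Submodule.mem_span_singleton_self v))
    fun d ↦ hscale _ (dilation_mem_basisStabilizer hi d)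

lemma hasEigenVec_of_occurs_twistRep [Finite K] (hρ : IsIrred ρ) (hj : j ≤ n) {α : Kˣ →* ℂˣ}
    (h : Occurs (twistRep α ρ) (permRep n j)) : HasEigenVec ρ (Hsub n j) := by
  obtain ⟨S, v, hv, hfix⟩ := exists_fixed_of_occurs_permRep (hρ.twistRep α) h
  obtain ⟨g, Q, hgS⟩ := exists_mul_eq_basisColumns_mul S (Fin.castLE_injective hj)
  let c : GL (Fin n) K →* ℂ := (Units.coeHom ℂ).comp (α⁻¹.comp (detHom n))
  refine ⟨c.comp (Hsub n j).subtype, ρ g v,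
    (map_ne_zero_iff _ (ρ.apply_bijective g).injective).2 hv, fun ⟨u, hu⟩ ↦ ?_⟩
  have huS : u.1 * (g.1 * S) = g.1 * S := by
    rw [hgS, ← Matrix.mul_assoc,
      mem_basisStabilizer_range.1 ((Hsub_eq_basisStabilizer hj).le hu)]
  have hconj : (g⁻¹ * u * g).1 * S = S := by
    rw [Units.val_mul, Units.val_mul, Matrix.mul_assoc, Matrix.mul_assoc, huS, ← Matrix.mul_assoc,
      Units.inv_mul, Matrix.one_mul]
  have hdet : detHom n (g⁻¹ * u * g) = detHom n u := by
    rw [_root_.map_mul, _root_.map_mul, map_inv, mul_right_comm, inv_mul_cancel, one_mul]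
  have hv' := congrArg (ρ g) (hfix _ hconj)
  rw [twistRep_apply, hdet, map_smul, ← Module.End.mul_apply, ← _root_.map_mul, mul_assoc g⁻¹,
    mul_inv_cancel_left, _root_.map_mul, Module.End.mul_apply] at hv'
  change ρ u (ρ g v) = (((α (detHom n u))⁻¹ : ℂˣ) : ℂ) • ρ g v
  rw [← hv', smul_smul, Units.inv_mul, one_smul, hv']

end StabilizerEigenvectors

section SmallURank

variable {n a b c k j : ℕ} {χ₀ : AddChar F ℂ} {ρ : Representation ℂ (GL (Fin n) F) V}

/-- The embedding of `Fin (k + k)` onto the first `k` and the last `k` indices. -/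
def outerIndex (hk : k ≤ n) : Fin (k + k) → Fin n :=
  Fin.append (Fin.castLE hk) (Fin.natAdd_castLEEmb hk)

lemma notMem_range_outerIndex {hk : k ≤ n} {i : Fin n} (hki : k ≤ i) (hik : i < n - k) :
    i ∉ Set.range (outerIndex hk) := by
  rintro ⟨l, rfl⟩
  induction l using Fin.addCases with
  | left l =>
    rw [outerIndex, Fin.append_left, Fin.val_castLE] at hki
    omega
  | right l =>
    rw [outerIndex, Fin.append_right, Fin.natAdd_castLEEmb_apply_val] at hik
    omega

lemma map_mem_charEigenspace_of_mem_basisStabilizer (hkc : k + c = n) (hk : k ≤ c) (hkn : k ≤ n)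
    {g : GL (Fin n) F} (hg : g ∈ basisStabilizer F (Set.range (outerIndex hkn))) {v : V}
    (hv : v ∈ charEigenspace χ₀ ρ hkc.le (lastCols F hk)) :
    ρ g v ∈ charEigenspace χ₀ ρ hkc.le (lastCols F hk) := by
  refine map_mem_charEigenspace_lastCols hkc hk hkn
    (mem_basisStabilizer_range.1 fun i hi ↦ hg i ?_)
    (mem_basisStabilizer_range.1 fun i hi ↦ hg i ?_) hv
  · obtain ⟨l, rfl⟩ := hi
    exact ⟨Fin.castAdd k l, Fin.append_left _ _ l⟩
  · obtain ⟨l, rfl⟩ := hi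
    exact ⟨Fin.natAdd k l, Fin.append_right _ _ l⟩

lemma transvectionSubgroup_le_pointwiseFixer (hχ₀ : χ₀ ≠ 1) (hab : a + b = n) (hkc : k + c = n)
    (hka : k < a) (hkb : k < b) (hk : k ≤ c) (hkn : k ≤ n)
    (hrank : ∀ T, CharAppears χ₀ ρ hab.le T → T.rank ≤ k) :
    transvectionSubgroup F (Set.range (outerIndex hkn)) ≤
      pointwiseFixer ρ (charEigenspace χ₀ ρ hkc.le (lastCols F hk)) := by
  have ha : a ≤ n := by omega
  have hb : b ≤ n := by omega
  let i₀ : Fin a := ⟨k, hka⟩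
  let r₀ : Fin b := ⟨0, by omega⟩
  refine transvectionSubgroup_le_of_normalized
    (fun g hg u hu ↦ mul_mul_inv_mem_pointwiseFixer (fun v hv ↦ ?_) hu)
    (castLE_ne_natAdd_castLEEmb ha hb hab.le i₀ r₀)
    (notMem_range_outerIndex ?_ ?_) (notMem_range_outerIndex ?_ ?_) fun x v hv ↦ ?_
  · exact map_mem_charEigenspace_of_mem_basisStabilizer hkc hk hkn (inv_mem hg) hv
  · exact le_rfl
  · simp only [Fin.val_castLE, i₀]
    omega
  · simp only [Fin.natAdd_castLEEmb_apply_val, r₀]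
    omega
  · simp only [Fin.natAdd_castLEEmb_apply_val, r₀]
    omega
  · exact apply_glTransvection_of_mem_charEigenspace hχ₀ hka.le hkb.le (by omega) ha hb hrank hv i₀
      (Nat.sub_pos_of_lt hkb) x

lemma exists_occurs_twistRep_permRep_add [FiniteDimensional ℂ V] (hχ₀ : χ₀ ≠ 1)
    (hrk : HasURank χ₀ ρ k) (hk : 4 * k < n) :
    ∃ α : Fˣ →* ℂˣ, Occurs (twistRep α ρ) (permRep n (k + k)) := by
  obtain ⟨⟨T, hT, hTk⟩, hrank⟩ := hrk
  have hab : n / 2 + (n - n / 2) = n := by omega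
  have hkc : k + (n - k) = n := by omega
  have hkn : k ≤ n := by omega
  have hknk : k ≤ n - k := by omega
  let U := charEigenspace χ₀ ρ hkc.le (lastCols F hknk)
  have hi : (⟨k, by omega⟩ : Fin n) ∉ Set.range (outerIndex hkn) :=
    notMem_range_outerIndex le_rfl (by simp only; omega)
  have hU : U ≠ ⊥ := (Submodule.ne_bot_iff U).2 <| exists_mem_of_charAppears <|
    charAppears_lastCols hχ₀ hab hkc (by omega) (by omega) hknk hTk hT
  have hfix : transvectionSubgroup F (Set.range (outerIndex hkn)) ≤ pointwiseFixer ρ U := by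
    obtain rfl | hn : n = 1 ∨ 1 < n := by omega
    · exact transvectionSubgroup_le_iff.2 fun i l hil ↦ absurd (Subsingleton.elim i l) hil
    · exact transvectionSubgroup_le_pointwiseFixer hχ₀ hab hkc (by omega) (by omega) hknk hkn hrank
  obtain ⟨v, hvU, hv, hscale⟩ := exists_mem_forall_exists_smul
    (ρ := ρ.comp (dilation ⟨k, by omega⟩)) hU fun d v hv ↦
      map_mem_charEigenspace_of_mem_basisStabilizer hkc hknk hkn
        (dilation_mem_basisStabilizer hi d) hv
  exact exists_occurs_twistRep_of_scaled hi hv (fun g hg ↦ hfix hg v hvU) hscale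

lemma HasURank.twistRep (hrk : HasURank χ₀ ρ k) (α : Fˣ →* ℂˣ) :
    HasURank χ₀ (twistRep α ρ) k := by
  simpa only [HasURank, HasRankAB, charAppears_twistRep_iff] using hrk

lemma HasURank.le_of_occurs_permRep (hrk : HasURank χ₀ ρ k) (hχ₀ : χ₀ ≠ 1) (hρ : IsIrred ρ)
    (hocc : Occurs ρ (permRep n j)) : k ≤ j := by
  obtain ⟨⟨T, hT, rfl⟩, -⟩ := hrk
  obtain ⟨v, hvT, hv⟩ := exists_mem_of_charAppears hT
  obtain ⟨φ, hφ⟩ := occurs_iff_exists_intertwiningMap.1 hocc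
  have hφv : φ v ≠ 0 := fun h ↦ hv (hρ.injective hφ (h.trans (map_zero φ).symm))
  exact rank_le_of_charAppears_permRep hχ₀
    (charAppears_of_mem hφv (intertwiningMap_mem_charEigenspace φ hvT))

lemma exists_occurs_twistRep_permRep [FiniteDimensional ℂ V] (hχ₀ : χ₀ ≠ 1) (hρ : IsIrred ρ)
    (hrk : HasURank χ₀ ρ k) (hk : 4 * k < n) :
    ∃ α : Fˣ →* ℂˣ, Occurs (twistRep α ρ) (permRep n k) := by
  obtain ⟨α, hα⟩ := exists_occurs_twistRep_permRep_add hχ₀ hrk hk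
  exact ⟨α, occurs_permRep_of_le hχ₀ (hρ.twistRep α) _ (hrk.twistRep α).2 (by omega) (by omega)
    (by omega) hα⟩

end SmallURank

/-- Proposition 11.2.  Here `k < n/4` is expressed as
`4 * k < n`. -/
theorem tensorRank_eq_uRank_of_small
    (χ₀ : AddChar F ℂ) (hχ₀ : χ₀ ≠ 1)
    {n : ℕ} {V : Type} [AddCommGroup V] [Module ℂ V] [FiniteDimensional ℂ V]
    (ρ : Representation ℂ (GL (Fin n) F) V) (hρ : IsIrred ρ)
    {k : ℕ} (hrk : HasURank χ₀ ρ k) (hk : 4 * k < n) :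
    sInf {j : ℕ | ∃ α : Fˣ →* ℂˣ, Occurs (twistRep α ρ) (permRep n j)} = k ∧
      -- equivalently: the least `j` for which `ρ` has a nonzero
      -- `H_j`-eigenvector is `j = k`
      sInf {j : ℕ | HasEigenVec ρ (Hsub n j)} = k := by
  obtain ⟨α, hα⟩ := exists_occurs_twistRep_permRep hχ₀ hρ hrk hk
  have hlower {j : ℕ} (h : ∃ β : Fˣ →* ℂˣ, Occurs (twistRep β ρ) (permRep n j)) : k ≤ j :=
    let ⟨β, hβ⟩ := h
    (hrk.twistRep β).le_of_occurs_permRep hχ₀ (hρ.twistRep β) hβ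
  refine ⟨IsLeast.csInf_eq ⟨⟨α, hα⟩, fun j hj ↦ hlower hj⟩, IsLeast.csInf_eq
    ⟨hasEigenVec_of_occurs_twistRep hρ (by omega) hα, fun j hj ↦ ?_⟩⟩
  by_contra! hjk
  exact hjk.not_ge (hlower (exists_occurs_twistRep_of_hasEigenVec (by omega) hj))

end Stmt18
end
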